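/- arXiv:1202.0015 — 4 statements merged into one kernel-verified Lean document; each statement's English description precedes it below -/
import Mathlib

section
/- (De Bruijn's identity) For every a > 0, the differential entropy h(a) = −∫ f_Y(y;a) log f_Y(y;a) dy is differentiable in a and its derivative equals one half of the Fisher information: d/da h(a) = (1/2) · ∫ f_Y(y;a) (∂/∂y log f_Y(y;a))² dy. -/
open MeasureTheory Filter

namespace DeBruijn

/-- Gaussian kernel. -/
noncomputable def E (a u : ℝ) : ℝ := (Real.sqrt (2 * Real.pi * a))⁻¹ * Real.exp (-u ^ 2 / (2 * a))

lemma E_cont (a : ℝ) : Continuous (E a) := by unfold E; fun_prop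

lemma E_pos {a : ℝ} (ha : 0 < a) (u : ℝ) : 0 < E a u := by
  have := Real.pi_pos
  unfold E; positivity

lemma E_deriv {a : ℝ} (ha : 0 < a) (u : ℝ) : HasDerivAt (E a) (-(u / a) * E a u) u := by
  have h1 : HasDerivAt (fun u : ℝ => -u ^ 2 / (2 * a)) (-(u / a)) u := by
    have := ((hasDerivAt_pow 2 u).neg).div_const (2 * a)
    refine HasDerivAt.congr_deriv this ?_
    field_simp
    norm_num
  have := (h1.exp).const_mul (Real.sqrt (2 * Real.pi * a))⁻¹
  refine HasDerivAt.congr_deriv this ?_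
  unfold E; ring

lemma E_deriv2 {a : ℝ} (ha : 0 < a) (u : ℝ) :
    HasDerivAt (fun u => -(u / a) * E a u) ((u ^ 2 / a ^ 2 - 1 / a) * E a u) u := by
  have h1 : HasDerivAt (fun u : ℝ => -(u / a)) (-(1 / a)) u := ((hasDerivAt_id u).div_const a).neg
  have := h1.mul (E_deriv ha u)
  refine HasDerivAt.congr_deriv this ?_
  field_simp
  ring

lemma E_deriv_a {a : ℝ} (ha : 0 < a) (u : ℝ) :
    HasDerivAt (fun a => E a u) (1 / 2 * ((u ^ 2 / a ^ 2 - 1 / a) * E a u)) a := by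
  have hpi := Real.pi_pos
  have hp : 0 < 2 * Real.pi * a := by positivity
  have h1 : HasDerivAt (fun a : ℝ => 2 * Real.pi * a) (2 * Real.pi) a := by
    simpa using (hasDerivAt_id a).const_mul (2 * Real.pi)
  have h2 := (h1.sqrt hp.ne').fun_inv (Real.sqrt_pos.2 hp).ne'
  have h3 : HasDerivAt (fun a : ℝ => -u ^ 2 / (2 * a)) (u ^ 2 / (2 * a ^ 2)) a := by
    have h4 : HasDerivAt (fun a : ℝ => 2 * a) 2 a := by
      simpa using (hasDerivAt_id a).const_mul (2 : ℝ)
    have := (hasDerivAt_const a (-u ^ 2)).fun_div h4 (by positivity)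
    refine HasDerivAt.congr_deriv this ?_
    field_simp
    ring
  have := h2.mul h3.exp
  refine HasDerivAt.congr_deriv this ?_
  unfold E
  have hs : Real.sqrt (2 * Real.pi * a) ^ 2 = 2 * Real.pi * a := Real.sq_sqrt hp.le
  have hs0 : Real.sqrt (2 * Real.pi * a) ≠ 0 := (Real.sqrt_pos.2 hp).ne'
  rw [hs]
  field_simp
  ring

/-- dominating kernel -/
noncomputable def e (b u : ℝ) : ℝ := Real.exp (-u ^ 2 / (8 * b))

lemma e_cont (b : ℝ) : Continuous (e b) := by unfold e; fun_prop

lemma e_le {b : ℝ} (hb : 0 < b) (u : ℝ) : e b u ≤ 1 := by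
  unfold e
  rw [Real.exp_le_one_iff]
  apply div_nonpos_of_nonpos_of_nonneg <;> nlinarith [sq_nonneg u]

lemma e_pos (b u : ℝ) : 0 < e b u := Real.exp_pos _

lemma e_sq {b : ℝ} (hb : 0 < b) (u : ℝ) :
    u ^ 2 * Real.exp (-u ^ 2 / (4 * b)) ≤ 8 * b * e b u := by
  unfold e
  have h1 : Real.exp (-u ^ 2 / (4 * b)) = Real.exp (-u ^ 2 / (8 * b)) * Real.exp (-u ^ 2 / (8 * b)) := by
    rw [← Real.exp_add]; congr 1; field_simp; ring
  have h2 := Real.add_one_le_exp (u ^ 2 / (8 * b))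
  have h3 : Real.exp (u ^ 2 / (8 * b)) * Real.exp (-u ^ 2 / (8 * b)) = 1 := by
    rw [← Real.exp_add, neg_div]; simp
  have h4 := Real.exp_pos (-u ^ 2 / (8 * b))
  have h5 : u ^ 2 / (8 * b) * Real.exp (-u ^ 2 / (8 * b)) ≤ 1 := by nlinarith
  have h6 : u ^ 2 * Real.exp (-u ^ 2 / (8 * b)) ≤ 8 * b := by
    have : u ^ 2 * Real.exp (-u ^ 2 / (8 * b)) = 8 * b * (u ^ 2 / (8 * b) * Real.exp (-u ^ 2 / (8 * b))) := by
      field_simp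
    rw [this]; nlinarith
  rw [h1]; nlinarith

lemma bounds {b : ℝ} (hb : 0 < b) : ∃ C, 0 < C ∧ ∀ a ∈ Set.Ioo (b / 2) (2 * b), ∀ u,
    E a u ≤ C * e b u ∧ u ^ 2 / a ^ 2 * E a u ≤ C * e b u ∧ |-(u / a) * E a u| ≤ C * e b u ∧
    |(u ^ 2 / a ^ 2 - 1 / a) * E a u| ≤ C * e b u := by
  have hpi := Real.pi_pos
  set s := (Real.sqrt (Real.pi * b))⁻¹ with hs
  have hs0 : 0 < s := by positivity
  refine ⟨(1 + 32 / b + 2 / b) * s, by positivity, ?_⟩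
  intro a ha u
  have ha0 : 0 < a := by have := ha.1; linarith
  have hE0 := E_pos ha0 u
  have hE : E a u ≤ s * Real.exp (-u ^ 2 / (4 * b)) := by
    unfold E
    gcongr ?_ * Real.exp ?_
    · rw [hs]; gcongr ?_⁻¹
      apply Real.sqrt_le_sqrt
      nlinarith [ha.1]
    · rw [neg_div, neg_div, neg_le_neg_iff]
      apply div_le_div_of_nonneg_left (sq_nonneg u) (by positivity)
      linarith [ha.2]
  have he := e_pos b u
  have h1 : E a u ≤ s * e b u := by
    refine hE.trans ?_
    unfold e
    gcongr ?_ * Real.exp ?_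
    rw [neg_div, neg_div, neg_le_neg_iff]
    apply div_le_div_of_nonneg_left (sq_nonneg u) (by positivity)
    linarith
  have h2 : u ^ 2 / a ^ 2 * E a u ≤ 32 / b * s * e b u := by
    have h3 : u ^ 2 / a ^ 2 ≤ u ^ 2 / (b / 2) ^ 2 := by
      gcongr; exact ha.1.le
    calc u ^ 2 / a ^ 2 * E a u ≤ u ^ 2 / (b / 2) ^ 2 * (s * Real.exp (-u ^ 2 / (4 * b))) := by gcongr
      _ = 4 / b ^ 2 * s * (u ^ 2 * Real.exp (-u ^ 2 / (4 * b))) := by field_simp; ring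
      _ ≤ 4 / b ^ 2 * s * (8 * b * e b u) := mul_le_mul_of_nonneg_left (e_sq hb u) (by positivity)
      _ = _ := by field_simp; ring
  have h3 : 1 / a * E a u ≤ 2 / b * s * e b u := by
    calc 1 / a * E a u ≤ 1 / (b / 2) * (s * e b u) := by gcongr; exact ha.1.le
      _ = _ := by field_simp
  have p1 : 0 < s * e b u := by positivity
  have p2 : 0 < 32 / b * s * e b u := by positivity
  have p3 : 0 < 2 / b * s * e b u := by positivity
  have q2 : 0 ≤ u ^ 2 / a ^ 2 * E a u := by positivity
  have q3 : 0 ≤ 1 / a * E a u := by positivity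
  have hC : (1 + 32 / b + 2 / b) * s * e b u = s * e b u + 32 / b * s * e b u + 2 / b * s * e b u := by ring
  rw [hC]
  refine ⟨by linarith, by linarith, ?_, ?_⟩
  · have h4 : |-(u / a) * E a u| = |u / a| * E a u := by
      rw [abs_mul, abs_neg, abs_of_pos hE0]
    have h5 : |u / a| ≤ 1 + u ^ 2 / a ^ 2 := by
      rw [← div_pow, ← sq_abs (u / a)]
      nlinarith [sq_nonneg (|u / a| - 1), sq_nonneg (|u / a|)]
    rw [h4]
    nlinarith [mul_le_mul_of_nonneg_right h5 hE0.le]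
  · rw [abs_le]
    constructor <;> nlinarith

section conv
variable {fX : ℝ → ℝ} 

lemma int_conv (hi : Integrable fX) {g : ℝ → ℝ} (hg : Continuous g) {C : ℝ} (hC : ∀ u, |g u| ≤ C) (y : ℝ) :
    Integrable (fun x => fX x * g (y - x)) := by
  refine hi.mul_bdd (c := C) ?_ ?_
  · exact (hg.comp (by fun_prop)).aestronglyMeasurable
  · exact Eventually.of_forall fun x => hC _

lemma deriv_conv (hi : Integrable fX) {g g' : ℝ → ℝ} (hg : ∀ u, HasDerivAt g (g' u) u)
    (hg' : Continuous g') {C : ℝ} (hC : ∀ u, |g u| ≤ C) (hC' : ∀ u, |g' u| ≤ C) (y : ℝ) :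
    HasDerivAt (fun y => ∫ x, fX x * g (y - x)) (∫ x, fX x * g' (y - x)) y := by
  have hgc : Continuous g := continuous_iff_continuousAt.2 fun u => (hg u).continuousAt
  refine (hasDerivAt_integral_of_dominated_loc_of_deriv_le (F := fun y x => fX x * g (y - x))
    (F' := fun y x => fX x * g' (y - x)) (bound := fun x => |fX x| * C) (s := Set.univ) univ_mem
    (Eventually.of_forall fun y => (int_conv hi hgc hC y).aestronglyMeasurable)
    (int_conv hi hgc hC y) (int_conv hi hg' hC' y).aestronglyMeasurable ?_
    (hi.abs.mul_const C) ?_).2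
  · refine Eventually.of_forall fun x y _ => ?_
    rw [Real.norm_eq_abs, abs_mul]
    gcongr; exact hC' _
  · refine Eventually.of_forall fun x y _ => ?_
    have := (hg (y - x)).comp_sub_const y x
    exact this.const_mul _

lemma conv_le (hi : Integrable fX) (h0 : ∀ x, 0 ≤ fX x) {g k : ℝ → ℝ}
    (hk : Continuous k) {C D : ℝ} (hkD : ∀ u, |k u| ≤ D)
    (hC : ∀ u, |g u| ≤ C * k u) (y : ℝ) :
    |∫ x, fX x * g (y - x)| ≤ C * ∫ x, fX x * k (y - x) := by
  rw [← integral_const_mul, ← Real.norm_eq_abs]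
  refine norm_integral_le_of_norm_le ((int_conv hi hk hkD y).const_mul C) ?_
  refine Eventually.of_forall fun x => ?_
  rw [Real.norm_eq_abs, abs_mul, abs_of_nonneg (h0 x)]
  nlinarith [mul_le_mul_of_nonneg_left (hC (y - x)) (h0 x)]

lemma K_int {b : ℝ} (hb : 0 < b) (hi : Integrable fX) (h0 : ∀ x, 0 ≤ fX x)
    (hm : Integrable (fun x => x ^ 2 * fX x)) :
    Integrable (fun y => (1 + y ^ 2) * ∫ x, fX x * e b (y - x)) := by
  have he : Integrable (e b) := by
    have := integrable_exp_neg_mul_sq (b := 1 / (8 * b)) (by positivity)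
    convert this using 2 with u
    unfold e; congr 1; ring
  have he2 : Integrable (fun u => u ^ 2 * e b u) := by
    have := integrable_rpow_mul_exp_neg_mul_sq (b := 1 / (8 * b)) (by positivity) (s := 2) (by norm_num)
    convert this using 2 with u
    unfold e; 
    rw [Real.rpow_ofNat]
    congr 2; ring
  have hF : Integrable (fun x => (1 + 2 * x ^ 2) * fX x) := by
    have := hi.add (hm.const_mul 2)
    refine this.congr (Eventually.of_forall fun x => ?_)
    simp only [Pi.add_apply]; ring
  have c1 := (hF.convolution_integrand (ContinuousLinearMap.mul ℝ ℝ) he)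
  have c2 := (hi.convolution_integrand (ContinuousLinearMap.mul ℝ ℝ) (he2.const_mul 2))
  have c3 := c1.add c2
  have hmeas : AEStronglyMeasurable (fun p : ℝ × ℝ => (1 + p.1 ^ 2) * (fX p.2 * e b (p.1 - p.2)))
      (volume.prod volume) := by
    have := (hi.convolution_integrand (ContinuousLinearMap.mul ℝ ℝ) he).aestronglyMeasurable
    exact AEStronglyMeasurable.mul (by fun_prop) this
  have c4 : Integrable (fun p : ℝ × ℝ => (1 + p.1 ^ 2) * (fX p.2 * e b (p.1 - p.2)))
      (volume.prod volume) := by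
    refine c3.mono' hmeas (Eventually.of_forall fun p => ?_)
    have hp : 0 ≤ fX p.2 * e b (p.1 - p.2) := mul_nonneg (h0 _) (e_pos _ _).le
    rw [Real.norm_eq_abs, abs_of_nonneg (by positivity)]
    simp only [Pi.add_apply, ContinuousLinearMap.mul_apply']
    have : 1 + p.1 ^ 2 ≤ (1 + 2 * p.2 ^ 2) + 2 * (p.1 - p.2) ^ 2 := by
      nlinarith [sq_nonneg (p.1 - 2 * p.2)]
    nlinarith [mul_le_mul_of_nonneg_right this hp]
  have := c4.integral_prod_left
  simpa only [integral_const_mul] using this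

lemma lower (hi : Integrable fX) (h0 : ∀ x, 0 ≤ fX x) (h1 : ∫ x, fX x = 1)
    (hm : Integrable (fun x => x ^ 2 * fX x)) {a : ℝ} (ha : 0 < a)
    (hint : ∀ y, Integrable (fun x => fX x * E a (y - x))) (y : ℝ) :
    (Real.sqrt (2 * Real.pi * a))⁻¹ * Real.exp (-((y ^ 2 + ∫ x, x ^ 2 * fX x) / a)) ≤
      ∫ x, fX x * E a (y - x) := by
  set m := ∫ x, x ^ 2 * fX x with hmdef
  set s := (y ^ 2 + m) / a with hs
  set c := (Real.sqrt (2 * Real.pi * a))⁻¹ with hc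
  have hc0 : 0 ≤ c := by positivity
  have key : ∫ x, c * Real.exp (-s) * ((1 + s - y ^ 2 / a) * fX x - 1 / a * (x ^ 2 * fX x)) =
      c * Real.exp (-s) := by
    rw [integral_const_mul, integral_sub (hi.const_mul _) (hm.const_mul _), integral_const_mul,
      integral_const_mul, h1, ← hmdef, hs]
    field_simp
    ring
  rw [← key]
  refine integral_mono (((hi.const_mul _).sub (hm.const_mul _)).const_mul _) (hint y) fun x => ?_
  have hexp : Real.exp (-s) * (1 + s - (y ^ 2 + x ^ 2) / a) ≤ Real.exp (-(y - x) ^ 2 / (2 * a)) := by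
    have e1 : Real.exp (-(y - x) ^ 2 / (2 * a)) = Real.exp (-s) * Real.exp (s - (y - x) ^ 2 / (2 * a)) := by
      rw [← Real.exp_add]; congr 1; ring
    rw [e1]
    gcongr
    have := Real.add_one_le_exp (s - (y - x) ^ 2 / (2 * a))
    have e2 : (y - x) ^ 2 / (2 * a) ≤ (y ^ 2 + x ^ 2) / a := by
      rw [div_le_div_iff₀ (by positivity) ha]
      nlinarith [mul_nonneg ha.le (sq_nonneg (y + x))]
    linarith
  have := mul_le_mul_of_nonneg_left hexp (mul_nonneg hc0 (h0 x))
  simp only [E]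
  calc _ = c * fX x * (Real.exp (-s) * (1 + s - (y ^ 2 + x ^ 2) / a)) := by ring
    _ ≤ _ := this
    _ = _ := by ring

end conv

lemma main
    (fX : ℝ → ℝ) (h0 : ∀ x, 0 ≤ fX x) (h1 : (∫ x, fX x) = 1)
    (hm : Integrable (fun x => x ^ 2 * fX x)) (b : ℝ) (hb : 0 < b) :
    HasDerivAt (fun a => ∫ y, (∫ x, fX x * E a (y - x)) * Real.log (∫ x, fX x * E a (y - x)))
      (-((1 / 2) * ∫ y, (∫ x, fX x * E b (y - x)) *
        (deriv (fun y' => Real.log (∫ x, fX x * E b (y' - x))) y) ^ 2)) b := by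
  have hi : Integrable fX := by
    by_contra hn
    rw [integral_undef hn] at h1
    exact zero_ne_one h1
  obtain ⟨C, hC, hB⟩ := bounds hb
  have hpi := Real.pi_pos
  have hbI : b ∈ Set.Ioo (b / 2) (2 * b) := ⟨by linarith, by linarith⟩
  have pos : ∀ {a}, a ∈ Set.Ioo (b / 2) (2 * b) → 0 < a := fun {a} ha => by
    have := ha.1; linarith
  have bd : ∀ {t u : ℝ}, t ≤ C * e b u → t ≤ C := fun {t u} ht =>
    ht.trans (by nlinarith [e_le hb u])
  have eabs : ∀ u, |e b u| ≤ 1 := fun u => by rw [abs_of_pos (e_pos b u)]; exact e_le hb u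
  -- names
  set f : ℝ → ℝ → ℝ := fun a y => ∫ x, fX x * E a (y - x) with hf
  set f1 : ℝ → ℝ → ℝ := fun a y => ∫ x, fX x * (-((y - x) / a) * E a (y - x)) with hf1
  set f2 : ℝ → ℝ → ℝ := fun a y => ∫ x, fX x * (((y - x) ^ 2 / a ^ 2 - 1 / a) * E a (y - x)) with hf2
  set K : ℝ → ℝ := fun y => ∫ x, fX x * e b (y - x) with hK
  have KI : Integrable (fun y => (1 + y ^ 2) * K y) := K_int hb hi h0 hm
  have K0 : ∀ y, 0 ≤ K y := fun y => integral_nonneg fun x => mul_nonneg (h0 x) (e_pos _ _).le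
  have Eabs : ∀ a ∈ Set.Ioo (b / 2) (2 * b), ∀ u, |E a u| ≤ C * e b u := fun a ha u => by
    rw [abs_of_pos (E_pos (pos ha) u)]; exact (hB a ha u).1
  have c1 : ∀ a, Continuous (fun u => -(u / a) * E a u) := fun a => by
    have := E_cont a; fun_prop
  have c2 : ∀ a, Continuous (fun u => (u ^ 2 / a ^ 2 - 1 / a) * E a u) := fun a => by
    have := E_cont a; fun_prop
  have c3 : ∀ a, Continuous (fun u => u ^ 2 / a ^ 2 * E a u) := fun a => by
    have := E_cont a; fun_prop
  have fint : ∀ a ∈ Set.Ioo (b / 2) (2 * b), ∀ y, Integrable (fun x => fX x * E a (y - x)) :=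
    fun a ha y => int_conv hi (E_cont a) (fun u => bd (Eabs a ha u)) y
  have f1int : ∀ a ∈ Set.Ioo (b / 2) (2 * b), ∀ y,
      Integrable (fun x => fX x * (-((y - x) / a) * E a (y - x))) :=
    fun a ha y => int_conv hi (c1 a) (fun u => bd (hB a ha u).2.2.1) y
  have f2int : ∀ a ∈ Set.Ioo (b / 2) (2 * b), ∀ y,
      Integrable (fun x => fX x * (((y - x) ^ 2 / a ^ 2 - 1 / a) * E a (y - x))) :=
    fun a ha y => int_conv hi (c2 a) (fun u => bd (hB a ha u).2.2.2) y
  have g3abs : ∀ u, |u ^ 2 / b ^ 2 * E b u| ≤ C * e b u := fun u => by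
    have := (E_pos hb u)
    rw [abs_of_nonneg (by positivity)]; exact (hB b hbI u).2.1
  have f3int : ∀ y, Integrable (fun x => fX x * ((y - x) ^ 2 / b ^ 2 * E b (y - x))) :=
    fun y => int_conv hi (c3 b) (fun u => bd (g3abs u)) y
  -- derivatives
  have D1 : ∀ a ∈ Set.Ioo (b / 2) (2 * b), ∀ y, HasDerivAt (f a) (f1 a y) y := fun a ha y =>
    deriv_conv hi (E_deriv (pos ha)) (c1 a) (fun u => bd (Eabs a ha u))
      (fun u => bd (hB a ha u).2.2.1) y
  have D2 : ∀ a ∈ Set.Ioo (b / 2) (2 * b), ∀ y, HasDerivAt (f1 a) (f2 a y) y := fun a ha y =>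
    deriv_conv hi (g := fun u => -(u / a) * E a u)
      (g' := fun u => (u ^ 2 / a ^ 2 - 1 / a) * E a u) (E_deriv2 (pos ha)) (c2 a)
      (fun u => bd (hB a ha u).2.2.1) (fun u => bd (hB a ha u).2.2.2) y
  have Da : ∀ a ∈ Set.Ioo (b / 2) (2 * b), ∀ y, HasDerivAt (fun a => f a y) (1 / 2 * f2 a y) a := by
    intro a ha y
    have := (hasDerivAt_integral_of_dominated_loc_of_deriv_le (μ := volume) (x₀ := a)
      (F := fun a x => fX x * E a (y - x))
      (F' := fun a x => fX x * (1 / 2 * (((y - x) ^ 2 / a ^ 2 - 1 / a) * E a (y - x))))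
      (bound := fun x => |fX x| * (1 / 2 * C)) (s := Set.Ioo (b / 2) (2 * b))
      (isOpen_Ioo.mem_nhds ha) ?_ (fint a ha y) ?_ ?_ (hi.abs.mul_const _) ?_).2
    · refine HasDerivAt.congr_deriv this ?_
      rw [hf2]
      simp only
      rw [← integral_const_mul]
      congr 1; ext x; ring
    · filter_upwards [isOpen_Ioo.mem_nhds ha] with a' ha'
      exact (fint a' ha' y).aestronglyMeasurable
    · refine ((f2int a ha y).const_mul (1 / 2)).aestronglyMeasurable.congr
        (Eventually.of_forall fun x => ?_)
      simp only; ring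
    · refine Eventually.of_forall fun x a' ha' => ?_
      have := bd (hB a' ha' (y - x)).2.2.2
      rw [Real.norm_eq_abs, abs_mul, abs_mul (1 / 2), abs_of_pos (show (0:ℝ) < 1 / 2 by norm_num)]
      gcongr
    · refine Eventually.of_forall fun x a' ha' => ?_
      exact (E_deriv_a (pos ha') (y - x)).const_mul _
  -- bounds
  have f1le : ∀ a ∈ Set.Ioo (b / 2) (2 * b), ∀ y, |f1 a y| ≤ C * K y := fun a ha y =>
    conv_le hi h0 (g := fun u => -(u / a) * E a u) (e_cont b) eabs
      (fun u => (hB a ha u).2.2.1) y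
  have f2le : ∀ a ∈ Set.Ioo (b / 2) (2 * b), ∀ y, |f2 a y| ≤ C * K y := fun a ha y =>
    conv_le hi h0 (g := fun u => (u ^ 2 / a ^ 2 - 1 / a) * E a u) (e_cont b) eabs
      (fun u => (hB a ha u).2.2.2) y
  have fle : ∀ a ∈ Set.Ioo (b / 2) (2 * b), ∀ y, |f a y| ≤ C * K y := fun a ha y =>
    conv_le hi h0 (g := fun u => E a u) (e_cont b) eabs (fun u => Eabs a ha u) y
  have flow : ∀ a ∈ Set.Ioo (b / 2) (2 * b), ∀ y,
      (Real.sqrt (2 * Real.pi * a))⁻¹ * Real.exp (-((y ^ 2 + ∫ x, x ^ 2 * fX x) / a)) ≤ f a y :=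
    fun a ha y => lower hi h0 h1 hm (pos ha) (fint a ha) y
  have fpos : ∀ a ∈ Set.Ioo (b / 2) (2 * b), ∀ y, 0 < f a y := fun a ha y => by
    have := pos ha
    exact lt_of_lt_of_le (by positivity) (flow a ha y)
  have fup : ∀ a ∈ Set.Ioo (b / 2) (2 * b), ∀ y, f a y ≤ (Real.sqrt (2 * Real.pi * a))⁻¹ := by
    intro a ha y
    have hap := pos ha
    have : ∫ x, fX x * (Real.sqrt (2 * Real.pi * a))⁻¹ = (Real.sqrt (2 * Real.pi * a))⁻¹ := by
      rw [integral_mul_const, h1, one_mul]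
    rw [← this]
    refine integral_mono (fint a ha y) (hi.mul_const _) fun x => ?_
    refine mul_le_mul_of_nonneg_left ?_ (h0 x)
    unfold E
    refine mul_le_of_le_one_right (by positivity) ?_
    rw [Real.exp_le_one_iff]
    apply div_nonpos_of_nonpos_of_nonneg <;> nlinarith [sq_nonneg (y - x)]
  have m0 : 0 ≤ ∫ x, x ^ 2 * fX x := integral_nonneg fun x => mul_nonneg (sq_nonneg x) (h0 x)
  set m := ∫ x, x ^ 2 * fX x with hmdef
  obtain ⟨L, hL0, hL⟩ : ∃ L, 0 ≤ L ∧ ∀ a ∈ Set.Ioo (b / 2) (2 * b), ∀ y,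
      |Real.log (f a y)| ≤ L * (1 + y ^ 2) := by
    set l1 := Real.log (Real.sqrt (2 * Real.pi * (b / 2)))
    set l2 := Real.log (Real.sqrt (2 * Real.pi * (2 * b)))
    refine ⟨|l1| + |l2| + 2 * m / b + 2 / b, by positivity, fun a ha y => ?_⟩
    have hap := pos ha
    have i1 : l1 ≤ Real.log (Real.sqrt (2 * Real.pi * a)) := by
      apply Real.log_le_log (by positivity)
      gcongr; exact ha.1.le
    have i2 : Real.log (Real.sqrt (2 * Real.pi * a)) ≤ l2 := by
      apply Real.log_le_log (by positivity)
      gcongr; exact ha.2.le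
    have u1 := Real.log_le_log (fpos a ha y) (fup a ha y)
    have u2 := Real.log_le_log (by positivity) (flow a ha y)
    rw [Real.log_inv] at u1
    rw [Real.log_mul (by positivity) (by positivity), Real.log_inv, Real.log_exp] at u2
    have u3 : (y ^ 2 + m) / a ≤ (y ^ 2 + m) / (b / 2) := by
      gcongr; exact ha.1.le
    have u4 : (y ^ 2 + m) / (b / 2) = 2 / b * y ^ 2 + 2 * m / b := by field_simp
    have v1 := neg_abs_le l1
    have v2 := le_abs_self l2
    have v3 := abs_nonneg l1
    have v4 := abs_nonneg l2
    have w1 : 0 ≤ (|l1| + |l2| + 2 * m / b) * y ^ 2 := by positivity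
    have w2 : 0 ≤ 2 / b := by positivity
    have w3 : 0 ≤ 2 / b * y ^ 2 := by positivity
    have w4 : 0 ≤ 2 * m / b := by positivity
    rw [abs_le]
    constructor <;> nlinarith
  have fc : ∀ a ∈ Set.Ioo (b / 2) (2 * b), Continuous (f a) := fun a ha =>
    continuous_iff_continuousAt.2 fun y => (D1 a ha y).continuousAt
  have f1c : Continuous (f1 b) := continuous_iff_continuousAt.2 fun y => (D2 b hbI y).continuousAt
  have f2c : AEStronglyMeasurable (f2 b) := by
    have : f2 b = deriv (f1 b) := by ext y; exact (D2 b hbI y).deriv.symm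
    rw [this]
    exact (measurable_deriv _).aestronglyMeasurable
  have logc : ∀ a ∈ Set.Ioo (b / 2) (2 * b), Continuous (fun y => Real.log (f a y)) := fun a ha =>
    (fc a ha).log fun y => (fpos a ha y).ne'
  have big : ∀ {s t y : ℝ}, |s| ≤ C * K y → |t| ≤ L * (1 + y ^ 2) + 1 →
      |s * t| ≤ C * (L + 1) * ((1 + y ^ 2) * K y) := by
    intro s t y hs ht
    have hk := mul_nonneg hC.le (K0 y)
    rw [abs_mul]
    calc |s| * |t| ≤ (C * K y) * (L * (1 + y ^ 2) + 1) := by gcongr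
      _ ≤ (C * K y) * ((L + 1) * (1 + y ^ 2)) := by gcongr; nlinarith [sq_nonneg y]
      _ = _ := by ring
  have hL1 : ∀ a ∈ Set.Ioo (b / 2) (2 * b), ∀ y,
      |Real.log (f a y) + 1| ≤ L * (1 + y ^ 2) + 1 := fun a ha y => by
    refine (abs_add_le _ _).trans ?_
    rw [abs_one]; linarith [hL a ha y]
  have main := (hasDerivAt_integral_of_dominated_loc_of_deriv_le (μ := volume) (x₀ := b)
      (F := fun a y => f a y * Real.log (f a y))
      (F' := fun a y => 1 / 2 * f2 a y * (Real.log (f a y) + 1))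
      (bound := fun y => C * (L + 1) * ((1 + y ^ 2) * K y)) (s := Set.Ioo (b / 2) (2 * b))
      (isOpen_Ioo.mem_nhds hbI) ?_ ?_ ?_ ?_ (KI.const_mul _) ?_)
  rotate_left
  · filter_upwards [isOpen_Ioo.mem_nhds hbI] with a ha
    exact ((fc a ha).mul (logc a ha)).aestronglyMeasurable
  · refine (KI.const_mul (C * (L + 1))).mono' ((fc b hbI).mul (logc b hbI)).aestronglyMeasurable
      (Eventually.of_forall fun y => ?_)
    exact big (fle b hbI y) ((hL b hbI y).trans (by linarith))
  · exact (f2c.const_mul _).mul ((logc b hbI).add continuous_const).aestronglyMeasurable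
  · refine Eventually.of_forall fun y a ha => ?_
    refine big ?_ (hL1 a ha y)
    have := f2le a ha y
    rw [abs_mul, abs_of_pos (show (0:ℝ) < 1 / 2 by norm_num)]
    linarith [abs_nonneg (f2 a y)]
  · refine Eventually.of_forall fun y a ha => ?_
    have hne := (fpos a ha y).ne'
    refine ((Da a ha y).mul ((Da a ha y).log hne)).congr_deriv ?_
    field_simp
  refine main.2.congr_deriv ?_
  -- integration by parts
  have Dlog : ∀ y, HasDerivAt (fun y => Real.log (f b y)) (f1 b y / f b y) y := fun y =>
    (D1 b hbI y).log (fpos b hbI y).ne'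
  have fisher : ∀ y, |f1 b y / f b y * f1 b y| ≤ C * K y := by
    intro y
    have hp := fpos b hbI y
    set l := f1 b y / f b y with hl
    have hlf : l * f b y = f1 b y := by rw [hl]; field_simp
    have g3 : (∫ x, fX x * ((y - x) ^ 2 / b ^ 2 * E b (y - x))) ≤ C * K y :=
      (le_abs_self _).trans (conv_le hi h0 (g := fun u => u ^ 2 / b ^ 2 * E b u) (e_cont b) eabs
        (fun u => g3abs u) y)
    have sq : 0 ≤ ∫ x, (fX x * ((y - x) ^ 2 / b ^ 2 * E b (y - x)) +
        l ^ 2 * (fX x * E b (y - x))) - 2 * l * (fX x * (-((y - x) / b) * E b (y - x))) := by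
      refine integral_nonneg fun x => ?_
      have : 0 ≤ fX x * E b (y - x) * ((y - x) / b + l) ^ 2 :=
        mul_nonneg (mul_nonneg (h0 x) (E_pos hb _).le) (sq_nonneg _)
      refine this.trans (le_of_eq ?_)
      ring
    have hadd : Integrable (fun x => fX x * ((y - x) ^ 2 / b ^ 2 * E b (y - x)) +
        l ^ 2 * (fX x * E b (y - x))) := (f3int y).add ((fint b hbI y).const_mul _)
    rw [integral_sub hadd ((f1int b hbI y).const_mul _),
      integral_add (f3int y) ((fint b hbI y).const_mul _), integral_const_mul,
      integral_const_mul] at sq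
    change 0 ≤ _ + l ^ 2 * f b y - 2 * l * f1 b y at sq
    rw [abs_of_nonneg (by rw [← hlf]; nlinarith [mul_nonneg (sq_nonneg l) hp.le])]
    have hl2 : l ^ 2 * f b y = l * f1 b y := by rw [← hlf]; ring
    rw [hl2] at sq
    set I3 := ∫ x, fX x * ((y - x) ^ 2 / b ^ 2 * E b (y - x))
    linarith
  have ibp := integral_mul_deriv_eq_deriv_mul_of_integrable
    (u := fun y => Real.log (f b y) + 1) (u' := fun y => f1 b y / f b y) (v := f1 b) (v' := f2 b)
    (fun y _ => (Dlog y).add_const 1) (fun y _ => D2 b hbI y) ?_ ?_ ?_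
  · have e1 : (∫ y, 1 / 2 * f2 b y * (Real.log (f b y) + 1)) =
        1 / 2 * ∫ y, (Real.log (f b y) + 1) * f2 b y := by
      rw [← integral_const_mul]; congr 1; ext y; ring
    have e2 : (∫ y, f b y * (deriv (fun y' => Real.log (f b y')) y) ^ 2) =
        ∫ y, f1 b y / f b y * f1 b y := by
      congr 1; ext y
      have := (fpos b hbI y).ne'
      rw [(Dlog y).deriv]; field_simp
    rw [e1, ibp, e2]; ring
  · refine (main.1.const_mul 2).congr (Eventually.of_forall fun y => ?_)
    simp only [Pi.mul_apply]; ring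
  · refine (KI.const_mul C).mono' ?_ (Eventually.of_forall fun y => ?_)
    · exact ((f1c.div (fc b hbI) fun y => (fpos b hbI y).ne').mul f1c).aestronglyMeasurable
    · refine (fisher y).trans ?_
      have := K0 y
      gcongr
      nlinarith [sq_nonneg y, mul_nonneg (sq_nonneg y) this]
  · refine (KI.const_mul (C * (L + 1))).mono'
      (((logc b hbI).add continuous_const).mul f1c).aestronglyMeasurable
      (Eventually.of_forall fun y => ?_)
    rw [Pi.mul_apply, mul_comm]
    exact big (f1le b hbI y) (hL1 b hbI y)

end DeBruijn

/-- **De Bruijn's identity.** For the additive Gaussian noise channel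
`Y = X + √a·W`, the differential entropy `h(a)` is differentiable in `a > 0`
and `d/da h(a) = (1/2) J(a)`, where `J` is the Fisher information of the
output with respect to a location parameter. -/
theorem de_bruijn_identity
    (fX : ℝ → ℝ)
    (hfX_nonneg : ∀ x, 0 ≤ fX x)
    (hfX_prob : (∫ x, fX x) = 1)
    (hfX_mom : Integrable (fun x => x ^ 2 * fX x))
    (fY : ℝ → ℝ → ℝ)
    (hfY : ∀ a, 0 < a → ∀ y, fY a y =
      ∫ x, fX x * ((Real.sqrt (2 * Real.pi * a))⁻¹ *
        Real.exp (-(y - x) ^ 2 / (2 * a))))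
    (h : ℝ → ℝ)
    (hh : ∀ a, 0 < a → h a = -∫ y, fY a y * Real.log (fY a y))
    (J : ℝ → ℝ)
    (hJ : ∀ a, 0 < a → J a =
      ∫ y, fY a y * (deriv (fun y' => Real.log (fY a y')) y) ^ 2) :
    ∀ a, 0 < a → HasDerivAt h ((1 / 2) * J a) a := by
  intro a ha
  have hm := DeBruijn.main fX hfX_nonneg hfX_prob hfX_mom a ha
  have hE : ∀ a, 0 < a → ∀ y, fY a y = ∫ x, fX x * DeBruijn.E a (y - x) := hfY
  have hder := hm.neg
  rw [neg_neg] at hder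
  rw [hJ a ha]
  simp only [hE a ha]
  refine hder.congr_of_eventuallyEq ?_
  filter_upwards [isOpen_Ioi.mem_nhds (show a ∈ Set.Ioi 0 from ha)] with a' ha'
  rw [hh a' ha']
  simp only [hE a' ha', Pi.neg_apply]
end

section
/- (Entropy derivative for exponential noise) Let X be a nonnegative real random variable whose moment generating function exists and whose density f_X is bounded, and let W be an independent exponential random variable with density f_W(w) = e^{−w} for w ≥ 0 (and 0 otherwise). For a > 0 set f_{Y|X}(y|x;a) = a^{−1/2} f_W((y−x)/√a) and f_Y(y;a) = ∫ f_X(x) f_{Y|X}(y|x;a) dx. Then the differential entropy h(a) = −∫ f_Y(y;a) log f_Y(y;a) dy satisfies d/da h(a) = (1/(2a√a)) · ( √a − E[X] + ∫ f_X(y) m(y;a) dy ), where m(y;a) = ∫ x f_X(x) f_{Y|X}(y|x;a) dx / f_Y(y;a) is the posterior mean of X given Y = y. -/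
open MeasureTheory Filter Set Topology

namespace EntropyExp

/-- Hypotheses on the density. -/
structure Good (f : ℝ → ℝ) : Prop where
  nn : ∀ x, 0 ≤ f x
  supp : ∀ x, x < 0 → f x = 0
  mgf : ∀ s : ℝ, Integrable (fun x => Real.exp (s * x) * f x)
  one : ∫ x, f x = 1

/-- tilted density -/
noncomputable def ph (f : ℝ → ℝ) (t x : ℝ) : ℝ := Real.exp (t⁻¹ * x) * f x

noncomputable def G (f : ℝ → ℝ) (t y : ℝ) : ℝ := ∫ x in Iic y, ph f t x

noncomputable def K (f : ℝ → ℝ) (t y : ℝ) : ℝ := ∫ x in Iic y, x * ph f t x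

noncomputable def g (f : ℝ → ℝ) (t y : ℝ) : ℝ := t⁻¹ * Real.exp (-(t⁻¹ * y)) * G f t y

noncomputable def q (f : ℝ → ℝ) (t y : ℝ) : ℝ :=
  t⁻¹ ^ 2 * Real.exp (-(t⁻¹ * y)) * (y * G f t y - K f t y)

variable {f : ℝ → ℝ}

lemma ph_nn (h : Good f) (t x : ℝ) : 0 ≤ ph f t x := mul_nonneg (Real.exp_pos _).le (h.nn x)

lemma ph_supp (h : Good f) (t x : ℝ) (hx : x < 0) : ph f t x = 0 := by simp [ph, h.supp x hx]

lemma ph_int (h : Good f) (t : ℝ) : Integrable (ph f t) := h.mgf _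

lemma f_int (h : Good f) : Integrable f := by simpa using h.mgf 0

lemma xph_nn (h : Good f) (t x : ℝ) : 0 ≤ x * ph f t x := by
  rcases lt_or_ge x 0 with hx | hx
  · simp [ph_supp h t x hx]
  · exact mul_nonneg hx (ph_nn h t x)

lemma xph_le (h : Good f) (t x : ℝ) : x * ph f t x ≤ Real.exp ((t⁻¹ + 1) * x) * f x := by
  have h1 : x ≤ Real.exp x := by linarith [Real.add_one_le_exp x]
  have h2 := mul_le_mul_of_nonneg_right h1 (ph_nn h t x)
  refine h2.trans (le_of_eq ?_)
  rw [ph, ← mul_assoc, ← Real.exp_add]; ring_nf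

lemma xph_int (h : Good f) (t : ℝ) : Integrable (fun x => x * ph f t x) := by
  refine (h.mgf (t⁻¹ + 1)).mono' (aestronglyMeasurable_id.mul (ph_int h t).1) ?_
  filter_upwards with x
  rw [Real.norm_of_nonneg (xph_nn h t x)]
  exact xph_le h t x

lemma xf_int (h : Good f) : Integrable (fun x => x * f x) := by
  simpa [ph] using xph_int h 0

lemma G_nn (h : Good f) (t y : ℝ) : 0 ≤ G f t y :=
  setIntegral_nonneg measurableSet_Iic fun x _ => ph_nn h t x

lemma K_nn (h : Good f) (t y : ℝ) : 0 ≤ K f t y :=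
  setIntegral_nonneg measurableSet_Iic fun x _ => xph_nn h t x

lemma K_le (h : Good f) (t y : ℝ) : K f t y ≤ y * G f t y := by
  unfold K G
  rw [← integral_const_mul]
  refine setIntegral_mono_on (xph_int h t).integrableOn ((ph_int h t).const_mul y).integrableOn
    measurableSet_Iic fun x hx => mul_le_mul_of_nonneg_right hx (ph_nn h t x)

lemma G_mono (h : Good f) (t : ℝ) : Monotone (G f t) := fun a b hab =>
  setIntegral_mono_set (ph_int h t).integrableOn (ae_of_all _ fun x => ph_nn h t x)
    (Iic_subset_Iic.2 hab).eventuallyLE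

lemma K_mono (h : Good f) (t : ℝ) : Monotone (K f t) := fun a b hab =>
  setIntegral_mono_set (xph_int h t).integrableOn (ae_of_all _ fun x => xph_nn h t x)
    (Iic_subset_Iic.2 hab).eventuallyLE

lemma G_neg (h : Good f) (t y : ℝ) (hy : y < 0) : G f t y = 0 :=
  setIntegral_eq_zero_of_forall_eq_zero fun x hx => ph_supp h t x (lt_of_le_of_lt hx hy)

lemma K_neg (h : Good f) (t y : ℝ) (hy : y < 0) : K f t y = 0 :=
  setIntegral_eq_zero_of_forall_eq_zero fun x hx => by
    simp [ph_supp h t x (lt_of_le_of_lt hx hy)]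

lemma K_zero (h : Good f) (t y : ℝ) (hG : G f t y = 0) : K f t y = 0 := by
  have := K_le h t y
  rw [hG, mul_zero] at this
  exact le_antisymm this (K_nn h t y)

lemma G_meas (h : Good f) (t : ℝ) : Measurable (G f t) := (G_mono h t).measurable
lemma K_meas (h : Good f) (t : ℝ) : Measurable (K f t) := (K_mono h t).measurable

lemma g_meas (h : Good f) (t : ℝ) : Measurable (g f t) := by
  have := G_meas h t
  unfold g; fun_prop

lemma q_meas (h : Good f) (t : ℝ) : Measurable (q f t) := by
  have := G_meas h t
  have := K_meas h t
  unfold q; fun_prop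

lemma g_nn (h : Good f) {t : ℝ} (ht : 0 < t) (y : ℝ) : 0 ≤ g f t y := by
  have := G_nn h t y
  unfold g; positivity

lemma q_nn (h : Good f) {t : ℝ} (y : ℝ) : 0 ≤ q f t y := by
  have : 0 ≤ y * G f t y - K f t y := by linarith [K_le h t y]
  unfold q; positivity

lemma g_neg (h : Good f) (t y : ℝ) (hy : y < 0) : g f t y = 0 := by simp [g, G_neg h t y hy]
lemma q_neg (h : Good f) (t y : ℝ) (hy : y < 0) : q f t y = 0 := by
  simp [q, G_neg h t y hy, K_neg h t y hy]

lemma q_le (h : Good f) {t : ℝ} (ht : 0 < t) (y : ℝ) : q f t y ≤ t⁻¹ * y * g f t y := by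
  have := K_nn h t y
  have h2 : 0 ≤ t⁻¹ ^ 2 * Real.exp (-(t⁻¹ * y)) := by positivity
  unfold q g
  nlinarith [mul_nonneg h2 this]

lemma q_zero (h : Good f) {t y : ℝ} (hG : G f t y = 0) : q f t y = 0 := by
  simp [q, hG, K_zero h t y hG]

lemma g_eq_zero {t y : ℝ} (ht : 0 < t) : g f t y = 0 ↔ G f t y = 0 := by
  simp [g, ht.ne']

/-- `G` vanishing does not depend on `t`. -/
lemma G_zero_indep (h : Good f) (t s y : ℝ) (hG : G f t y = 0) : G f s y = 0 := by
  unfold G at hG ⊢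
  rw [integral_eq_zero_iff_of_nonneg (fun x => ph_nn h t x) (ph_int h t).integrableOn] at hG
  rw [integral_eq_zero_iff_of_nonneg (fun x => ph_nn h s x) (ph_int h s).integrableOn]
  filter_upwards [hG] with x hx
  simp only [ph, Pi.zero_apply, mul_eq_zero, (Real.exp_pos _).ne', false_or] at hx ⊢
  exact hx

lemma G_hasDerivAt (h : Good f) {t : ℝ} (ht : 0 < t) (y : ℝ) :
    HasDerivAt (fun s => G f s y) (-(t⁻¹ ^ 2) * K f t y) t := by
  have key := hasDerivAt_integral_of_dominated_loc_of_deriv_le (μ := volume.restrict (Iic y))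
    (s := Ioi (t / 2)) (x₀ := t) (F := fun s x => ph f s x)
    (F' := fun s x => -(s⁻¹ ^ 2) * (x * ph f s x))
    (bound := fun x => (t / 2)⁻¹ ^ 2 * (x * ph f (t / 2) x))
    (Ioi_mem_nhds (by linarith)) (Eventually.of_forall fun s => (ph_int h s).integrableOn.1)
    (ph_int h t).integrableOn ((xph_int h t).integrableOn.1.const_mul _)
    (ae_of_all _ ?_) ((xph_int h _).integrableOn.const_mul _) (ae_of_all _ ?_)
  · have := key.2
    rw [integral_const_mul] at this
    exact this
  · intro x s hs
    have hs : t / 2 < s := hs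
    have hs0 : 0 < s := by linarith
    have hinv : s⁻¹ ≤ (t / 2)⁻¹ := inv_anti₀ (by linarith) hs.le
    rw [norm_mul, norm_neg, Real.norm_of_nonneg (xph_nn h s x), Real.norm_of_nonneg (by positivity)]
    refine mul_le_mul (by gcongr) ?_ (xph_nn h s x) (by positivity)
    rcases lt_or_ge x 0 with hx | hx
    · simp [ph_supp h _ x hx]
    · unfold ph
      have := h.nn x
      gcongr
  · intro x s hs
    have hs : t / 2 < s := hs
    have hs0 : s ≠ 0 := by linarith
    have h1 := (((hasDerivAt_inv hs0).mul_const x).exp).mul_const (f x)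
    refine h1.congr_deriv ?_
    unfold ph
    field_simp

lemma g_hasDerivAt (h : Good f) {t : ℝ} (ht : 0 < t) (y : ℝ) :
    HasDerivAt (fun s => g f s y) (t⁻¹ * (q f t y - g f t y)) t := by
  have h1 := ((hasDerivAt_inv ht.ne').mul ((((hasDerivAt_inv ht.ne').mul_const y).neg).exp)).mul
    (G_hasDerivAt h ht y)
  refine h1.congr_deriv ?_
  simp only [q, g, Pi.mul_apply, Pi.neg_apply]
  field_simp
  ring

lemma H_eq (h : Good f) (t y : ℝ) :
    y * G f t y - K f t y = ∫ x, max (y - x) 0 * ph f t x := by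
  unfold G K
  rw [← integral_const_mul, ← integral_sub ((ph_int h t).integrableOn.const_mul y)
    (xph_int h t).integrableOn, ← integral_indicator measurableSet_Iic]
  congr 1
  ext x
  by_cases hx : x ≤ y
  · rw [indicator_of_mem (by exact hx), max_eq_left (by linarith)]; ring
  · rw [indicator_of_notMem (by exact hx), max_eq_right (by linarith)]; ring

lemma H_hasDerivAt (h : Good f) (t y : ℝ) :
    HasDerivAt (fun y => y * G f t y - K f t y) (G f t y) y := by
  have e1 : (fun y => y * G f t y - K f t y) = fun y => ∫ x, max (y - x) 0 * ph f t x := by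
    ext y; exact H_eq h t y
  rw [e1]
  have hm : ∀ y, AEStronglyMeasurable (fun x => max (y - x) 0 * ph f t x) volume := fun y =>
    (by fun_prop : Continuous fun x : ℝ => max (y - x) 0).aestronglyMeasurable.mul (ph_int h t).1
  have key := hasDerivAt_integral_of_dominated_loc_of_lip (μ := volume)
    (s := univ) (x₀ := y) (F := fun y x => max (y - x) 0 * ph f t x)
    (F' := fun x => (Iic y).indicator (ph f t) x)
    (bound := ph f t) univ_mem (Eventually.of_forall hm) ?_
    ((ph_int h t).1.indicator measurableSet_Iic) (ae_of_all _ ?_) (ph_int h t) ?_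
  · have := key.2
    rw [integral_indicator measurableSet_Iic] at this
    exact this
  · refine (((ph_int h t).const_mul |y|).add (xph_int h t)).mono' (hm y) (ae_of_all _ fun x => ?_)
    have h0 := ph_nn h t x
    have hx := xph_nn h t x
    rw [norm_mul, Real.norm_of_nonneg h0, Real.norm_of_nonneg (le_max_right _ _)]
    rcases lt_or_ge x 0 with hx | hx
    · simp [ph_supp h t x hx]
    · simp only [Pi.add_apply]
      rw [← add_mul]
      refine mul_le_mul_of_nonneg_right (max_le ?_ (by positivity)) h0
      linarith [le_abs_self y]
  · intro x
    refine LipschitzOnWith.of_dist_le_mul fun a _ b _ => ?_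
    have h0 := ph_nn h t x
    rw [Real.coe_nnabs, abs_of_nonneg h0, Real.dist_eq, Real.dist_eq, ← sub_mul, abs_mul,
      abs_of_nonneg h0, mul_comm]
    refine mul_le_mul_of_nonneg_left ?_ h0
    refine (abs_max_sub_max_le_abs _ _ _).trans (le_of_eq ?_)
    congr 1; ring
  · have : ∀ᵐ x : ℝ, x ≠ y := by simp [ae_iff, measure_singleton]
    filter_upwards [this] with x hx
    rcases lt_or_gt_of_ne hx with hx | hx
    · rw [indicator_of_mem (by exact hx.le)]
      have h1 : HasDerivAt (fun y => (y - x) * ph f t x) (ph f t x) y := by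
        simpa using ((hasDerivAt_id y).sub_const x).mul_const (ph f t x)
      refine h1.congr_of_eventuallyEq ?_
      filter_upwards [Ioi_mem_nhds hx] with z hz
      have hz : x < z := hz
      rw [max_eq_left (by linarith)]
    · rw [indicator_of_notMem (by simpa using hx)]
      refine (hasDerivAt_const y (0:ℝ)).congr_of_eventuallyEq ?_
      filter_upwards [Iio_mem_nhds hx] with z hz
      have hz : z < x := hz
      rw [max_eq_right (by linarith), zero_mul]

lemma q_hasDerivAt (h : Good f) (t y : ℝ) :
    HasDerivAt (q f t) (t⁻¹ * (g f t y - q f t y)) y := by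
  have h1 := ((((hasDerivAt_id y).const_mul t⁻¹).neg.exp).const_mul (t⁻¹ ^ 2)).mul (H_hasDerivAt h t y)
  refine h1.congr_deriv ?_
  simp only [q, g, Pi.mul_apply, Pi.neg_apply, id]
  ring

lemma int_of_bound {F : ℝ → ℝ} (hF : Measurable F) (h0 : ∀ y, y < 0 → F y = 0) {k D : ℝ}
    (hk : 0 < k) (hb : ∀ y, 0 ≤ y → |F y| ≤ D * Real.exp (-k * y)) : Integrable F := by
  have h1 : IntegrableOn F (Ici 0) := by
    rw [integrableOn_Ici_iff_integrableOn_Ioi]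
    refine Integrable.mono' ((exp_neg_integrableOn_Ioi 0 hk).const_mul D)
      hF.aestronglyMeasurable ?_
    filter_upwards [ae_restrict_mem measurableSet_Ioi] with y hy
    exact hb y (le_of_lt hy)
  have h2 : F = (Ici (0:ℝ)).indicator F := by
    ext y
    by_cases hy : 0 ≤ y
    · rw [indicator_of_mem (by exact hy)]
    · rw [indicator_of_notMem (by exact hy), h0 y (by linarith)]
  rw [h2]
  exact (integrable_indicator_iff measurableSet_Ici).2 h1

noncomputable def M (f : ℝ → ℝ) (k : ℝ) : ℝ := ∫ x, Real.exp (8 * k * x) * f x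

lemma M_nn (h : Good f) (k : ℝ) : 0 ≤ M f k :=
  integral_nonneg fun x => mul_nonneg (Real.exp_pos _).le (h.nn x)

lemma g_bound (h : Good f) {t k : ℝ} (hk : 0 < k) (h1 : 8 * k ≤ t⁻¹) (h2 : t⁻¹ ≤ 32 * k) (y : ℝ) :
    g f t y ≤ (32 * k * M f k) * Real.exp (-8 * k * y) := by
  have hA : Real.exp (-(t⁻¹ * y)) * G f t y ≤ Real.exp (-8 * k * y) * M f k := by
    unfold G M
    rw [← integral_const_mul, ← integral_const_mul]
    refine (setIntegral_mono_on (g := fun x => Real.exp (-8 * k * y) * (Real.exp (8 * k * x) * f x))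
      ((ph_int h t).integrableOn.const_mul _)
      ((h.mgf (8 * k)).integrableOn.const_mul _) measurableSet_Iic fun x hx => ?_).trans
      (setIntegral_le_integral ((h.mgf (8 * k)).const_mul _) (ae_of_all _ fun x => ?_))
    · have hx : x ≤ y := hx
      unfold ph
      rw [← mul_assoc, ← mul_assoc, ← Real.exp_add, ← Real.exp_add]
      refine mul_le_mul_of_nonneg_right (Real.exp_le_exp.2 ?_) (h.nn x)
      nlinarith
    · exact mul_nonneg (Real.exp_pos _).le (mul_nonneg (Real.exp_pos _).le (h.nn x))
  have hB : 0 ≤ Real.exp (-(t⁻¹ * y)) * G f t y := mul_nonneg (Real.exp_pos _).le (G_nn h t y)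
  unfold g
  calc _ = t⁻¹ * (Real.exp (-(t⁻¹ * y)) * G f t y) := by ring
    _ ≤ (32 * k) * (Real.exp (-8 * k * y) * M f k) := mul_le_mul h2 hA hB (by positivity)
    _ = _ := by ring

lemma log_bound {x : ℝ} (hx : 0 ≤ x) : x * (1 + |Real.log x|) ≤ x + 2 * Real.sqrt x + x ^ 2 := by
  rcases hx.eq_or_lt with rfl | hx
  · simp
  have hs := Real.sqrt_pos.2 hx
  have hss := Real.mul_self_sqrt hx.le
  have h1 : Real.log x ≤ x := by linarith [Real.log_le_sub_one_of_pos hx]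
  have h2 : -Real.log x ≤ 2 * (Real.sqrt x)⁻¹ := by
    have h3 := Real.log_le_sub_one_of_pos (inv_pos.2 hs)
    rw [Real.log_inv, Real.log_sqrt hx.le] at h3
    linarith
  have h4 : |Real.log x| ≤ x + 2 * (Real.sqrt x)⁻¹ :=
    abs_le.2 ⟨by linarith, by linarith [inv_pos.2 hs]⟩
  have h5 : x * (Real.sqrt x)⁻¹ = Real.sqrt x := by
    field_simp; nlinarith
  nlinarith [mul_le_mul_of_nonneg_left h4 hx.le]

lemma lin_exp {k y : ℝ} (hk : 0 < k) (hy : 0 ≤ y) : 1 + 32 * k * y ≤ 33 * Real.exp (k * y) := by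
  have := Real.add_one_le_exp (k * y)
  have : 0 ≤ k * y := by positivity
  nlinarith

lemma gq_bound (h : Good f) {t k : ℝ} (hk : 0 < k) (h1 : 8 * k ≤ t⁻¹) (h2 : t⁻¹ ≤ 32 * k) {y : ℝ}
    (hy : 0 ≤ y) : g f t y + q f t y ≤ 33 * Real.exp (k * y) * g f t y := by
  have ht : 0 < t := inv_pos.1 (by linarith)
  have := q_le h ht y
  have hg := g_nn h ht y
  have h3 := mul_le_mul_of_nonneg_right (lin_exp hk hy) hg
  have h4 : t⁻¹ * y * g f t y ≤ 32 * k * y * g f t y := by gcongr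
  linarith

/-- constant -/
noncomputable def CC (f : ℝ → ℝ) (k : ℝ) : ℝ :=
  33 * ((32 * k * M f k) + 2 * Real.sqrt (32 * k * M f k) + (32 * k * M f k) ^ 2)

lemma gq_log_bound (h : Good f) {t k : ℝ} (hk : 0 < k) (h1 : 8 * k ≤ t⁻¹) (h2 : t⁻¹ ≤ 32 * k)
    {y : ℝ} (hy : 0 ≤ y) :
    (g f t y + q f t y) * (1 + |Real.log (g f t y)|) ≤ CC f k * Real.exp (-(3 * k) * y) := by
  have ht : 0 < t := inv_pos.1 (by linarith)
  have hg := g_nn h ht y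
  have hq := q_nn h (t := t) y
  have hM := M_nn h k
  set D := 32 * k * M f k with hD
  have hD0 : 0 ≤ D := by positivity
  have hgb := g_bound h hk h1 h2 y
  set e := Real.exp (-4 * k * y) with he
  have he0 : 0 < e := Real.exp_pos _
  have he1 : e ≤ 1 := by rw [he, Real.exp_le_one_iff]; nlinarith [mul_nonneg hk.le hy]
  have hee : Real.exp (-8 * k * y) = e ^ 2 := by rw [he, ← Real.exp_nat_mul]; ring_nf
  rw [← hD, hee] at hgb
  have hsq : Real.sqrt (g f t y) ≤ Real.sqrt D * e := by
    rw [Real.sqrt_le_left (by positivity), mul_pow, Real.sq_sqrt hD0]; exact hgb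
  have hg1 : g f t y ≤ D * e := hgb.trans (by nlinarith [mul_nonneg hD0 he0.le])
  have hg2 : g f t y ^ 2 ≤ D ^ 2 * e := by
    calc g f t y ^ 2 ≤ (D * e) ^ 2 := by gcongr
      _ = D ^ 2 * e * e := by ring
      _ ≤ D ^ 2 * e * 1 := by gcongr
      _ = _ := by ring
  have hl := log_bound hg
  have hl2 : g f t y * (1 + |Real.log (g f t y)|) ≤ (D + 2 * Real.sqrt D + D ^ 2) * e := by linarith
  calc (g f t y + q f t y) * (1 + |Real.log (g f t y)|)
      ≤ (33 * Real.exp (k * y) * g f t y) * (1 + |Real.log (g f t y)|) := by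
        gcongr; exact gq_bound h hk h1 h2 hy
    _ = 33 * Real.exp (k * y) * (g f t y * (1 + |Real.log (g f t y)|)) := by ring
    _ ≤ 33 * Real.exp (k * y) * ((D + 2 * Real.sqrt D + D ^ 2) * e) := by gcongr
    _ = CC f k * (Real.exp (k * y) * e) := by rw [CC, ← hD]; ring
    _ = _ := by rw [he, ← Real.exp_add]; ring_nf

lemma CC_nn (h : Good f) {k : ℝ} (hk : 0 < k) : 0 ≤ CC f k := by
  have := M_nn h k
  unfold CC; positivity

lemma int_of_gq {F : ℝ → ℝ} (h : Good f) (hF : Measurable F) {t : ℝ} (ht : 0 < t)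
    (hb : ∀ y, |F y| ≤ (g f t y + q f t y) * (1 + |Real.log (g f t y)|)) : Integrable F := by
  have hk : 0 < t⁻¹ / 16 := by positivity
  refine int_of_bound hF (fun y hy => ?_) (k := 3 * (t⁻¹ / 16)) (D := CC f (t⁻¹ / 16)) (by positivity)
    fun y hy => ?_
  · have := hb y
    rw [g_neg h t y hy, q_neg h t y hy] at this
    simpa using this
  · exact (hb y).trans (gq_log_bound h hk (by linarith) (by linarith) hy)

lemma int_of_gq' {F : ℝ → ℝ} (h : Good f) (hF : Measurable F) {t : ℝ} (ht : 0 < t)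
    (hb : ∀ y, |F y| ≤ y * (g f t y + q f t y)) : Integrable F := by
  obtain ⟨k, hk⟩ : ∃ k, k = t⁻¹ / 16 := ⟨_, rfl⟩
  have hk0 : 0 < k := by rw [hk]; positivity
  have hC := CC_nn h hk0
  refine int_of_bound hF (fun y hy => ?_) (k := 2 * k) (D := k⁻¹ * CC f k) (by positivity)
    fun y hy => ?_
  · have := hb y
    rw [g_neg h t y hy, q_neg h t y hy] at this
    simpa using this
  · have h1 := gq_log_bound h hk0 (t := t) (by linarith) (by linarith) hy
    have hg := g_nn h ht y
    have hq := q_nn h (t := t) y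
    have h2 : g f t y + q f t y ≤ (g f t y + q f t y) * (1 + |Real.log (g f t y)|) := by
      nlinarith [mul_nonneg (add_nonneg hg hq) (abs_nonneg (Real.log (g f t y)))]
    have h3 : y ≤ k⁻¹ * Real.exp (k * y) := by
      rw [← div_eq_inv_mul, le_div_iff₀ hk0]
      linarith [Real.add_one_le_exp (k * y)]
    calc |F y| ≤ y * (g f t y + q f t y) := hb y
      _ ≤ (k⁻¹ * Real.exp (k * y)) * (CC f k * Real.exp (-(3 * k) * y)) :=
        mul_le_mul h3 (h2.trans h1) (by positivity) (by positivity)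
      _ = k⁻¹ * CC f k * (Real.exp (k * y) * Real.exp (-(3 * k) * y)) := by ring
      _ = _ := by rw [← Real.exp_add]; ring_nf

lemma gq_le_one {t : ℝ} (h : Good f) (ht : 0 < t) (y : ℝ) :
    g f t y + q f t y ≤ (g f t y + q f t y) * (1 + |Real.log (g f t y)|) := by
  have hg := g_nn h ht y
  have hq := q_nn h (t := t) y
  nlinarith [mul_nonneg (add_nonneg hg hq) (abs_nonneg (Real.log (g f t y)))]

lemma g_int (h : Good f) {t : ℝ} (ht : 0 < t) : Integrable (g f t) := by
  refine int_of_gq h (g_meas h t) ht fun y => le_trans ?_ (gq_le_one h ht y)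
  rw [abs_of_nonneg (g_nn h ht y)]; linarith [q_nn h (t := t) y]

lemma q_int (h : Good f) {t : ℝ} (ht : 0 < t) : Integrable (q f t) := by
  refine int_of_gq h (q_meas h t) ht fun y => le_trans ?_ (gq_le_one h ht y)
  rw [abs_of_nonneg (q_nn h y)]; linarith [g_nn h ht y]

lemma sub_le (h : Good f) {t : ℝ} (ht : 0 < t) (y : ℝ) :
    |g f t y - q f t y| ≤ g f t y + q f t y := by
  have := q_nn h (t := t) y
  have := g_nn h ht y
  rw [abs_le]; constructor <;> linarith

lemma yq_int (h : Good f) {t : ℝ} (ht : 0 < t) : Integrable (fun y => y * q f t y) := by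
  refine int_of_gq' h (measurable_id.mul (q_meas h t)) ht fun y => ?_
  rcases lt_or_ge y 0 with hy | hy
  · simp [q_neg h t y hy, g_neg h t y hy]
  · rw [abs_mul, abs_of_nonneg hy, abs_of_nonneg (q_nn h y)]
    have := g_nn h ht y
    gcongr; linarith

lemma yg_int (h : Good f) {t : ℝ} (ht : 0 < t) : Integrable (fun y => y * g f t y) := by
  refine int_of_gq' h (measurable_id.mul (g_meas h t)) ht fun y => ?_
  rcases lt_or_ge y 0 with hy | hy
  · simp [q_neg h t y hy, g_neg h t y hy]
  · rw [abs_mul, abs_of_nonneg hy, abs_of_nonneg (g_nn h ht y)]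
    have := q_nn h (t := t) y
    gcongr; linarith

lemma dlog_int (h : Good f) {t : ℝ} (ht : 0 < t) :
    Integrable (fun y => (g f t y - q f t y) * Real.log (g f t y)) := by
  refine int_of_gq h (((g_meas h t).sub (q_meas h t)).mul (g_meas h t).log) ht fun y => ?_
  have h1 := sub_le h ht y
  have := q_nn h (t := t) y
  have := g_nn h ht y
  rw [abs_mul]
  gcongr
  linarith

/-- Entropy derivative under the integral sign. -/
lemma leibniz (h : Good f) {t : ℝ} (ht : 0 < t) :
    HasDerivAt (fun s => ∫ y, g f s y * Real.log (g f s y))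
      (∫ y, t⁻¹ * (q f t y - g f t y) * (Real.log (g f t y) + 1)) t := by
  obtain ⟨k, hk⟩ : ∃ k, k = t⁻¹ / 16 := ⟨_, rfl⟩
  have hk0 : 0 < k := by rw [hk]; positivity
  have hC := CC_nn h hk0
  have hs : ∀ s ∈ Ioo (t / 2) (2 * t), 0 < s ∧ 8 * k ≤ s⁻¹ ∧ s⁻¹ ≤ 32 * k := by
    intro s hs
    have h1 : 0 < s := by linarith [hs.1]
    refine ⟨h1, ?_, ?_⟩
    · have : (2 * t)⁻¹ ≤ s⁻¹ := inv_anti₀ h1 hs.2.le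
      rw [mul_inv] at this
      rw [hk]; linarith
    · have : s⁻¹ ≤ (t / 2)⁻¹ := inv_anti₀ (by linarith) hs.1.le
      rw [inv_div, div_eq_mul_inv] at this
      rw [hk]; linarith
  have hmeas : ∀ s, Measurable (fun y => g f s y * Real.log (g f s y)) := fun s =>
    (g_meas h s).mul (g_meas h s).log
  refine (hasDerivAt_integral_of_dominated_loc_of_deriv_le (μ := volume)
    (s := Ioo (t / 2) (2 * t)) (x₀ := t) (F := fun s y => g f s y * Real.log (g f s y))
    (F' := fun s y => s⁻¹ * (q f s y - g f s y) * (Real.log (g f s y) + 1))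
    (bound := (Ici (0:ℝ)).indicator fun y => 32 * k * (CC f k * Real.exp (-(3 * k) * y)))
    (Ioo_mem_nhds (by linarith) (by linarith))
    (Eventually.of_forall fun s => (hmeas s).aestronglyMeasurable) ?_ ?_
    (ae_of_all _ ?_) ?_ (ae_of_all _ ?_)).2
  · refine int_of_gq h (hmeas t) ht fun y => ?_
    have := q_nn h (t := t) y
    have := g_nn h ht y
    rw [abs_mul, abs_of_nonneg (g_nn h ht y)]
    gcongr <;> linarith
  · exact ((((q_meas h t).sub (g_meas h t)).const_mul _).mul
      ((g_meas h t).log.add_const 1)).aestronglyMeasurable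
  · intro y s hss
    obtain ⟨h0, h1, h2⟩ := hs s hss
    by_cases hy : 0 ≤ y
    · rw [indicator_of_mem (by exact hy)]
      have hb := gq_log_bound h hk0 h1 h2 hy
      have h3 := sub_le h h0 y
      have h4 : |Real.log (g f s y) + 1| ≤ 1 + |Real.log (g f s y)| := by
        refine (abs_add_le _ _).trans ?_
        simp [add_comm]
      have := q_nn h (t := s) y
      have := g_nn h h0 y
      rw [Real.norm_eq_abs, abs_mul, abs_mul, abs_sub_comm, abs_of_nonneg (by positivity : 0 ≤ s⁻¹)]
      calc _ ≤ 32 * k * (g f s y + q f s y) * (1 + |Real.log (g f s y)|) := by gcongr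
        _ = 32 * k * ((g f s y + q f s y) * (1 + |Real.log (g f s y)|)) := by ring
        _ ≤ _ := by gcongr
    · rw [indicator_of_notMem (by exact hy), g_neg h s y (by linarith), q_neg h s y (by linarith)]
      simp
  · rw [integrable_indicator_iff measurableSet_Ici, integrableOn_Ici_iff_integrableOn_Ioi]
    exact ((exp_neg_integrableOn_Ioi 0 (by positivity : 0 < 3 * k)).const_mul _).const_mul _
  · intro y s hss
    obtain ⟨h0, -, -⟩ := hs s hss
    by_cases hG : G f s y = 0
    · have h1 : (fun s => g f s y * Real.log (g f s y)) = fun _ => 0 := by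
        ext r
        simp [g, G_zero_indep h s r y hG]
      rw [h1, (g_eq_zero h0).2 hG, q_zero h hG]
      simpa using hasDerivAt_const s (0:ℝ)
    · have hg : g f s y ≠ 0 := fun h' => hG ((g_eq_zero h0).1 h')
      have h1 := g_hasDerivAt h h0 y
      refine (h1.mul (h1.log hg)).congr_deriv ?_
      field_simp

/-- exponential kernel -/
noncomputable def ker (t u : ℝ) : ℝ := (Ici (0:ℝ)).indicator (fun u => t⁻¹ * Real.exp (-t⁻¹ * u)) u

lemma ker_int {t : ℝ} (ht : 0 < t) : Integrable (ker t) := by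
  unfold ker
  rw [integrable_indicator_iff measurableSet_Ici, integrableOn_Ici_iff_integrableOn_Ioi]
  exact (exp_neg_integrableOn_Ioi 0 (inv_pos.2 ht)).const_mul _

lemma ker_integral {t : ℝ} (ht : 0 < t) : ∫ u, ker t u = 1 := by
  unfold ker
  rw [integral_indicator measurableSet_Ici, integral_Ici_eq_integral_Ioi, integral_const_mul,
    integral_exp_mul_Ioi (by simpa using ht)]
  simp [ht.ne']

lemma g_eq_ker (t y : ℝ) : g f t y = ∫ x, f x * ker t (y - x) := by
  unfold g G
  rw [← integral_const_mul, ← integral_indicator measurableSet_Iic]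
  congr 1
  ext x
  unfold ker
  by_cases hx : x ≤ y
  · rw [indicator_of_mem (by exact hx), indicator_of_mem (by simpa using hx)]
    have : Real.exp (-t⁻¹ * (y - x)) = Real.exp (-(t⁻¹ * y)) * Real.exp (t⁻¹ * x) := by
      rw [← Real.exp_add]; ring_nf
    rw [this, ph]; ring
  · rw [indicator_of_notMem (by exact hx), indicator_of_notMem (by simpa using hx), mul_zero]

lemma K_eq_ker (t y : ℝ) :
    t⁻¹ * Real.exp (-(t⁻¹ * y)) * K f t y = ∫ x, x * f x * ker t (y - x) := by
  unfold K
  rw [← integral_const_mul, ← integral_indicator measurableSet_Iic]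
  congr 1
  ext x
  unfold ker
  by_cases hx : x ≤ y
  · rw [indicator_of_mem (by exact hx), indicator_of_mem (by simpa using hx)]
    have : Real.exp (-t⁻¹ * (y - x)) = Real.exp (-(t⁻¹ * y)) * Real.exp (t⁻¹ * x) := by
      rw [← Real.exp_add]; ring_nf
    rw [this, ph]; ring
  · rw [indicator_of_notMem (by exact hx), indicator_of_notMem (by simpa using hx), mul_zero]

lemma g_integral (h : Good f) {t : ℝ} (ht : 0 < t) : ∫ y, g f t y = 1 := by
  have := integral_convolution (μ := volume) (ν := volume) (ContinuousLinearMap.mul ℝ ℝ)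
    (f_int h) (ker_int ht)
  rw [h.one, ker_integral ht] at this
  simp only [convolution_def, ContinuousLinearMap.mul_apply'] at this
  simp_rw [g_eq_ker]
  rw [this]; simp

lemma d_int (h : Good f) {t : ℝ} (ht : 0 < t) :
    Integrable (fun y => t⁻¹ * (g f t y - q f t y)) :=
  ((g_int h ht).sub (q_int h ht)).const_mul _

lemma d_integral (h : Good f) {t : ℝ} (ht : 0 < t) :
    ∫ y, t⁻¹ * (g f t y - q f t y) = 0 :=
  integral_eq_zero_of_hasDerivAt_of_integrable (fun y => q_hasDerivAt h t y) (d_int h ht)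
    (q_int h ht)

lemma q_integral (h : Good f) {t : ℝ} (ht : 0 < t) : ∫ y, q f t y = 1 := by
  have := d_integral h ht
  rw [integral_const_mul, integral_sub (g_int h ht) (q_int h ht), g_integral h ht] at this
  have h2 : t⁻¹ ≠ 0 := by positivity
  have := (mul_eq_zero.1 this).resolve_left h2
  linarith

lemma yd_int (h : Good f) {t : ℝ} (ht : 0 < t) :
    Integrable (fun y => y * (t⁻¹ * (g f t y - q f t y))) := by
  refine (((yg_int h ht).sub (yq_int h ht)).const_mul t⁻¹).congr (ae_of_all _ fun y => ?_)
  simp only [Pi.sub_apply]; ring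

lemma yd_integral (h : Good f) {t : ℝ} (ht : 0 < t) :
    ∫ y, y * (t⁻¹ * (g f t y - q f t y)) = -1 := by
  have h1 := integral_eq_zero_of_hasDerivAt_of_integrable
    (fun y => (hasDerivAt_id y).mul (q_hasDerivAt h t y))
    (by
      refine ((q_int h ht).add (yd_int h ht)).congr (ae_of_all _ fun y => ?_)
      simp) (yq_int h ht)
  simp only [one_mul, id] at h1
  rw [integral_add (q_int h ht) (yd_int h ht), q_integral h ht] at h1
  linarith

lemma G_sub (h : Good f) (t c y : ℝ) : G f t y = G f t c + ∫ x in c..y, ph f t x := by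
  rw [← intervalIntegral.integral_Iic_sub_Iic (ph_int h t).integrableOn (ph_int h t).integrableOn]
  unfold G; ring

lemma G_ae_deriv (h : Good f) (t : ℝ) : ∀ᵐ y, HasDerivAt (G f t) (ph f t y) y := by
  filter_upwards [LocallyIntegrable.ae_hasDerivAt_integral (ph_int h t).locallyIntegrable] with y hy
  have e : G f t = fun y => G f t 0 + ∫ x in (0:ℝ)..y, ph f t x := by
    ext z; exact G_sub h t 0 z
  rw [e]
  exact (hy 0).const_add _

lemma ph_ae_zero (h : Good f) (t : ℝ) : ∀ᵐ y, G f t y = 0 → f y = 0 := by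
  filter_upwards [G_ae_deriv h t] with y hy hG
  have : IsLocalMin (G f t) y := Eventually.of_forall fun z => by rw [hG]; exact G_nn h t z
  have := this.hasDerivAt_eq_zero hy
  simpa [ph, (Real.exp_pos _).ne'] using this

lemma logG_ac (h : Good f) (t : ℝ) {c d : ℝ} (hcd : c ≤ d) (hc : 0 < G f t c) :
    AbsolutelyContinuousOnInterval (fun y => Real.log (G f t y)) c d := by
  have h1 : AbsolutelyContinuousOnInterval (fun y => ∫ x in c..y, ph f t x) c d :=
    (ph_int h t).intervalIntegrable.absolutelyContinuousOnInterval_intervalIntegral (by simp)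
  rw [absolutelyContinuousOnInterval_iff] at h1 ⊢
  intro ε hε
  obtain ⟨δ, hδ, H⟩ := h1 (G f t c * ε) (by positivity)
  refine ⟨δ, hδ, fun E hE hE2 => ?_⟩
  have H2 := H E hE hE2
  have key : ∀ a b, c ≤ a → c ≤ b → a ≤ b →
      G f t c * dist (Real.log (G f t a)) (Real.log (G f t b)) ≤
        dist (∫ x in c..a, ph f t x) (∫ x in c..b, ph f t x) := by
    intro a b ha hb hab
    have hGa : G f t c ≤ G f t a := G_mono h t ha
    have hGb : G f t a ≤ G f t b := G_mono h t hab
    have hpa : 0 < G f t a := hc.trans_le hGa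
    have hl := Real.log_le_log hpa hGb
    have e1 := G_sub h t c a
    have e2 := G_sub h t c b
    rw [dist_comm, Real.dist_eq, abs_of_nonneg (by linarith), dist_comm, Real.dist_eq,
      abs_of_nonneg (by linarith)]
    have h3 := Real.log_le_sub_one_of_pos (div_pos (hpa.trans_le hGb) hpa)
    rw [Real.log_div (hpa.trans_le hGb).ne' hpa.ne'] at h3
    have h4 : G f t a * (Real.log (G f t b) - Real.log (G f t a)) ≤ G f t b - G f t a := by
      refine (mul_le_mul_of_nonneg_left h3 hpa.le).trans (le_of_eq ?_)
      field_simp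
    nlinarith
  have hsum : G f t c * ∑ i ∈ Finset.range E.1,
      dist (Real.log (G f t (E.2 i).1)) (Real.log (G f t (E.2 i).2)) ≤
      ∑ i ∈ Finset.range E.1, dist (∫ x in c..(E.2 i).1, ph f t x) (∫ x in c..(E.2 i).2, ph f t x) := by
    rw [Finset.mul_sum]
    refine Finset.sum_le_sum fun i hi => ?_
    have hm := hE.1 i hi
    rw [uIcc_of_le hcd] at hm
    rcases le_total (E.2 i).1 (E.2 i).2 with hle | hle
    · exact key _ _ hm.1.1 hm.2.1 hle
    · rw [dist_comm, dist_comm (∫ x in c..(E.2 i).1, ph f t x)]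
      exact key _ _ hm.2.1 hm.1.1 hle
  exact lt_of_mul_lt_mul_left (hsum.trans_lt H2) hc.le

lemma r_int (h : Good f) (t : ℝ) {c : ℝ} (hc : 0 < G f t c) :
    IntegrableOn (fun u => ph f t u / G f t u) (Ioi c) := by
  refine Integrable.mono' ((ph_int h t).integrableOn.const_mul (G f t c)⁻¹)
    ((ph_int h t).1.restrict.aemeasurable.div (G_meas h t).aemeasurable).aestronglyMeasurable ?_
  filter_upwards [ae_restrict_mem measurableSet_Ioi] with u hu
  have hu : c < u := hu
  have := G_mono h t hu.le
  have h0 := ph_nn h t u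
  rw [Real.norm_of_nonneg (div_nonneg h0 (G_nn h t u)), ← div_eq_inv_mul]
  gcongr

lemma G_tendsto (h : Good f) (t : ℝ) : Tendsto (G f t) atTop (𝓝 (∫ x, ph f t x)) :=
  (aecover_Iic tendsto_id).integral_tendsto_of_countably_generated (ph_int h t)

lemma r_integral (h : Good f) (t : ℝ) {c : ℝ} (hc : 0 < G f t c) :
    ∫ u in Ioi c, ph f t u / G f t u = Real.log (∫ x, ph f t x) - Real.log (G f t c) := by
  have h1 := intervalIntegral_tendsto_integral_Ioi c (r_int h t hc) tendsto_id
  have hpos : 0 < ∫ x, ph f t x := hc.trans_le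
    (setIntegral_le_integral (ph_int h t) (ae_of_all _ fun x => ph_nn h t x))
  have h2 : Tendsto (fun d => Real.log (G f t d) - Real.log (G f t c)) atTop
      (𝓝 (Real.log (∫ x, ph f t x) - Real.log (G f t c))) :=
    ((G_tendsto h t).log hpos.ne').sub_const _
  refine tendsto_nhds_unique h1 (h2.congr' ?_)
  filter_upwards [eventually_ge_atTop c] with d hd
  rw [← (logG_ac h t hd hc).integral_deriv_eq_sub]
  refine intervalIntegral.integral_congr_ae ?_
  filter_upwards [G_ae_deriv h t] with u hu hmem
  simp only [id, uIoc_of_le hd] at hmem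
  have hGu : 0 < G f t u := hc.trans_le (G_mono h t hmem.1.le)
  exact (hu.log hGu.ne').deriv

lemma logG_eq {t : ℝ} (ht : 0 < t) {y : ℝ} (hG : G f t y ≠ 0) :
    Real.log (G f t y) = Real.log (g f t y) + Real.log t + t⁻¹ * y := by
  unfold g
  have := ht.ne'
  rw [Real.log_mul (by positivity) hG, Real.log_mul (by positivity) (by positivity), Real.log_exp,
    Real.log_inv]
  ring

lemma d_zero (h : Good f) {t : ℝ} (ht : 0 < t) {y : ℝ} (hG : G f t y = 0) :
    t⁻¹ * (g f t y - q f t y) = 0 := by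
  rw [(g_eq_zero ht).2 hG, q_zero h hG]; simp

lemma dlogG_int (h : Good f) {t : ℝ} (ht : 0 < t) :
    Integrable (fun y => t⁻¹ * (g f t y - q f t y) * Real.log (G f t y)) := by
  refine ((((dlog_int h ht).const_mul t⁻¹).add ((d_int h ht).mul_const (Real.log t))).add
    ((yd_int h ht).const_mul t⁻¹)).congr (ae_of_all _ fun y => ?_)
  simp only [Pi.add_apply]
  by_cases hG : G f t y = 0
  · have := d_zero h ht hG
    rw [this, ← mul_assoc, this]; simp
  · rw [logG_eq ht hG]; ring

lemma fubini (h : Good f) {t : ℝ} (ht : 0 < t) :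
    ∫ y, t⁻¹ * (g f t y - q f t y) * Real.log (G f t y) =
      -∫ u, ph f t u / G f t u * q f t u := by
  set d : ℝ → ℝ := fun y => t⁻¹ * (g f t y - q f t y) with hd
  set r : ℝ → ℝ := fun u => ph f t u / G f t u with hr
  set L := Real.log (∫ x, ph f t x) with hL
  have hrnn : ∀ u, 0 ≤ r u := fun u => div_nonneg (ph_nn h t u) (G_nn h t u)
  have hdint : Integrable d := d_int h ht
  have hdl : Integrable (fun y => d y * (L - Real.log (G f t y))) := by
    refine ((hdint.mul_const L).sub (dlogG_int h ht)).congr (ae_of_all _ fun y => ?_)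
    simp only [Pi.sub_apply, hd]; ring
  have hrm : AEStronglyMeasurable r volume :=
    ((ph_int h t).1.aemeasurable.div (G_meas h t).aemeasurable).aestronglyMeasurable
  have inner : ∀ y, ∫ u, d y * (Ioi y).indicator r u = d y * (L - Real.log (G f t y)) := by
    intro y
    rw [integral_const_mul, integral_indicator measurableSet_Ioi]
    by_cases hG : G f t y = 0
    · have : d y = 0 := d_zero h ht hG
      simp [this]
    · rw [r_integral h t (lt_of_le_of_ne (G_nn h t y) (Ne.symm hG))]
  have hdnorm : ∀ y u, ‖d y * (Ioi y).indicator r u‖ = |d y| * (Ioi y).indicator r u := by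
    intro y u
    rw [norm_mul, Real.norm_eq_abs, Real.norm_of_nonneg (indicator_nonneg (fun u _ => hrnn u) u)]
  have hmeas : AEStronglyMeasurable (fun z : ℝ × ℝ => d z.1 * (Ioi z.1).indicator r z.2)
      (volume.prod volume) := by
    have e : (fun z : ℝ × ℝ => d z.1 * (Ioi z.1).indicator r z.2) =
        {z : ℝ × ℝ | z.1 < z.2}.indicator (fun z => d z.1 * r z.2) := by
      ext z
      by_cases hz : z.1 < z.2
      · rw [indicator_of_mem (by exact hz), indicator_of_mem (by exact hz)]
      · rw [indicator_of_notMem (by exact hz), indicator_of_notMem (by exact hz), mul_zero]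
    rw [e]
    exact (hdint.1.comp_fst.mul hrm.comp_snd).indicator (measurableSet_lt measurable_fst measurable_snd)
  have hint : Integrable (Function.uncurry fun y u => d y * (Ioi y).indicator r u)
      (volume.prod volume) := by
    refine (integrable_prod_iff hmeas).2 ⟨ae_of_all _ fun y => ?_, ?_⟩
    · by_cases hG : G f t y = 0
      · have : d y = 0 := d_zero h ht hG
        simp [this]
      · have h5 : Integrable ((Ioi y).indicator r) := ((integrable_indicator_iff measurableSet_Ioi).2
          (r_int h t (lt_of_le_of_ne (G_nn h t y) (Ne.symm hG))))
        exact h5.const_mul (d y)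
    · refine hdl.norm.congr (ae_of_all _ fun y => ?_)
      simp only [hdnorm]
      rw [← inner y, integral_const_mul, integral_const_mul, norm_mul, Real.norm_eq_abs,
        Real.norm_of_nonneg (integral_nonneg (indicator_nonneg (fun u _ => hrnn u)))]
  have hsw := integral_integral_swap hint
  simp only [inner] at hsw
  have h2 : ∀ u, ∫ y, d y * (Ioi y).indicator r u = r u * q f t u := by
    intro u
    have e : (fun y => d y * (Ioi y).indicator r u) = (Iio u).indicator (fun y => r u * d y) := by
      ext y
      by_cases hz : y < u
      · rw [indicator_of_mem (by exact hz), indicator_of_mem (by exact hz), mul_comm]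
      · rw [indicator_of_notMem (by exact hz), indicator_of_notMem (by exact hz), mul_zero]
    rw [e, integral_indicator measurableSet_Iio, ← integral_Iic_eq_integral_Iio, integral_const_mul,
      integral_Iic_of_hasDerivAt_of_tendsto' (fun y _ => q_hasDerivAt h t y) hdint.integrableOn
        (m := 0), sub_zero]
    refine tendsto_const_nhds.congr' ?_
    filter_upwards [eventually_lt_atBot 0] with y hy
    exact (q_neg h t y hy).symm
  simp only [h2] at hsw
  have h3 : ∫ y, d y * (L - Real.log (G f t y)) = -∫ y, d y * Real.log (G f t y) := by
    have hd0 : ∫ y, d y = 0 := d_integral h ht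
    simp only [mul_sub]
    rw [integral_sub (hdint.mul_const L) (dlogG_int h ht), integral_mul_const, hd0, zero_mul,
      zero_sub]
  rw [h3] at hsw
  linarith

lemma fm_int (h : Good f) (t : ℝ) : Integrable (fun y => f y * (K f t y / G f t y)) := by
  refine (xf_int h).mono' ((f_int h).1.mul
    ((K_meas h t).div (G_meas h t)).aestronglyMeasurable) (ae_of_all _ fun y => ?_)
  have hK := K_nn h t y
  have hG := G_nn h t y
  have hf := h.nn y
  rw [Real.norm_of_nonneg (by positivity)]
  rcases lt_or_ge y 0 with hy | hy
  · simp [h.supp y hy]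
  · rw [mul_comm y]
    gcongr
    exact div_le_of_le_mul₀ hG hy (K_le h t y)

lemma rq_integral (h : Good f) {t : ℝ} (ht : 0 < t) :
    ∫ u, ph f t u / G f t u * q f t u =
      t⁻¹ ^ 2 * ((∫ x, x * f x) - ∫ y, f y * (K f t y / G f t y)) := by
  rw [← integral_sub (xf_int h) (fm_int h t), ← integral_const_mul]
  refine integral_congr_ae ?_
  filter_upwards [ph_ae_zero h t] with y hy
  by_cases hG : G f t y = 0
  · simp [hy hG, ph]
  · unfold ph q
    have : Real.exp (-(t⁻¹ * y)) = (Real.exp (t⁻¹ * y))⁻¹ := Real.exp_neg _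
    rw [this]
    have := (Real.exp_pos (t⁻¹ * y)).ne'
    field_simp

lemma deriv_value (h : Good f) {t : ℝ} (ht : 0 < t) :
    ∫ y, t⁻¹ * (q f t y - g f t y) * (Real.log (g f t y) + 1) =
      -(t⁻¹ - t⁻¹ ^ 2 * ((∫ x, x * f x) - ∫ y, f y * (K f t y / G f t y))) := by
  have e : ∀ y, t⁻¹ * (q f t y - g f t y) * (Real.log (g f t y) + 1) =
      (t⁻¹ * (g f t y - q f t y)) * (Real.log t - 1) + t⁻¹ * (y * (t⁻¹ * (g f t y - q f t y)))
        - t⁻¹ * (g f t y - q f t y) * Real.log (G f t y) := by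
    intro y
    by_cases hG : G f t y = 0
    · rw [(g_eq_zero ht).2 hG, q_zero h hG]; simp
    · rw [logG_eq ht hG]; ring
  simp only [e]
  rw [integral_sub, integral_add, integral_mul_const, d_integral h ht, integral_const_mul,
    yd_integral h ht, fubini h ht, rq_integral h ht]
  · ring
  · exact (d_int h ht).mul_const _
  · exact (yd_int h ht).const_mul _
  · exact ((d_int h ht).mul_const _).add ((yd_int h ht).const_mul _)
  · exact dlogG_int h ht

end EntropyExp

/-- **Entropy derivative for exponential noise.** For a nonnegative `X` with
bounded density and existing moment generating function, and independent unit
exponential noise `W`, `d/da h(Y) = (1/(2a√a))·(√a − E[X] + ∫ f_X(y) m(y;a) dy)`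
where `m` is the posterior mean of `X` given `Y = y`. -/
theorem entropy_derivative_exponential_noise
    (fX fW : ℝ → ℝ)
    (hfX_nonneg : ∀ x, 0 ≤ fX x) (hfX_prob : (∫ x, fX x) = 1)
    (hfX_supp : ∀ x, x < 0 → fX x = 0)
    (hfX_bdd : ∃ B, ∀ x, fX x ≤ B)
    (hfX_mgf : ∀ s : ℝ, Integrable (fun x => Real.exp (s * x) * fX x))
    (hfW : ∀ w, fW w = if 0 ≤ w then Real.exp (-w) else 0)
    (p : ℝ → ℝ → ℝ → ℝ)
    (hp : ∀ y x b, p y x b = (Real.sqrt b)⁻¹ * fW ((y - x) / Real.sqrt b))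
    (fY : ℝ → ℝ → ℝ)
    (hfY : ∀ b y, fY b y = ∫ x, fX x * p y x b)
    (a : ℝ) (ha : 0 < a)
    (m : ℝ → ℝ)
    (hm : ∀ y, m y = (∫ x, x * fX x * p y x a) / fY a y) :
    HasDerivAt (fun b => -∫ y, fY b y * Real.log (fY b y))
      ((1 / (2 * a * Real.sqrt a)) *
        (Real.sqrt a - (∫ x, x * fX x) + ∫ y, fX y * m y)) a := by
  have h : EntropyExp.Good fX := ⟨hfX_nonneg, hfX_supp, hfX_mgf, hfX_prob⟩
  have hpk : ∀ b, 0 < b → ∀ y x, p y x b = EntropyExp.ker (Real.sqrt b) (y - x) := by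
    intro b hb y x
    have hs : 0 < Real.sqrt b := Real.sqrt_pos.2 hb
    rw [hp, hfW, EntropyExp.ker]
    by_cases hx : 0 ≤ y - x
    · rw [if_pos (by positivity), indicator_of_mem (by exact hx), div_eq_inv_mul]
      ring_nf
    · rw [if_neg, indicator_of_notMem (by exact hx), mul_zero]
      exact not_le.2 (div_neg_of_neg_of_pos (not_le.1 hx) hs)
  have hfYg : ∀ b, 0 < b → ∀ y, fY b y = EntropyExp.g fX (Real.sqrt b) y := by
    intro b hb y
    rw [hfY, EntropyExp.g_eq_ker]
    simp only [hpk b hb]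
  have hs : 0 < Real.sqrt a := Real.sqrt_pos.2 ha
  have hmm : ∀ y, m y = EntropyExp.K fX (Real.sqrt a) y / EntropyExp.G fX (Real.sqrt a) y := by
    intro y
    rw [hm, hfYg a ha]
    simp only [hpk a ha]
    rw [← EntropyExp.K_eq_ker, EntropyExp.g, mul_div_mul_left]
    positivity
  have h1 := (((EntropyExp.leibniz h hs).comp a (Real.hasDerivAt_sqrt ha.ne')).neg).congr_of_eventuallyEq
    (f₁ := fun b => -∫ y, fY b y * Real.log (fY b y)) (by
      filter_upwards [Ioi_mem_nhds ha] with b hb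
      simp only [Function.comp, Pi.neg_apply, hfYg b hb])
  refine h1.congr_deriv ?_
  rw [EntropyExp.deriv_value h hs]
  simp only [hmm]
  have ha2 : a = Real.sqrt a ^ 2 := (Real.sq_sqrt ha.le).symm
  generalize Real.sqrt a = t at *
  subst ha2
  field_simp
  ring
end

section
/- (Entropy derivative for gamma noise) Let X be a nonnegative real random variable whose moment generating function exists and whose density is f_X, and let W be an independent Gamma(α,1) random variable with α ≥ 2, i.e. f_W(w) = w^{α−1} e^{−w}/Γ(α) for w ≥ 0. For a > 0 and shape parameter k ≥ 1 let f_{Y_k}(y;a) = ∫ f_X(x) a^{−1/2} g_k((y−x)/√a) dx, where g_k(w) = w^{k−1} e^{−w}/Γ(k) for w ≥ 0, be the output density when the noise has shape k, and write f_Y = f_{Y_α}. Then the differential entropy h(a) = −∫ f_Y(y;a) log f_Y(y;a) dy satisfies d/da h(a) = (1/(2a√a)) · ( √a − E[X] + ∫ f_{Y_{α−1}}(y;a) m(y;a) dy ), where m(y;a) = ∫ x f_X(x) a^{−1/2} g_α((y−x)/√a) dx / f_Y(y;a) is the posterior mean of X given Y = y. -/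
open MeasureTheory Filter

namespace GammaNoise

/-- The unnormalised gamma kernel. -/
noncomputable def Ker (k s u : ℝ) : ℝ :=
  if 0 ≤ u then u ^ (k - 1) * Real.exp (-(s * u)) else 0

/-- The unnormalised output density. -/
noncomputable def Phi (f : ℝ → ℝ) (k s y : ℝ) : ℝ := ∫ x, f x * Ker k s (y - x)

structure IsD (f : ℝ → ℝ) : Prop where
  nn : ∀ x, 0 ≤ f x
  supp : ∀ x, x < 0 → f x = 0
  mgf : ∀ s : ℝ, Integrable (fun x => Real.exp (s * x) * f x)

lemma IsD.int {f : ℝ → ℝ} (hf : IsD f) : Integrable f := by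
  simpa using hf.mgf 0

lemma IsD.int_mul {f : ℝ → ℝ} (hf : IsD f) : Integrable (fun x => x * f x) := by
  refine (hf.mgf 1).mono' (measurable_id.aestronglyMeasurable.mul hf.int.aestronglyMeasurable) ?_
  refine Eventually.of_forall fun x => ?_
  rcases lt_or_ge x 0 with hx | hx
  · simp [hf.supp x hx]
  · have h1 : x ≤ Real.exp (1 * x) := by linarith [Real.add_one_le_exp (1 * x)]
    have := hf.nn x
    rw [Real.norm_eq_abs, abs_of_nonneg (mul_nonneg hx this)]
    exact mul_le_mul_of_nonneg_right h1 this

lemma Ker_nonneg (k s u : ℝ) : 0 ≤ Ker k s u := by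
  unfold Ker; split_ifs with h
  · positivity
  · exact le_rfl

lemma Ker_meas (k s : ℝ) : Measurable (Ker k s) := by
  unfold Ker
  refine Measurable.ite measurableSet_Ici ?_ measurable_const
  fun_prop

lemma Ker_bound {k δ : ℝ} (hk : 1 ≤ k) (hδ : 0 < δ) :
    ∃ C, 0 ≤ C ∧ ∀ s u, Ker k s u ≤ C * Real.exp (-((s - δ) * u)) := by
  have hp : 0 ≤ k - 1 := by linarith
  refine ⟨((k - 1) / δ) ^ (k - 1), by positivity, fun s u => ?_⟩
  unfold Ker; split_ifs with h
  · have h1 := ProbabilityTheory.rpow_abs_le_mul_max_exp u hp hδ.ne'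
    rw [abs_of_nonneg h, abs_of_pos hδ, max_eq_left
      (Real.exp_le_exp.2 (by nlinarith))] at h1
    calc _ ≤ ((k - 1) / δ) ^ (k - 1) * Real.exp (δ * u) * Real.exp (-(s * u)) := by gcongr
      _ = _ := by rw [mul_assoc, ← Real.exp_add]; ring_nf
  · positivity

lemma Ker_bdd {k s : ℝ} (hk : 1 ≤ k) (hs : 0 < s) :
    ∃ C, 0 ≤ C ∧ ∀ s' u, s ≤ s' → Ker k s' u ≤ C := by
  obtain ⟨C, hC, h⟩ := Ker_bound hk hs
  refine ⟨C, hC, fun s' u hs' => ?_⟩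
  by_cases hu : 0 ≤ u
  · refine (h s' u).trans (mul_le_of_le_one_right hC ?_)
    rw [Real.exp_le_one_iff]
    nlinarith
  · simpa [Ker, hu] using hC

lemma Ker_anti {k s s' u : ℝ} (h : s ≤ s') : Ker k s' u ≤ Ker k s u := by
  unfold Ker; split_ifs with hu
  · gcongr
  · exact le_rfl

lemma Ker_succ {k s u : ℝ} (hk : 1 ≤ k) : Ker (k + 1) s u = u * Ker k s u := by
  unfold Ker; split_ifs with hu
  · rcases hu.eq_or_lt with rfl | h
    · rw [Real.zero_rpow (by linarith)]; ring
    · rw [show k + 1 - 1 = (k - 1) + 1 by ring, Real.rpow_add_one h.ne']; ring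
  · simp

lemma Ker_pos {k s u : ℝ} (hu : 0 < u) : 0 < Ker k s u := by
  unfold Ker; rw [if_pos hu.le]; positivity

lemma Ker_int {k s : ℝ} (hk : 1 ≤ k) (hs : 0 < s) :
    ∫ u, Ker k s u = (1 / s) ^ k * Real.Gamma k := by
  rw [← Real.integral_rpow_mul_exp_neg_mul_Ioi (by linarith) hs, ← integral_Ici_eq_integral_Ioi,
    ← integral_indicator measurableSet_Ici]
  rfl

lemma Ker_integrable {k s : ℝ} (hk : 1 ≤ k) (hs : 0 < s) : Integrable (Ker k s) := by
  apply Integrable.of_integral_ne_zero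
  rw [Ker_int hk hs]
  have := Real.Gamma_pos_of_pos (show 0 < k by linarith)
  positivity

lemma exp_deriv (s u : ℝ) :
    HasDerivAt (fun v => Real.exp (-(s * v))) (Real.exp (-(s * u)) * (-s)) u := by
  have h : HasDerivAt (fun v => -(s * v)) (-(s * 1)) u := ((hasDerivAt_id u).const_mul s).neg
  rw [mul_one] at h
  exact h.exp

/-- derivative of the kernel in `u`, away from zero -/
lemma Ker_deriv {k s u : ℝ} (hk : 2 ≤ k) (hu : u ≠ 0) :
    HasDerivAt (Ker k s) ((k - 1) * Ker (k - 1) s u - s * Ker k s u) u := by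
  rcases lt_or_gt_of_ne hu with h | h
  · have : Ker k s =ᶠ[nhds u] fun _ => 0 := by
      filter_upwards [Iio_mem_nhds h] with v hv
      simp [Ker, not_le.2 (Set.mem_Iio.1 hv)]
    simp only [Ker, not_le.2 h, if_false, mul_zero, sub_zero]
    exact (hasDerivAt_const u (0:ℝ)).congr_of_eventuallyEq this
  · have : Ker k s =ᶠ[nhds u] fun v => v ^ (k - 1) * Real.exp (-(s * v)) := by
      filter_upwards [Ioi_mem_nhds h] with v hv
      simp [Ker, (le_of_lt (Set.mem_Ioi.1 hv))]
    refine HasDerivAt.congr_of_eventuallyEq ?_ this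
    simp only [Ker, h.le, if_true]
    have h1 := Real.hasDerivAt_rpow_const (x := u) (p := k - 1) (Or.inl hu)
    have h2 := exp_deriv s u
    refine (h1.mul h2).congr_deriv ?_
    ring

lemma Ker_lip {k s : ℝ} (hk : 2 ≤ k) (hs : 0 < s) :
    ∃ C, 0 ≤ C ∧ ∀ u v, |Ker k s u - Ker k s v| ≤ C * |u - v| := by
  obtain ⟨C1, hC1, h1⟩ := Ker_bdd (show 1 ≤ k - 1 by linarith) hs
  obtain ⟨C2, hC2, h2⟩ := Ker_bdd (show 1 ≤ k by linarith) hs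
  have hC : 0 ≤ (k - 1) * C1 + s * C2 := by
    have : 0 ≤ k - 1 := by linarith
    positivity
  refine ⟨(k - 1) * C1 + s * C2, hC, fun u v => ?_⟩
  have hmax : ∀ w, Ker k s w = (max w 0) ^ (k - 1) * Real.exp (-(s * max w 0)) := by
    intro w
    unfold Ker; split_ifs with h
    · rw [max_eq_left h]
    · rw [max_eq_right (le_of_not_ge h), Real.zero_rpow (by linarith)]; simp
  have key := Convex.norm_image_sub_le_of_norm_hasDerivWithin_le
    (f := fun v : ℝ => v ^ (k - 1) * Real.exp (-(s * v)))
    (f' := fun v : ℝ => (k - 1) * Ker (k - 1) s v - s * Ker k s v)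
    (s := Set.Ici 0) (x := max v 0) (y := max u 0) (C := (k - 1) * C1 + s * C2)
    (fun w hw => ?_) (fun w hw => ?_) (convex_Ici 0) (Set.mem_Ici.2 (le_max_right _ _)) (Set.mem_Ici.2 (le_max_right _ _))
  · rw [hmax u, hmax v]
    refine key.trans (mul_le_mul_of_nonneg_left ?_ hC)
    exact abs_max_sub_max_le_abs u v 0
  · apply HasDerivAt.hasDerivWithinAt
    have hw' : 0 ≤ w := hw
    simp only [Ker, hw', if_true]
    have h1 := Real.hasDerivAt_rpow_const (x := w) (p := k - 1) (Or.inr (by linarith))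
    have h2 := exp_deriv s w
    refine (h1.mul h2).congr_deriv ?_
    ring
  · have a1 := h1 s w le_rfl
    have a2 := h2 s w le_rfl
    have b1 := Ker_nonneg (k - 1) s w
    have b2 := Ker_nonneg k s w
    have hk1 : 0 ≤ k - 1 := by linarith
    rw [Real.norm_eq_abs, abs_le]
    constructor <;> nlinarith [mul_le_mul_of_nonneg_left a1 hk1, mul_le_mul_of_nonneg_left a2 hs.le,
      mul_nonneg hk1 b1, mul_nonneg hs.le b2]

lemma Ker_deriv_s {k s u : ℝ} (hk : 1 ≤ k) :
    HasDerivAt (fun s => Ker k s u) (-Ker (k + 1) s u) s := by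
  rw [Ker_succ hk]
  unfold Ker; split_ifs with h
  · have h2 := (exp_deriv u s).const_mul (u ^ (k - 1))
    simp only [mul_comm u] at h2
    exact h2.congr_deriv (by ring)
  · simpa using hasDerivAt_const s (0:ℝ)

section
variable {f : ℝ → ℝ}

lemma shift_meas (k s y : ℝ) : Measurable (fun x => Ker k s (y - x)) :=
  (Ker_meas k s).comp (measurable_const.sub measurable_id)

lemma Phi_integrand (hf : Integrable f) {k s : ℝ} (hk : 1 ≤ k) (hs : 0 < s) (y : ℝ) :
    Integrable (fun x => f x * Ker k s (y - x)) := by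
  obtain ⟨C, hC, h⟩ := Ker_bdd hk hs
  refine hf.mul_bdd (c := C) (shift_meas k s y).aestronglyMeasurable ?_
  refine Eventually.of_forall fun x => ?_
  rw [Real.norm_eq_abs, abs_of_nonneg (Ker_nonneg _ _ _)]
  exact h s _ le_rfl

lemma Phi_nonneg (hf : IsD f) (k s y : ℝ) : 0 ≤ Phi f k s y :=
  integral_nonneg fun x => mul_nonneg (hf.nn x) (Ker_nonneg _ _ _)

lemma Phi_neg (hf : IsD f) (k s : ℝ) {y : ℝ} (hy : y < 0) : Phi f k s y = 0 := by
  unfold Phi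
  rw [← integral_zero ℝ ℝ]
  congr 1
  ext x
  rcases lt_or_ge x 0 with hx | hx
  · simp [hf.supp x hx]
  · have : ¬ (0 ≤ y - x) := by linarith
    simp [Ker, this]

lemma Phi_anti (hf : IsD f) {k s s' : ℝ} (hk : 1 ≤ k) (hs : 0 < s) (h : s ≤ s') (y : ℝ) :
    Phi f k s' y ≤ Phi f k s y :=
  integral_mono (Phi_integrand hf.int hk (hs.trans_le h) y) (Phi_integrand hf.int hk hs y)
    fun x => mul_le_mul_of_nonneg_left (Ker_anti h) (hf.nn x)

lemma Phi_bound (hf : IsD f) {k s : ℝ} (hk : 1 ≤ k) (hs : 0 < s) :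
    ∃ A, 0 ≤ A ∧ ∀ y, Phi f k s y ≤ A * Real.exp (-(s / 2 * y)) := by
  obtain ⟨C, hC, h⟩ := Ker_bound hk (half_pos hs)
  refine ⟨C * ∫ x, Real.exp (s / 2 * x) * f x,
    mul_nonneg hC (integral_nonneg fun x => mul_nonneg (Real.exp_pos _).le (hf.nn x)), fun y => ?_⟩
  have : C * (∫ x, Real.exp (s / 2 * x) * f x) * Real.exp (-(s / 2 * y))
      = ∫ x, C * Real.exp (-(s / 2 * y)) * (Real.exp (s / 2 * x) * f x) := by
    rw [integral_const_mul]; ring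
  rw [this]
  refine integral_mono (Phi_integrand hf.int hk hs y) ((hf.mgf _).const_mul _) fun x => ?_
  have h1 := mul_le_mul_of_nonneg_left (h s (y - x)) (hf.nn x)
  refine h1.trans (le_of_eq ?_)
  have : Real.exp (-((s - s / 2) * (y - x))) = Real.exp (-(s / 2 * y)) * Real.exp (s / 2 * x) := by
    rw [← Real.exp_add]; ring_nf
  rw [this]; ring

lemma Phi_deriv (hf : IsD f) {k s : ℝ} (hk : 2 ≤ k) (hs : 0 < s) (y : ℝ) :
    HasDerivAt (Phi f k s) ((k - 1) * Phi f (k - 1) s y - s * Phi f k s y) y := by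
  obtain ⟨C, hC, h⟩ := Ker_lip hk hs
  have i1 := Phi_integrand hf.int (show 1 ≤ k - 1 by linarith) hs y
  have i2 := Phi_integrand hf.int (show 1 ≤ k by linarith) hs y
  have e : (k - 1) * Phi f (k - 1) s y - s * Phi f k s y
      = ∫ x, ((k - 1) * (f x * Ker (k - 1) s (y - x)) - s * (f x * Ker k s (y - x))) := by
    rw [integral_sub (i1.const_mul _) (i2.const_mul _), integral_const_mul, integral_const_mul]
    rfl
  rw [e]
  refine (hasDerivAt_integral_of_dominated_loc_of_lip (F := fun y x => f x * Ker k s (y - x))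
    (bound := fun x => f x * C) (s := Set.univ) univ_mem ?_ i2 ?_ ?_ ?_ ?_).2
  · exact Eventually.of_forall fun z =>
      (Phi_integrand hf.int (show 1 ≤ k by linarith) hs z).aestronglyMeasurable
  · exact ((i1.const_mul _).sub (i2.const_mul _)).aestronglyMeasurable
  · refine Eventually.of_forall fun x => LipschitzOnWith.of_dist_le_mul fun u _ v _ => ?_
    have hx := hf.nn x
    rw [Real.dist_eq, Real.dist_eq, ← mul_sub, abs_mul, abs_of_nonneg hx, Real.coe_nnabs,
      abs_of_nonneg (mul_nonneg hx hC), mul_assoc]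
    refine mul_le_mul_of_nonneg_left ?_ hx
    simpa using h (u - x) (v - x)
  · exact hf.int.mul_const C
  · have : ∀ᵐ x : ℝ, x ≠ y := by simp [ae_iff]
    filter_upwards [this] with x hx
    have h1 := ((Ker_deriv (s := s) hk (sub_ne_zero.2 hx.symm)).comp_sub_const y x).const_mul (f x)
    exact h1.congr_deriv (by ring)

lemma Phi_cont (hf : IsD f) {k s : ℝ} (hk : 2 ≤ k) (hs : 0 < s) : Continuous (Phi f k s) :=
  continuous_iff_continuousAt.2 fun y => (Phi_deriv hf hk hs y).continuousAt

lemma Phi_deriv_s (hf : IsD f) {k s : ℝ} (hk : 1 ≤ k) (hs : 0 < s) (y : ℝ) :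
    HasDerivAt (fun s => Phi f k s y) (-Phi f (k + 1) s y) s := by
  have hk' : 1 ≤ k + 1 := by linarith
  obtain ⟨C, hC, h⟩ := Ker_bdd hk' (half_pos hs)
  have i1 := Phi_integrand hf.int hk hs y
  have i2 := Phi_integrand hf.int hk' hs y
  have e : -Phi f (k + 1) s y = ∫ x, -(f x * Ker (k + 1) s (y - x)) := by
    rw [integral_neg]; rfl
  rw [e]
  have hU : Set.Ioi (s / 2) ∈ nhds s := Ioi_mem_nhds (by linarith)
  refine (hasDerivAt_integral_of_dominated_loc_of_deriv_le (F := fun s x => f x * Ker k s (y - x))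
    (F' := fun s x => -(f x * Ker (k + 1) s (y - x)))
    (bound := fun x => f x * C) hU ?_ i1 ?_ ?_ ?_ ?_).2
  · filter_upwards [hU] with z hz
    exact (Phi_integrand hf.int hk ((half_pos hs).trans hz) y).aestronglyMeasurable
  · exact i2.neg.aestronglyMeasurable
  · refine Eventually.of_forall fun x z hz => ?_
    rw [norm_neg, Real.norm_eq_abs, abs_of_nonneg (mul_nonneg (hf.nn x) (Ker_nonneg _ _ _))]
    exact mul_le_mul_of_nonneg_left (h z _ (le_of_lt hz)) (hf.nn x)
  · exact hf.int.mul_const C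
  · refine Eventually.of_forall fun x z hz => ?_
    exact ((Ker_deriv_s (s := z) (u := y - x) hk).const_mul (f x)).congr_deriv (by ring)

lemma Phi_succ (hf : IsD f) {k s : ℝ} (hk : 1 ≤ k) (hs : 0 < s) (y : ℝ) :
    Phi f (k + 1) s y = y * Phi f k s y - Phi (fun x => x * f x) k s y := by
  unfold Phi
  rw [← integral_const_mul, ← integral_sub ((Phi_integrand hf.int hk hs y).const_mul _)
    (Phi_integrand hf.int_mul hk hs y)]
  congr 1
  ext x
  rw [Ker_succ hk]; ring

lemma PhiN_nonneg (hf : IsD f) (k s y : ℝ) : 0 ≤ Phi (fun x => x * f x) k s y := by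
  refine integral_nonneg fun x => mul_nonneg ?_ (Ker_nonneg _ _ _)
  rcases lt_or_ge x 0 with hx | hx
  · simp [hf.supp x hx]
  · exact mul_nonneg hx (hf.nn x)

lemma Phi_succ_le (hf : IsD f) {k s : ℝ} (hk : 1 ≤ k) (hs : 0 < s) (y : ℝ) :
    Phi f (k + 1) s y ≤ y * Phi f k s y := by
  rw [Phi_succ hf hk hs]; linarith [PhiN_nonneg hf k s y]

lemma Phi_zero_ae (hf : IsD f) {k s y : ℝ} (hk : 1 ≤ k) (hs : 0 < s) (h : Phi f k s y = 0) :
    ∀ᵐ x, x ≤ y → f x = 0 := by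
  have h1 := (integral_eq_zero_iff_of_nonneg
    (fun x => mul_nonneg (hf.nn x) (Ker_nonneg _ _ _)) (Phi_integrand hf.int hk hs y)).1 h
  have : ∀ᵐ x : ℝ, x ≠ y := by simp [ae_iff]
  filter_upwards [this, h1] with x hx h2 h3
  have : 0 < y - x := sub_pos.2 (lt_of_le_of_ne h3 hx)
  exact (mul_eq_zero.1 h2).resolve_right (Ker_pos this).ne'

lemma Phi_zero_of_ae {g : ℝ → ℝ} {y z : ℝ} (h : ∀ᵐ x, x ≤ y → g x = 0) (hz : z ≤ y) (k s : ℝ) :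
    Phi g k s z = 0 := by
  apply integral_eq_zero_of_ae
  filter_upwards [h] with x hx
  by_cases hxy : x ≤ z
  · simp [hx (hxy.trans hz)]
  · have : ¬ (0 ≤ z - x) := by linarith
    simp [Ker, this]

lemma Phi_conv (f : ℝ → ℝ) (k s : ℝ) :
    Phi f k s = convolution f (Ker k s) (ContinuousLinearMap.mul ℝ ℝ) volume := by
  ext y; rfl

lemma Phi_integrable (hf : Integrable f) {k s : ℝ} (hk : 1 ≤ k) (hs : 0 < s) :
    Integrable (Phi f k s) := by
  rw [Phi_conv]
  exact hf.integrable_convolution _ (Ker_integrable hk hs)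

lemma Phi_int (hf : Integrable f) {k s : ℝ} (hk : 1 ≤ k) (hs : 0 < s) :
    ∫ y, Phi f k s y = (∫ x, f x) * ((1 / s) ^ k * Real.Gamma k) := by
  rw [Phi_conv, integral_convolution _ hf (Ker_integrable hk hs), Ker_int hk hs]
  rfl

end

/-- Dominating function. -/
noncomputable def Bd (η y : ℝ) : ℝ := Ker 1 η y + Ker 2 η y

lemma Bd_nonneg (η y : ℝ) : 0 ≤ Bd η y := add_nonneg (Ker_nonneg _ _ _) (Ker_nonneg _ _ _)

lemma Bd_eq {η y : ℝ} (hy : 0 ≤ y) : Bd η y = (1 + y) * Real.exp (-(η * y)) := by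
  simp only [Bd, Ker, hy, if_true]
  norm_num
  ring

lemma Bd_integrable {η : ℝ} (hη : 0 < η) : Integrable (Bd η) :=
  (Ker_integrable le_rfl hη).add (Ker_integrable one_le_two hη)

lemma Ker_tendsto {k s : ℝ} (hk : 1 ≤ k) (hs : 0 < s) : Tendsto (Ker k s) atTop (nhds 0) := by
  obtain ⟨C, hC, h⟩ := Ker_bound hk (half_pos hs)
  have h1 : Tendsto (fun u : ℝ => C * Real.exp (-((s - s / 2) * u))) atTop (nhds (C * 0)) := by
    refine Tendsto.const_mul C (Real.tendsto_exp_neg_atTop_nhds_zero.comp ?_)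
    exact tendsto_id.const_mul_atTop (by linarith)
  rw [mul_zero] at h1
  exact squeeze_zero (fun u => Ker_nonneg k s u) (fun u => h s u) h1

lemma Bd_tendsto {η : ℝ} (hη : 0 < η) (D : ℝ) : Tendsto (fun y => D * Bd η y) atTop (nhds 0) := by
  have := ((Ker_tendsto le_rfl hη).add (Ker_tendsto one_le_two hη)).const_mul D
  simpa [Bd] using this

lemma dec_integrable {g : ℝ → ℝ} {D η : ℝ} (hη : 0 < η) (hm : AEStronglyMeasurable g)
    (h : ∀ y, |g y| ≤ D * Bd η y) : Integrable g :=
  ((Bd_integrable hη).const_mul D).mono' hm (Eventually.of_forall h)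

lemma dec_tendsto {g : ℝ → ℝ} {D η : ℝ} (hη : 0 < η)
    (h : ∀ y, |g y| ≤ D * Bd η y) : Tendsto g atTop (nhds 0) :=
  squeeze_zero_norm h (Bd_tendsto hη D)

lemma xlogx {x B : ℝ} (hx : 0 ≤ x) (hB : x ≤ B) :
    |x * (Real.log x + 1)| ≤ 3 * (B + 1) * √x := by
  rcases hx.eq_or_lt with rfl | hx
  · simp
  have hr : 0 < √x := Real.sqrt_pos.2 hx
  have hsq : √x * √x = x := Real.mul_self_sqrt hx.le
  have hl : Real.log x = 2 * Real.log √x := by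
    conv_lhs => rw [← hsq]
    rw [Real.log_mul hr.ne' hr.ne']; ring
  have h1 : Real.log √x ≤ √x - 1 := Real.log_le_sub_one_of_pos hr
  have h2 : 1 - (√x)⁻¹ ≤ Real.log √x := Real.one_sub_inv_le_log_of_pos hr
  set r := √x
  have h3 : r - 1 ≤ r * Real.log r := by
    have := mul_le_mul_of_nonneg_left h2 hr.le
    rwa [mul_sub, mul_one, mul_inv_cancel₀ hr.ne'] at this
  have h4 : r * Real.log r ≤ r * (r - 1) := mul_le_mul_of_nonneg_left h1 hr.le
  have h5 : |r * (Real.log x + 1)| ≤ 3 * (B + 1) := by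
    rw [abs_le, hl]
    constructor <;> nlinarith [sq_nonneg (r - 1)]
  have h6 : x * (Real.log x + 1) = (r * (Real.log x + 1)) * r := by rw [← hsq]; ring
  rw [h6, abs_mul, abs_of_pos hr]
  exact mul_le_mul_of_nonneg_right h5 hr.le

section
variable {f : ℝ → ℝ}

/-- Normalised density. -/
noncomputable def Fd (f : ℝ → ℝ) (α s y : ℝ) : ℝ := s ^ α / Real.Gamma α * Phi f α s y

noncomputable def dF (f : ℝ → ℝ) (α s y : ℝ) : ℝ :=
  s ^ (α - 1) / Real.Gamma α * (α * Phi f α s y - s * Phi f (α + 1) s y)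

lemma cpos {α s : ℝ} (hα : 2 ≤ α) (hs : 0 < s) : 0 < s ^ α / Real.Gamma α := by
  have := Real.Gamma_pos_of_pos (show 0 < α by linarith)
  positivity

lemma Fd_nonneg (hf : IsD f) {α s : ℝ} (hα : 2 ≤ α) (hs : 0 < s) (y : ℝ) : 0 ≤ Fd f α s y :=
  mul_nonneg (cpos hα hs).le (Phi_nonneg hf _ _ _)

lemma Fd_cont (hf : IsD f) {α s : ℝ} (hα : 2 ≤ α) (hs : 0 < s) : Continuous (Fd f α s) :=
  continuous_const.mul (Phi_cont hf hα hs)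

lemma Fd_unif (hf : IsD f) {α s : ℝ} (hα : 2 ≤ α) (hs : 0 < s) :
    ∃ D, 0 ≤ D ∧ ∀ s', s / 2 < s' → s' < 2 * s → ∀ y, 0 ≤ y →
      (1 + y) * |Fd f α s' y * (Real.log (Fd f α s' y) + 1)| ≤ D * Bd (s / 8) y := by
  obtain ⟨A, hA, h⟩ := Phi_bound hf (show 1 ≤ α by linarith) (half_pos hs)
  have hG := Real.Gamma_pos_of_pos (show 0 < α by linarith)
  set A' := (2 * s) ^ α / Real.Gamma α * A with hA'
  have hA'0 : 0 ≤ A' := by positivity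
  refine ⟨3 * (A' + 1) * √A', by positivity, fun s' h1 h2 y hy => ?_⟩
  have hs' : 0 < s' := (half_pos hs).trans h1
  have hF : Fd f α s' y ≤ A' * Real.exp (-(s / 4 * y)) := by
    have a1 := (Phi_anti hf (show 1 ≤ α by linarith) (half_pos hs) h1.le y).trans (h y)
    have a2 : s' ^ α / Real.Gamma α ≤ (2 * s) ^ α / Real.Gamma α := by gcongr
    rw [hA', mul_assoc]
    refine mul_le_mul a2 (a1.trans (le_of_eq ?_)) (Phi_nonneg hf _ _ _) (by positivity)
    ring_nf
  have hF2 : Fd f α s' y ≤ A' := hF.trans (mul_le_of_le_one_right hA'0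
    (Real.exp_le_one_iff.2 (by nlinarith)))
  have hx := xlogx (Fd_nonneg hf hα hs' y) hF2
  have hsq : √(Fd f α s' y) ≤ √A' * Real.exp (-(s / 8 * y)) := by
    refine (Real.sqrt_le_sqrt hF).trans (le_of_eq ?_)
    rw [Real.sqrt_mul hA'0, show Real.exp (-(s / 4 * y)) = Real.exp (-(s / 8 * y)) ^ 2 by
      rw [← Real.exp_nat_mul]; congr 1; push_cast; ring, Real.sqrt_sq (Real.exp_pos _).le]
  rw [Bd_eq hy]
  calc _ ≤ (1 + y) * (3 * (A' + 1) * (√A' * Real.exp (-(s / 8 * y)))) := by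
        refine mul_le_mul_of_nonneg_left (hx.trans ?_) (by linarith)
        exact mul_le_mul_of_nonneg_left hsq (by positivity)
    _ = _ := by ring

lemma dF_le (hf : IsD f) {α s : ℝ} (hα : 2 ≤ α) (hs : 0 < s) {y : ℝ} (hy : 0 ≤ y) :
    |dF f α s y| ≤ (α / s + y) * Fd f α s y := by
  have e : dF f α s y = s ^ α / Real.Gamma α * (α / s * Phi f α s y - Phi f (α + 1) s y) := by
    unfold dF
    rw [Real.rpow_sub_one hs.ne']; field_simp
  have h1 := Phi_nonneg hf α s y
  have h2 := Phi_nonneg hf (α + 1) s y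
  have h3 := Phi_succ_le hf (show 1 ≤ α by linarith) hs y
  have h4 : 0 ≤ α / s * Phi f α s y := by positivity
  rw [e, abs_mul, abs_of_pos (cpos hα hs), Fd, mul_left_comm]
  refine mul_le_mul_of_nonneg_left ?_ (cpos hα hs).le
  rw [abs_le]
  constructor <;> nlinarith [mul_nonneg hy h1]

lemma dF_neg (hf : IsD f) (α s : ℝ) {y : ℝ} (hy : y < 0) : dF f α s y = 0 := by
  simp [dF, Phi_neg hf _ _ hy]

lemma dFlog_unif (hf : IsD f) {α s : ℝ} (hα : 2 ≤ α) (hs : 0 < s) :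
    ∃ D, 0 ≤ D ∧ ∀ s', s / 2 < s' → s' < 2 * s → ∀ y,
      |dF f α s' y * (Real.log (Fd f α s' y) + 1)| ≤ D * Bd (s / 8) y := by
  obtain ⟨D, hD, h⟩ := Fd_unif hf hα hs
  refine ⟨(2 * α / s + 1) * D, by positivity, fun s' h1 h2 y => ?_⟩
  have hs' : 0 < s' := (half_pos hs).trans h1
  rcases lt_or_ge y 0 with hy | hy
  · rw [dF_neg hf _ _ hy, zero_mul, abs_zero]
    exact mul_nonneg (by positivity) (Bd_nonneg _ _)
  have e1 : α / s' ≤ 2 * α / s := by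
    rw [div_le_div_iff₀ hs' hs]; nlinarith
  have e2 : 0 ≤ 2 * α / s := by positivity
  have hFn := Fd_nonneg hf hα hs' y
  calc _ = |dF f α s' y| * |Real.log (Fd f α s' y) + 1| := abs_mul _ _
    _ ≤ ((α / s' + y) * Fd f α s' y) * |Real.log (Fd f α s' y) + 1| :=
        mul_le_mul_of_nonneg_right (dF_le hf hα hs' hy) (abs_nonneg _)
    _ = (α / s' + y) * |Fd f α s' y * (Real.log (Fd f α s' y) + 1)| := by
        rw [abs_mul, abs_of_nonneg hFn]; ring
    _ ≤ ((2 * α / s + 1) * (1 + y)) * |Fd f α s' y * (Real.log (Fd f α s' y) + 1)| := by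
        refine mul_le_mul_of_nonneg_right ?_ (abs_nonneg _)
        nlinarith [mul_nonneg e2 hy]
    _ ≤ _ := by
        rw [mul_assoc, mul_assoc]
        exact mul_le_mul_of_nonneg_left (h s' h1 h2 y hy) (by positivity)

lemma Fd_deriv (hf : IsD f) {α s : ℝ} (hα : 2 ≤ α) (hs : 0 < s) (y : ℝ) :
    HasDerivAt (fun s => Fd f α s y) (dF f α s y) s := by
  have h1 := (Real.hasDerivAt_rpow_const (x := s) (p := α) (Or.inl hs.ne')).div_const (Real.Gamma α)
  have h2 := Phi_deriv_s hf (show 1 ≤ α by linarith) hs y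
  refine (h1.mul h2).congr_deriv ?_
  unfold dF
  rw [Real.rpow_sub_one hs.ne']; field_simp; ring

lemma FlogF_deriv (hf : IsD f) {α s : ℝ} (hα : 2 ≤ α) (hs : 0 < s) (y : ℝ) :
    HasDerivAt (fun s => Fd f α s y * Real.log (Fd f α s y))
      (dF f α s y * (Real.log (Fd f α s y) + 1)) s := by
  by_cases h : Phi f α s y = 0
  · have h0 := Phi_zero_ae hf (show 1 ≤ α by linarith) hs h
    have h1 : ∀ k s, Phi f k s y = 0 := Phi_zero_of_ae h0 le_rfl
    simp only [Fd, dF, h1, mul_zero, sub_zero, zero_mul]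
    exact hasDerivAt_const s (0:ℝ)
  · have hne : Fd f α s y ≠ 0 := mul_ne_zero (cpos hα hs).ne' h
    have := (Real.hasDerivAt_mul_log hne).comp s (Fd_deriv hf hα hs y)
    exact this.congr_deriv (by ring)

lemma dF_cont (hf : IsD f) {α s : ℝ} (hα : 2 ≤ α) (hs : 0 < s) : Continuous (dF f α s) := by
  have h1 := Phi_cont hf hα hs
  have h2 := Phi_cont hf (show 2 ≤ α + 1 by linarith) hs
  unfold dF
  fun_prop

lemma dFlog_meas (hf : IsD f) {α s : ℝ} (hα : 2 ≤ α) (hs : 0 < s) :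
    Measurable (fun y => dF f α s y * (Real.log (Fd f α s y) + 1)) :=
  (dF_cont hf hα hs).measurable.mul ((Real.measurable_log.comp (Fd_cont hf hα hs).measurable).add
    measurable_const)

lemma FlogF_integrable (hf : IsD f) {α s : ℝ} (hα : 2 ≤ α) (hs : 0 < s) :
    Integrable (fun y => Fd f α s y * Real.log (Fd f α s y)) := by
  have hi : Integrable (Fd f α s) := (Phi_integrable hf.int (show 1 ≤ α by linarith) hs).const_mul _
  have hj : Integrable (fun y => Fd f α s y * (Real.log (Fd f α s y) + 1)) := by
    obtain ⟨D, hD, h⟩ := Fd_unif hf hα hs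
    refine dec_integrable (D := D) (η := s / 8) (by positivity) ?_ fun y => ?_
    · exact ((Fd_cont hf hα hs).measurable.mul
        ((Real.measurable_log.comp (Fd_cont hf hα hs).measurable).add
        measurable_const)).aestronglyMeasurable
    · rcases lt_or_ge y 0 with hy | hy
      · simp only [Fd, Phi_neg hf _ _ hy, mul_zero, zero_mul, abs_zero]
        exact mul_nonneg hD (Bd_nonneg _ _)
      · refine le_trans ?_ (h s (by linarith) (by linarith) y hy)
        exact le_mul_of_one_le_left (abs_nonneg _) (by linarith)
  refine (hj.sub hi).congr (Eventually.of_forall fun y => ?_)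
  simp only [Pi.sub_apply]; ring

lemma H_deriv (hf : IsD f) {α s : ℝ} (hα : 2 ≤ α) (hs : 0 < s) :
    Integrable (fun y => dF f α s y * (Real.log (Fd f α s y) + 1)) ∧
    HasDerivAt (fun s => ∫ y, Fd f α s y * Real.log (Fd f α s y))
      (∫ y, dF f α s y * (Real.log (Fd f α s y) + 1)) s := by
  obtain ⟨D, hD, h⟩ := dFlog_unif hf hα hs
  have hU : Set.Ioo (s / 2) (2 * s) ∈ nhds s := Ioo_mem_nhds (by linarith) (by linarith)
  refine hasDerivAt_integral_of_dominated_loc_of_deriv_le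
    (F := fun s y => Fd f α s y * Real.log (Fd f α s y))
    (F' := fun s y => dF f α s y * (Real.log (Fd f α s y) + 1))
    (bound := fun y => D * Bd (s / 8) y) hU ?_ (FlogF_integrable hf hα hs) ?_ ?_ ?_ ?_
  · filter_upwards [hU] with z hz
    exact (FlogF_integrable hf hα ((half_pos hs).trans hz.1)).aestronglyMeasurable
  · exact (dFlog_meas hf hα hs).aestronglyMeasurable
  · exact Eventually.of_forall fun y z hz => h z hz.1 hz.2 y
  · exact (Bd_integrable (by positivity)).const_mul D
  · exact Eventually.of_forall fun y z hz => FlogF_deriv hf hα ((half_pos hs).trans hz.1) y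

/-- `y`-derivative of `Phi α`. -/
noncomputable def dP (f : ℝ → ℝ) (α s y : ℝ) : ℝ :=
  (α - 1) * Phi f (α - 1) s y - s * Phi f α s y

lemma dP_dec (hf : IsD f) {α s : ℝ} (hα : 2 ≤ α) (hs : 0 < s) :
    ∃ D, ∀ y, |y| * ((α - 1) * Phi f (α - 1) s y + s * Phi f α s y) ≤ D * Bd (s / 2) y := by
  obtain ⟨A, hA, h⟩ := Phi_bound hf (show 1 ≤ α - 1 by linarith) hs
  obtain ⟨B, hB, h'⟩ := Phi_bound hf (show 1 ≤ α by linarith) hs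
  have hα1 : 0 ≤ α - 1 := by linarith
  refine ⟨(α - 1) * A + s * B, fun y => ?_⟩
  rcases lt_or_ge y 0 with hy | hy
  · simp only [Phi_neg hf _ _ hy, mul_zero, add_zero]
    exact mul_nonneg (by positivity) (Bd_nonneg _ _)
  rw [abs_of_nonneg hy, Bd_eq hy]
  have e := (Real.exp_pos (-(s / 2 * y))).le
  calc _ ≤ y * ((α - 1) * (A * Real.exp (-(s / 2 * y))) + s * (B * Real.exp (-(s / 2 * y)))) := by
        refine mul_le_mul_of_nonneg_left ?_ hy
        exact add_le_add (mul_le_mul_of_nonneg_left (h y) hα1) (mul_le_mul_of_nonneg_left (h' y) hs.le)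
    _ = y * (((α - 1) * A + s * B) * Real.exp (-(s / 2 * y))) := by ring
    _ ≤ (1 + y) * (((α - 1) * A + s * B) * Real.exp (-(s / 2 * y))) :=
        mul_le_mul_of_nonneg_right (by linarith) (by positivity)
    _ = _ := by ring

lemma dP_abs (hf : IsD f) {α s : ℝ} (hα : 2 ≤ α) (hs : 0 < s) (y : ℝ) :
    |dP f α s y| ≤ (α - 1) * Phi f (α - 1) s y + s * Phi f α s y := by
  have h1 := mul_nonneg (show 0 ≤ α - 1 by linarith) (Phi_nonneg hf (α - 1) s y)
  have h2 := mul_nonneg hs.le (Phi_nonneg hf α s y)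
  unfold dP
  rw [abs_le]; constructor <;> linarith

lemma dP_integrable (hf : IsD f) {α s : ℝ} (hα : 2 ≤ α) (hs : 0 < s) : Integrable (dP f α s) :=
  ((Phi_integrable hf.int (show 1 ≤ α - 1 by linarith) hs).const_mul _).sub
    ((Phi_integrable hf.int (show 1 ≤ α by linarith) hs).const_mul _)

lemma ydP_integrable (hf : IsD f) {α s : ℝ} (hα : 2 ≤ α) (hs : 0 < s) :
    Integrable (fun y => y * dP f α s y) := by
  obtain ⟨D, h⟩ := dP_dec hf hα hs
  refine dec_integrable (half_pos hs) (measurable_id.aestronglyMeasurable.mul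
    (dP_integrable hf hα hs).aestronglyMeasurable) fun y => le_trans ?_ (h y)
  rw [abs_mul]
  exact mul_le_mul_of_nonneg_left (dP_abs hf hα hs y) (abs_nonneg _)

lemma ydP_int (hf : IsD f) {α s : ℝ} (hα : 2 ≤ α) (hs : 0 < s) :
    ∫ y, y * dP f α s y = -∫ y, Phi f α s y := by
  have hi := Phi_integrable hf.int (show 1 ≤ α by linarith) hs
  have hj := ydP_integrable hf hα hs
  have h0 : ∫ y, (Phi f α s y + y * dP f α s y) = 0 - 0 := by
    refine integral_of_hasDerivAt_of_tendsto (f := fun y => y * Phi f α s y) (fun y => ?_)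
      (hi.add hj) ?_ ?_
    · refine ((hasDerivAt_id y).mul (Phi_deriv hf hα hs y)).congr_deriv ?_
      simp [dP]
    · refine tendsto_const_nhds.congr' ?_
      filter_upwards [Iio_mem_atBot (0:ℝ)] with y hy
      simp [Phi_neg hf _ _ (Set.mem_Iio.1 hy)]
    · obtain ⟨D, h⟩ := dP_dec hf hα hs
      have : Tendsto (fun y => s * (y * Phi f α s y)) atTop (nhds 0) := by
        refine dec_tendsto (half_pos hs) fun y => le_trans ?_ (h y)
        rw [abs_mul, abs_mul, abs_of_pos hs, abs_of_nonneg (Phi_nonneg hf α s y)]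
        have := mul_nonneg (abs_nonneg y)
          (mul_nonneg (show 0 ≤ α - 1 by linarith) (Phi_nonneg hf (α - 1) s y))
        linarith
      have h2 := this.const_mul s⁻¹
      simpa [← mul_assoc, inv_mul_cancel₀ hs.ne'] using h2
  rw [integral_add hi hj] at h0
  linarith

noncomputable def Qf (f : ℝ → ℝ) (α s y : ℝ) : ℝ :=
  Phi f (α + 1) s y / Phi f α s y * dP f α s y

lemma ratio_bd (hf : IsD f) {α s : ℝ} (hα : 2 ≤ α) (hs : 0 < s) (y : ℝ) :
    0 ≤ Phi f (α + 1) s y / Phi f α s y ∧ Phi f (α + 1) s y / Phi f α s y ≤ |y| := by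
  have h1 := Phi_nonneg hf α s y
  have h2 := Phi_nonneg hf (α + 1) s y
  refine ⟨div_nonneg h2 h1, div_le_of_le_mul₀ h1 (abs_nonneg y) ?_⟩
  exact (Phi_succ_le hf (show 1 ≤ α by linarith) hs y).trans
    (mul_le_mul_of_nonneg_right (le_abs_self y) h1)

lemma Qf_integrable (hf : IsD f) {α s : ℝ} (hα : 2 ≤ α) (hs : 0 < s) :
    Integrable (Qf f α s) := by
  obtain ⟨D, h⟩ := dP_dec hf hα hs
  refine dec_integrable (half_pos hs) ?_ fun y => le_trans ?_ (h y)
  · exact (((Phi_cont hf (show 2 ≤ α + 1 by linarith) hs).measurable.div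
      (Phi_cont hf hα hs).measurable).aestronglyMeasurable).mul
      (dP_integrable hf hα hs).aestronglyMeasurable
  · have := ratio_bd hf hα hs y
    rw [Qf, abs_mul, abs_of_nonneg this.1]
    exact mul_le_mul this.2 (dP_abs hf hα hs y) (abs_nonneg _) (abs_nonneg _)

lemma exists_edge (hf : IsD f) (h1 : (∫ x, f x) = 1) {α s : ℝ} (hα : 2 ≤ α) (hs : 0 < s) :
    ∃ c, (∀ y, c < y → 0 < Phi f α s y) ∧ ∀ y, y ≤ c → ∀ k, Phi f k s y = 0 := by
  have hα' : 1 ≤ α := by linarith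
  set S := {y | 0 < Phi f α s y} with hS
  have hne : S.Nonempty := by
    by_contra hcon
    have hz : ∀ y, Phi f α s y = 0 := fun y => by
      by_contra hy
      exact hcon ⟨y, lt_of_le_of_ne (Phi_nonneg hf _ _ _) (Ne.symm hy)⟩
    have h2 := Phi_int hf.int hα' hs
    rw [h1, one_mul] at h2
    simp only [hz, integral_zero] at h2
    have := Real.Gamma_pos_of_pos (show 0 < α by linarith)
    have : 0 < (1 / s) ^ α * Real.Gamma α := by positivity
    linarith
  have hbd : BddBelow S := ⟨0, fun y hy => by
    by_contra hlt
    have : 0 < Phi f α s y := hy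
    rw [Phi_neg hf _ _ (not_le.1 hlt)] at this
    exact lt_irrefl _ this⟩
  have hmono : ∀ y z, 0 < Phi f α s y → y ≤ z → 0 < Phi f α s z := fun y z hy hyz => by
    refine lt_of_le_of_ne (Phi_nonneg hf _ _ _) fun h0 => ?_
    have := Phi_zero_of_ae (Phi_zero_ae hf hα' hs h0.symm) hyz α s
    linarith
  have hzero : ∀ y, y ≤ sInf S → Phi f α s y = 0 := by
    intro y hy
    by_contra hne0
    have hpos : 0 < Phi f α s y := lt_of_le_of_ne (Phi_nonneg hf _ _ _) (Ne.symm hne0)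
    have hev : ∀ᶠ z in nhds y, 0 < Phi f α s z :=
      (Phi_cont hf hα hs).continuousAt.eventually (lt_mem_nhds hpos)
    obtain ⟨ε, hε, hball⟩ := Metric.eventually_nhds_iff.1 hev
    have : y - ε / 2 ∈ S := hball (by rw [Real.dist_eq]; rw [abs_lt]; constructor <;> linarith)
    have := csInf_le hbd this
    linarith
  refine ⟨sInf S, fun y hy => ?_, fun y hy k => ?_⟩
  · obtain ⟨z, hz, hzy⟩ := exists_lt_of_csInf_lt hne hy
    exact hmono z y hz hzy.le
  · exact Phi_zero_of_ae (Phi_zero_ae hf hα' hs (hzero y hy)) le_rfl k s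

lemma ibp (hf : IsD f) (h1 : (∫ x, f x) = 1) {α s : ℝ} (hα : 2 ≤ α) (hs : 0 < s) :
    ∫ y, dF f α s y * (Real.log (Fd f α s y) + 1)
      = -(s ^ (α - 1) / Real.Gamma α * ∫ y, Qf f α s y) := by
  obtain ⟨c, hpos, hzero⟩ := exists_edge hf h1 hα hs
  have hG := Real.Gamma_pos_of_pos (show 0 < α by linarith)
  set κ := s ^ (α - 1) / Real.Gamma α with hκ
  have hi := (H_deriv hf hα hs).1
  have hq := (Qf_integrable hf hα hs).const_mul κ
  have hc0 := cpos hα hs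
  have hF0 : Fd f α s c = 0 := by simp [Fd, hzero c le_rfl]
  have hLle : ∀ y, |Phi f (α + 1) s y * (Real.log (Fd f α s y) + 1)|
      ≤ (s ^ α / Real.Gamma α)⁻¹ * (|y| * |Fd f α s y * (Real.log (Fd f α s y) + 1)|) := by
    intro y
    have a1 := (Phi_succ_le hf (show 1 ≤ α by linarith) hs y).trans
      (mul_le_mul_of_nonneg_right (le_abs_self y) (Phi_nonneg hf α s y))
    rw [abs_mul, abs_of_nonneg (Phi_nonneg hf (α + 1) s y), abs_mul,
      abs_of_nonneg (Fd_nonneg hf hα hs y)]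
    refine (mul_le_mul_of_nonneg_right a1 (abs_nonneg _)).trans (le_of_eq ?_)
    rw [Fd]
    field_simp
  have key : ∫ y in Set.Ioi c, (dF f α s y * (Real.log (Fd f α s y) + 1) + κ * Qf f α s y)
      = κ * 0 - κ * (Phi f (α + 1) s c * (Real.log (Fd f α s c) + 1)) := by
    refine integral_Ioi_of_hasDerivAt_of_tendsto
      (f := fun y => κ * (Phi f (α + 1) s y * (Real.log (Fd f α s y) + 1)))
      ?_ ?_ (hi.add hq).integrableOn ?_
    · apply ContinuousAt.continuousWithinAt
      refine continuousAt_const.mul ?_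
      have hv : Phi f (α + 1) s c * (Real.log (Fd f α s c) + 1) = 0 := by
        rw [hzero c le_rfl, zero_mul]
      rw [ContinuousAt, hv]
      refine squeeze_zero_norm hLle ?_
      have hcont : Continuous fun y => (s ^ α / Real.Gamma α)⁻¹ *
          (|y| * |Fd f α s y * (Real.log (Fd f α s y) + 1)|) := by
        have a := Fd_cont hf hα hs
        have b : Continuous fun y => Fd f α s y * Real.log (Fd f α s y) :=
          Real.continuous_mul_log.comp a
        have d : (fun y => Fd f α s y * (Real.log (Fd f α s y) + 1))
            = fun y => Fd f α s y * Real.log (Fd f α s y) + Fd f α s y := by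
          ext y; ring
        have e : Continuous fun y => Fd f α s y * (Real.log (Fd f α s y) + 1) := by
          rw [d]; exact b.add a
        exact continuous_const.mul (continuous_abs.mul e.abs)
      have := hcont.tendsto c
      simpa [hF0] using this
    · intro y hy
      have hp := hpos y hy
      have hFp : Fd f α s y ≠ 0 := (mul_pos hc0 hp).ne'
      have d1 := Phi_deriv hf (show 2 ≤ α + 1 by linarith) hs y
      have d2 : HasDerivAt (Fd f α s) (s ^ α / Real.Gamma α * dP f α s y) y :=
        (Phi_deriv hf hα hs y).const_mul _
      refine ((d1.mul ((d2.log hFp).add_const 1)).const_mul κ).congr_deriv ?_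
      rw [add_sub_cancel_right]
      have hp' := hp.ne'
      have hc0' := hc0.ne'
      have : s ^ α / Real.Gamma α * dP f α s y / Fd f α s y = dP f α s y / Phi f α s y := by
        rw [Fd, mul_div_mul_left _ _ hc0']
      rw [this, dF, Qf]
      ring
    · refine Tendsto.const_mul κ ?_
      obtain ⟨D, hD, h⟩ := Fd_unif hf hα hs
      refine dec_tendsto (D := (s ^ α / Real.Gamma α)⁻¹ * D) (η := s / 8) (by positivity)
        fun y => (hLle y).trans ?_
      rw [mul_assoc]
      refine mul_le_mul_of_nonneg_left ?_ (inv_nonneg.2 hc0.le)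
      rcases lt_or_ge y 0 with hy | hy
      · simp only [Fd, Phi_neg hf _ _ hy, mul_zero, zero_mul, abs_zero]
        exact mul_nonneg hD (Bd_nonneg _ _)
      · refine le_trans ?_ (h s (by linarith) (by linarith) y hy)
        rw [abs_of_nonneg hy]
        exact mul_le_mul_of_nonneg_right (by linarith) (abs_nonneg _)
  rw [setIntegral_eq_integral_of_forall_compl_eq_zero, integral_add hi hq, integral_const_mul,
    hzero c le_rfl] at key
  · linarith
  · intro y hy
    have hy' : y ≤ c := not_lt.1 hy
    simp [dF, Qf, hzero y hy']

noncomputable def mm (f : ℝ → ℝ) (α s y : ℝ) : ℝ :=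
  Phi (fun x => x * f x) α s y / Phi f α s y

lemma Qf_eq (hf : IsD f) {α s : ℝ} (hα : 2 ≤ α) (hs : 0 < s) (y : ℝ) :
    Qf f α s y = y * dP f α s y - (α - 1) * (Phi f (α - 1) s y * mm f α s y)
      + s * Phi (fun x => x * f x) α s y := by
  have hα' : 1 ≤ α := by linarith
  have hN := Phi_succ hf hα' hs y
  by_cases h : Phi f α s y = 0
  · have h1 := Phi_zero_of_ae (Phi_zero_ae hf hα' hs h) le_rfl
    rw [h1, h1] at hN
    have hN' : Phi (fun x => x * f x) α s y = 0 := by linarith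
    simp [Qf, dP, mm, h1, hN']
  · rw [Qf, hN, mm, dP]
    field_simp
    ring

lemma Q_int (hf : IsD f) (h1 : (∫ x, f x) = 1) {α s : ℝ} (hα : 2 ≤ α) (hs : 0 < s) :
    s ^ (α - 1) / Real.Gamma α * ∫ y, Qf f α s y
      = -(1 / s) + (∫ x, x * f x)
        - ∫ y, (s ^ (α - 1) / Real.Gamma (α - 1) * Phi f (α - 1) s y) * mm f α s y := by
  have hα' : 1 ≤ α := by linarith
  have hG := Real.Gamma_pos_of_pos (show 0 < α - 1 by linarith)
  have i1 := ydP_integrable hf hα hs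
  have i3 := (Phi_integrable hf.int_mul hα' hs).const_mul s
  have iq := Qf_integrable hf hα hs
  have i2 : Integrable (fun y => (α - 1) * (Phi f (α - 1) s y * mm f α s y)) := by
    refine ((i1.add i3).sub iq).congr (Eventually.of_forall fun y => ?_)
    simp only [Pi.add_apply, Pi.sub_apply]
    rw [Qf_eq hf hα hs]; ring
  have e : ∫ y, Qf f α s y = (∫ y, y * dP f α s y)
      - (α - 1) * (∫ y, Phi f (α - 1) s y * mm f α s y)
      + s * ∫ y, Phi (fun x => x * f x) α s y := by
    simp_rw [Qf_eq hf hα hs]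
    have i12 : Integrable (fun y => y * dP f α s y
        - (α - 1) * (Phi f (α - 1) s y * mm f α s y)) := i1.sub i2
    rw [integral_add i12 i3, integral_sub i1 i2, integral_const_mul, integral_const_mul]
  have hGG : Real.Gamma α = (α - 1) * Real.Gamma (α - 1) := by
    have := Real.Gamma_add_one (show α - 1 ≠ 0 by linarith)
    rwa [sub_add_cancel] at this
  have e2 : ∫ y, (s ^ (α - 1) / Real.Gamma (α - 1) * Phi f (α - 1) s y) * mm f α s y
      = s ^ (α - 1) / Real.Gamma (α - 1) * ∫ y, Phi f (α - 1) s y * mm f α s y := by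
    rw [← integral_const_mul]; congr 1; ext y; ring
  rw [e2, e, ydP_int hf hα hs, Phi_int hf.int hα' hs, Phi_int hf.int_mul hα' hs, h1, hGG,
    Real.div_rpow zero_le_one hs.le, Real.one_rpow, Real.rpow_sub_one hs.ne']
  have hsα : 0 < s ^ α := by positivity
  have hα1 : α - 1 ≠ 0 := by linarith
  field_simp
  ring

lemma scale (f : ℝ → ℝ) (k y : ℝ) {b : ℝ} (hb : 0 < b) :
    ∫ x, f x * ((√b)⁻¹ * (if 0 ≤ (y - x) / √b then
      ((y - x) / √b) ^ (k - 1) * Real.exp (-((y - x) / √b)) / Real.Gamma k else 0))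
      = ((√b)⁻¹) ^ k / Real.Gamma k * Phi f k (√b)⁻¹ y := by
  unfold Phi
  rw [← integral_const_mul]
  congr 1
  ext x
  have ht : 0 < √b := Real.sqrt_pos.2 hb
  have hi : 0 < (√b)⁻¹ := inv_pos.2 ht
  unfold Ker
  by_cases h : 0 ≤ y - x
  · rw [if_pos h, if_pos (div_nonneg h ht.le), div_eq_mul_inv (y - x),
      Real.mul_rpow h hi.le, Real.rpow_sub_one hi.ne', mul_comm (√b)⁻¹ (y - x)]
    field_simp
  · have : ¬ (0 ≤ (y - x) / √b) := not_le.2 (div_neg_of_neg_of_pos (not_le.1 h) ht)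
    rw [if_neg h, if_neg this]; ring

end

end GammaNoise



/-- **Entropy derivative for gamma noise.** For a nonnegative `X` with an
existing moment generating function and independent `Gamma(α,1)` noise `W`
with `α ≥ 2`,
`d/da h(Y) = (1/(2a√a))·(√a − E[X] + ∫ f_{Y_{α−1}}(y;a) m(y;a) dy)`,
where `m` is the posterior mean of `X` given `Y = y` and `Y_k = X + √a·W_k`
denotes the output for gamma noise of shape `k`. -/
theorem entropy_derivative_gamma_noise
    (fX : ℝ → ℝ)
    (hfX_nonneg : ∀ x, 0 ≤ fX x) (hfX_prob : (∫ x, fX x) = 1)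
    (hfX_supp : ∀ x, x < 0 → fX x = 0)
    (hfX_mgf : ∀ s : ℝ, Integrable (fun x => Real.exp (s * x) * fX x))
    (α : ℝ) (hα : 2 ≤ α)
    (g : ℝ → ℝ → ℝ)
    (hg : ∀ k w : ℝ, g k w =
      if 0 ≤ w then w ^ (k - 1) * Real.exp (-w) / Real.Gamma k else 0)
    (fYk : ℝ → ℝ → ℝ → ℝ)
    (hfYk : ∀ k b y, fYk k b y =
      ∫ x, fX x * ((Real.sqrt b)⁻¹ * g k ((y - x) / Real.sqrt b)))
    (a : ℝ) (ha : 0 < a)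
    (m : ℝ → ℝ)
    (hm : ∀ y, m y =
      (∫ x, x * fX x * ((Real.sqrt a)⁻¹ * g α ((y - x) / Real.sqrt a))) /
        fYk α a y) :
    HasDerivAt (fun b => -∫ y, fYk α b y * Real.log (fYk α b y))
      ((1 / (2 * a * Real.sqrt a)) *
        (Real.sqrt a - (∫ x, x * fX x) + ∫ y, fYk (α - 1) a y * m y)) a := by
  have hf : GammaNoise.IsD fX := ⟨hfX_nonneg, hfX_supp, hfX_mgf⟩
  have hY : ∀ k b y, 0 < b → fYk k b y =
      ((√b)⁻¹) ^ k / Real.Gamma k * GammaNoise.Phi fX k (√b)⁻¹ y := by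
    intro k b y hb
    rw [hfYk, ← GammaNoise.scale fX k y hb]
    simp only [hg]
  have ht : 0 < √a := Real.sqrt_pos.2 ha
  have hs : 0 < (√a)⁻¹ := inv_pos.2 ht
  have hmm : ∀ y, m y = GammaNoise.mm fX α (√a)⁻¹ y := by
    intro y
    have h1 := GammaNoise.scale (fun x => x * fX x) α y ha
    rw [hm, hY α a y ha]
    simp only [hg]
    rw [h1, mul_div_mul_left _ _ (GammaNoise.cpos hα hs).ne']
    rfl
  have hd := (GammaNoise.H_deriv hf hα hs).2
  rw [GammaNoise.ibp hf hfX_prob hα hs, GammaNoise.Q_int hf hfX_prob hα hs] at hd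
  have hsq : HasDerivAt (fun b => (√b)⁻¹) (-(1 / (2 * √a)) / (√a) ^ 2) a :=
    (Real.hasDerivAt_sqrt ha.ne').inv ht.ne'
  have hc := (HasDerivAt.comp a (h₂ := fun s => ∫ y, GammaNoise.Fd fX α s y *
    Real.log (GammaNoise.Fd fX α s y)) hd hsq).neg
  have hev : (fun b => -∫ y, fYk α b y * Real.log (fYk α b y)) =ᶠ[nhds a]
      (fun b => -∫ y, GammaNoise.Fd fX α (√b)⁻¹ y * Real.log (GammaNoise.Fd fX α (√b)⁻¹ y)) := by
    filter_upwards [Ioi_mem_nhds ha] with b hb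
    simp only [hY _ b _ hb, GammaNoise.Fd]
  refine (HasDerivAt.congr_of_eventuallyEq hc hev).congr_deriv ?_
  simp only [hY _ a _ ha, hmm]
  rw [Real.sq_sqrt ha.le, one_div (√a)⁻¹, inv_inv]
  field_simp
  ring
end

section
/- (Second derivative of entropy for Gaussian noise) For every a > 0, the differential entropy h(a) = −∫ f_Y(y;a) log f_Y(y;a) dy is twice differentiable in a and d²/da² h(a) = −(1/2) ∫ f_Y(y;a) (∂/∂y S_Y(y;a))² dy, where S_Y(y;a) = ∂/∂y log f_Y(y;a) is the score of the output density. -/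
open MeasureTheory Filter

namespace EntGauss

noncomputable def ker (a u : ℝ) : ℝ := (Real.sqrt (2 * Real.pi * a))⁻¹ * Real.exp (-u ^ 2 / (2 * a))

noncomputable def M (f : ℝ → ℝ) (k : ℕ) (a y : ℝ) : ℝ := ∫ x, f x * ((y - x) ^ k * ker a (y - x))

noncomputable def psi (b u : ℝ) : ℝ := Real.exp (-u ^ 2 / (8 * b))

noncomputable def D (f : ℝ → ℝ) (b y : ℝ) : ℝ := ∫ x, ((1 + 2 * x ^ 2) * f x) * psi b (y - x)

lemma ker_pos {a : ℝ} (ha : 0 < a) (u : ℝ) : 0 < ker a u := by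
  unfold ker; have := Real.pi_pos; positivity

lemma ker_cont (a : ℝ) : Continuous (ker a) := by
  unfold ker; fun_prop

lemma psi_cont (b : ℝ) : Continuous (psi b) := by
  unfold psi; fun_prop

lemma pow_exp_bound (k : ℕ) {c : ℝ} (hc : 0 < c) :
    ∃ C, 0 ≤ C ∧ ∀ u : ℝ, |u| ^ k ≤ C * Real.exp (c * u ^ 2) := by
  refine ⟨1 + k.factorial / c ^ k, by positivity, fun u => ?_⟩
  have h1 := Real.pow_div_factorial_le_exp (c * u ^ 2) (by positivity) k
  have h2 : 1 ≤ Real.exp (c * u ^ 2) := Real.one_le_exp (by positivity)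
  have h3 : |u| ^ k ≤ 1 + (u ^ 2) ^ k := by
    have : (u ^ 2) ^ k = (|u| ^ k) ^ 2 := by rw [← sq_abs]; ring
    rw [this]; nlinarith [sq_nonneg (|u| ^ k - 1 / 2)]
  have h4 : (u ^ 2) ^ k = k.factorial / c ^ k * ((c * u ^ 2) ^ k / k.factorial) := by
    rw [mul_pow]; field_simp
  rw [h4] at h3
  have : (k.factorial : ℝ) / c ^ k * ((c * u ^ 2) ^ k / k.factorial) ≤ k.factorial / c ^ k * Real.exp (c * u ^ 2) := by
    gcongr
  linarith

lemma ker_bound (k : ℕ) {b : ℝ} (hb : 0 < b) :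
    ∃ C, 0 ≤ C ∧ ∀ a, b / 2 < a → a < 2 * b → ∀ u : ℝ, (1 + 2 * u ^ 2) * |u ^ k * ker a u| ≤ C * psi b u := by
  obtain ⟨C1, h1, h1'⟩ := pow_exp_bound k (c := 1 / (8 * b)) (by positivity)
  obtain ⟨C2, h2, h2'⟩ := pow_exp_bound (k + 2) (c := 1 / (8 * b)) (by positivity)
  have hpi := Real.pi_pos
  refine ⟨(Real.sqrt (Real.pi * b))⁻¹ * (C1 + 2 * C2), by positivity, fun a ha ha' u => ?_⟩
  have ha0 : 0 < a := by linarith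
  rw [abs_mul, abs_of_pos (ker_pos ha0 u), abs_pow]
  have hk : ker a u ≤ (Real.sqrt (Real.pi * b))⁻¹ * Real.exp (-u ^ 2 / (4 * b)) := by
    unfold ker
    gcongr ?_ * Real.exp ?_
    · gcongr ?_⁻¹
      apply Real.sqrt_le_sqrt
      nlinarith
    · rw [div_le_div_iff₀ (by positivity) (by positivity)]
      nlinarith [sq_nonneg u]
  have he : Real.exp (1 / (8 * b) * u ^ 2) * Real.exp (-u ^ 2 / (4 * b)) = psi b u := by
    unfold psi; rw [← Real.exp_add]; congr 1; field_simp; ring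
  have hp : (1 + 2 * u ^ 2) * |u| ^ k ≤ (C1 + 2 * C2) * Real.exp (1 / (8 * b) * u ^ 2) := by
    have e : (1 + 2 * u ^ 2) * |u| ^ k = |u| ^ k + 2 * |u| ^ (k + 2) := by
      rw [pow_add, sq_abs]; ring
    rw [e]; linarith [h1' u, h2' u]
  calc (1 + 2 * u ^ 2) * (|u| ^ k * ker a u) = ((1 + 2 * u ^ 2) * |u| ^ k) * ker a u := by ring
    _ ≤ ((C1 + 2 * C2) * Real.exp (1 / (8 * b) * u ^ 2)) * ((Real.sqrt (Real.pi * b))⁻¹ * Real.exp (-u ^ 2 / (4 * b))) := by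
        gcongr
        exact (ker_pos ha0 u).le
    _ = _ := by rw [← he]; ring

lemma psi_le_one {b : ℝ} (hb : 0 < b) (u : ℝ) : psi b u ≤ 1 := by
  unfold psi
  apply Real.exp_le_one_iff.2
  rw [neg_div]; have : 0 ≤ u ^ 2 / (8 * b) := by positivity
  linarith

lemma ker_bdd (k : ℕ) {b : ℝ} (hb : 0 < b) :
    ∃ C, 0 ≤ C ∧ ∀ a, b / 2 < a → a < 2 * b → ∀ u : ℝ, |u ^ k * ker a u| ≤ C := by
  obtain ⟨C, h, h'⟩ := ker_bound k hb
  refine ⟨C, h, fun a ha ha' u => ?_⟩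
  have := h' a ha ha' u
  have := psi_le_one hb u
  nlinarith [mul_nonneg (sq_nonneg u) (abs_nonneg (u ^ k * ker a u))]

variable {f : ℝ → ℝ}

lemma integrand_int (hf : Integrable f) (k : ℕ) {a : ℝ} (ha : 0 < a) (y : ℝ) :
    Integrable (fun x => f x * ((y - x) ^ k * ker a (y - x))) := by
  obtain ⟨C, h, h'⟩ := ker_bdd k ha
  refine hf.mul_bdd (c := C) ?_ ?_
  · have := ker_cont a
    exact Continuous.aestronglyMeasurable (by fun_prop)
  · exact Eventually.of_forall fun x => h' a (by linarith) (by linarith) _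

lemma ker_deriv_u {a : ℝ} (ha : 0 < a) (u : ℝ) : HasDerivAt (ker a) (-(u / a) * ker a u) u := by
  unfold ker
  have h1 : HasDerivAt (fun u : ℝ => -u ^ 2 / (2 * a)) (-(u / a)) u := by
    have := ((hasDerivAt_pow 2 u).neg).div_const (2 * a)
    refine HasDerivAt.congr_deriv this ?_
    field_simp; ring
  refine HasDerivAt.congr_deriv (h1.exp.const_mul (Real.sqrt (2 * Real.pi * a))⁻¹) ?_
  ring

lemma ker_deriv_a {a : ℝ} (ha : 0 < a) (u : ℝ) :
    HasDerivAt (fun a => ker a u) ((u ^ 2 / (2 * a ^ 2) - 1 / (2 * a)) * ker a u) a := by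
  unfold ker
  have hpi := Real.pi_pos
  have h1 : HasDerivAt (fun a : ℝ => -u ^ 2 / (2 * a)) (u ^ 2 / (2 * a ^ 2)) a := by
    have := (((hasDerivAt_id a).const_mul 2).fun_inv (by simp; exact ha.ne')).const_mul (-u ^ 2)
    simp only [id] at this
    refine HasDerivAt.congr_deriv this ?_
    field_simp
  have h2 : HasDerivAt (fun a : ℝ => (Real.sqrt (2 * Real.pi * a))⁻¹)
      (-(1 / (2 * a)) * (Real.sqrt (2 * Real.pi * a))⁻¹) a := by
    have h3 := (((hasDerivAt_id a).const_mul (2 * Real.pi)).sqrt (by simp only [id]; positivity)).fun_inv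
      (by simp only [id]; positivity)
    simp only [id] at h3
    refine HasDerivAt.congr_deriv h3 ?_
    have hs : Real.sqrt (2 * Real.pi * a) ^ 2 = 2 * Real.pi * a := Real.sq_sqrt (by positivity)
    have hs0 : 0 < Real.sqrt (2 * Real.pi * a) := by positivity
    rw [hs]
    field_simp
  refine HasDerivAt.congr_deriv (h2.mul h1.exp) ?_
  ring

lemma M_deriv_y (hf : Integrable f) (k : ℕ) {a : ℝ} (ha : 0 < a) (y : ℝ) :
    HasDerivAt (M f k a) (k * M f (k - 1) a y - M f (k + 1) a y / a) y := by
  obtain ⟨C1, h1, h1'⟩ := ker_bdd (k - 1) ha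
  obtain ⟨C2, h2, h2'⟩ := ker_bdd (k + 1) ha
  have hc := ker_cont a
  have key := hasDerivAt_integral_of_dominated_loc_of_deriv_le (μ := volume)
    (F := fun y x => f x * ((y - x) ^ k * ker a (y - x)))
    (F' := fun y x => k * (f x * ((y - x) ^ (k - 1) * ker a (y - x))) - (f x * ((y - x) ^ (k + 1) * ker a (y - x))) / a)
    (x₀ := y) (s := Set.univ) (bound := fun x => |f x| * (k * C1 + C2 / a))
    univ_mem
    (Eventually.of_forall fun y => (integrand_int hf k ha y).aestronglyMeasurable)
    (integrand_int hf k ha y)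
    (((integrand_int hf (k - 1) ha y).const_mul _).sub ((integrand_int hf (k + 1) ha y).div_const _)).aestronglyMeasurable
    (Eventually.of_forall fun x y _ => ?_)
    (hf.abs.mul_const _)
    (Eventually.of_forall fun x y _ => ?_)
  · refine HasDerivAt.congr_deriv key.2 ?_
    unfold M
    rw [integral_sub ((integrand_int hf (k - 1) ha y).const_mul _) ((integrand_int hf (k + 1) ha y).div_const _),
      integral_const_mul, integral_div]
  · have e : (k * (f x * ((y - x) ^ (k - 1) * ker a (y - x))) - (f x * ((y - x) ^ (k + 1) * ker a (y - x))) / a)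
      = f x * (k * ((y - x) ^ (k - 1) * ker a (y - x)) - ((y - x) ^ (k + 1) * ker a (y - x)) / a) := by ring
    rw [e, Real.norm_eq_abs, abs_mul]
    gcongr
    refine (abs_sub _ _).trans ?_
    rw [abs_mul, abs_div, abs_of_pos ha, Nat.abs_cast]
    gcongr
    · exact h1' a (by linarith) (by linarith) _
    · exact h2' a (by linarith) (by linarith) _
  · have hs : HasDerivAt (fun y : ℝ => y - x) 1 y := (hasDerivAt_id y).sub_const x
    have := (((hs.pow k).mul ((ker_deriv_u ha (y - x)).comp y hs))).const_mul (f x)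
    refine HasDerivAt.congr_deriv this ?_
    simp only [Function.comp, Pi.pow_apply]
    ring

lemma M_deriv_a (hf : Integrable f) (k : ℕ) {a : ℝ} (ha : 0 < a) (y : ℝ) :
    HasDerivAt (fun a => M f k a y) (M f (k + 2) a y / (2 * a ^ 2) - M f k a y / (2 * a)) a := by
  obtain ⟨C1, h1, h1'⟩ := ker_bdd (k + 2) ha
  obtain ⟨C2, h2, h2'⟩ := ker_bdd k ha
  have hpos : ∀ c ∈ Set.Ioo (a / 2) (2 * a), 0 < c := fun c hc => by linarith [hc.1]
  have key := hasDerivAt_integral_of_dominated_loc_of_deriv_le (μ := volume)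
    (F := fun a x => f x * ((y - x) ^ k * ker a (y - x)))
    (F' := fun a x => (f x * ((y - x) ^ (k + 2) * ker a (y - x))) / (2 * a ^ 2) - (f x * ((y - x) ^ k * ker a (y - x))) / (2 * a))
    (x₀ := a) (s := Set.Ioo (a / 2) (2 * a)) (bound := fun x => |f x| * (C1 / (2 * (a / 2) ^ 2) + C2 / (2 * (a / 2))))
    (Ioo_mem_nhds (by linarith) (by linarith))
    (by filter_upwards [Ioo_mem_nhds (show a / 2 < a by linarith) (show a < 2 * a by linarith)] with c hc
        exact (integrand_int hf k (hpos c hc) y).aestronglyMeasurable)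
    (integrand_int hf k ha y)
    (((integrand_int hf (k + 2) ha y).div_const _).sub ((integrand_int hf k ha y).div_const _)).aestronglyMeasurable
    (Eventually.of_forall fun x c hc => ?_)
    (hf.abs.mul_const _)
    (Eventually.of_forall fun x c hc => ?_)
  · refine HasDerivAt.congr_deriv key.2 ?_
    unfold M
    rw [integral_sub ((integrand_int hf (k + 2) ha y).div_const _) ((integrand_int hf k ha y).div_const _),
      integral_div, integral_div]
  · have hc0 := hpos c hc
    have e : (f x * ((y - x) ^ (k + 2) * ker c (y - x))) / (2 * c ^ 2) - (f x * ((y - x) ^ k * ker c (y - x))) / (2 * c)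
      = f x * (((y - x) ^ (k + 2) * ker c (y - x)) / (2 * c ^ 2) - ((y - x) ^ k * ker c (y - x)) / (2 * c)) := by ring
    rw [e, Real.norm_eq_abs, abs_mul]
    gcongr
    refine (abs_sub _ _).trans ?_
    rw [abs_div, abs_div, abs_of_pos (show 0 < 2 * c ^ 2 by positivity), abs_of_pos (show 0 < 2 * c by positivity)]
    gcongr
    · exact h1' c hc.1 hc.2 _
    · exact hc.1.le
    · exact h2' c hc.1 hc.2 _
    · exact hc.1.le
  · have hc0 := hpos c hc
    have := ((ker_deriv_a hc0 (y - x)).const_mul ((y - x) ^ k)).const_mul (f x)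
    refine HasDerivAt.congr_deriv this ?_
    ring

lemma M_cont (hf : Integrable f) (k : ℕ) {a : ℝ} (ha : 0 < a) : Continuous (M f k a) :=
  continuous_iff_continuousAt.2 fun y => (M_deriv_y hf k ha y).continuousAt

lemma mom1 (hf : Integrable f) (hm : Integrable (fun x => x ^ 2 * f x)) :
    Integrable (fun x => (1 + 2 * x ^ 2) * f x) := by
  have := hf.add (hm.const_mul 2)
  refine this.congr (Eventually.of_forall fun x => ?_)
  simp only [Pi.add_apply]; ring

lemma momx (hf : Integrable f) (hm : Integrable (fun x => x ^ 2 * f x)) :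
    Integrable (fun x => x * f x) := by
  refine (mom1 hf hm).mono (by exact continuous_id.aestronglyMeasurable.mul hf.aestronglyMeasurable)
    (Eventually.of_forall fun x => ?_)
  simp only [norm_mul, Real.norm_eq_abs]
  refine mul_le_mul_of_nonneg_right ?_ (abs_nonneg _)
  rw [abs_of_pos (show 0 < 1 + 2 * x ^ 2 by positivity), abs_le]
  constructor <;> nlinarith [sq_nonneg (x - 1), sq_nonneg (x + 1)]

lemma D_integrand (hf : Integrable f) (hm : Integrable (fun x => x ^ 2 * f x)) {b : ℝ} (hb : 0 < b) (y : ℝ) :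
    Integrable (fun x => ((1 + 2 * x ^ 2) * f x) * psi b (y - x)) := by
  refine (mom1 hf hm).mul_bdd (c := 1) ?_ ?_
  · have := psi_cont b
    exact Continuous.aestronglyMeasurable (by fun_prop)
  · refine Eventually.of_forall fun x => ?_
    rw [Real.norm_eq_abs, abs_of_pos (by unfold psi; positivity)]
    exact psi_le_one hb _

lemma D_int (hf : Integrable f) (hm : Integrable (fun x => x ^ 2 * f x)) {b : ℝ} (hb : 0 < b) :
    Integrable (D f b) := by
  have hpsi : Integrable (psi b) := by
    have := integrable_exp_neg_mul_sq (b := 1 / (8 * b)) (by positivity)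
    refine this.congr (Eventually.of_forall fun u => ?_)
    simp only [psi]; congr 1; ring
  exact (mom1 hf hm).integrable_convolution (ContinuousLinearMap.mul ℝ ℝ) hpsi

lemma D_nonneg (hf0 : ∀ x, 0 ≤ f x) (b y : ℝ) : 0 ≤ D f b y := by
  unfold D
  refine integral_nonneg fun x => ?_
  have := hf0 x
  simp only [psi, Pi.zero_apply]; positivity

lemma M_bound (hf0 : ∀ x, 0 ≤ f x) (hf : Integrable f) (hm : Integrable (fun x => x ^ 2 * f x))
    (k : ℕ) {b : ℝ} (hb : 0 < b) :
    ∃ C, 0 ≤ C ∧ ∀ a, b / 2 < a → a < 2 * b → ∀ y : ℝ, (1 + y ^ 2) * |M f k a y| ≤ C * D f b y := by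
  obtain ⟨C, h, h'⟩ := ker_bound k hb
  refine ⟨C, h, fun a ha ha' y => ?_⟩
  have ha0 : 0 < a := by linarith
  have hI := integrand_int hf k ha0 y
  unfold M D
  calc (1 + y ^ 2) * |∫ x, f x * ((y - x) ^ k * ker a (y - x))|
      ≤ (1 + y ^ 2) * ∫ x, |f x * ((y - x) ^ k * ker a (y - x))| := by
        gcongr; exact abs_integral_le_integral_abs
    _ = ∫ x, (1 + y ^ 2) * |f x * ((y - x) ^ k * ker a (y - x))| := by rw [integral_const_mul]
    _ ≤ ∫ x, C * (((1 + 2 * x ^ 2) * f x) * psi b (y - x)) := by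
        refine integral_mono (hI.abs.const_mul _) ((D_integrand hf hm hb y).const_mul C) fun x => ?_
        simp only
        have h1 := h' a ha ha' (y - x)
        have h2 : 1 + y ^ 2 ≤ (1 + 2 * x ^ 2) * (1 + 2 * (y - x) ^ 2) := by
          nlinarith [sq_nonneg (x * (y - x)), sq_nonneg (y - 2 * x)]
        have h0 := hf0 x
        rw [abs_mul, abs_of_nonneg h0]
        calc (1 + y ^ 2) * (f x * |(y - x) ^ k * ker a (y - x)|)
            ≤ ((1 + 2 * x ^ 2) * (1 + 2 * (y - x) ^ 2)) * (f x * |(y - x) ^ k * ker a (y - x)|) := by gcongr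
          _ = (1 + 2 * x ^ 2) * f x * ((1 + 2 * (y - x) ^ 2) * |(y - x) ^ k * ker a (y - x)|) := by ring
          _ ≤ (1 + 2 * x ^ 2) * f x * (C * psi b (y - x)) := by gcongr
          _ = _ := by ring
    _ = _ := by rw [integral_const_mul]

lemma M_cs (hf0 : ∀ x, 0 ≤ f x) (hf : Integrable f) (j : ℕ) {a : ℝ} (ha : 0 < a) (y : ℝ)
    (hp : 0 < M f 0 a y) : M f j a y ^ 2 ≤ M f 0 a y * M f (2 * j) a y := by
  have key : ∀ t : ℝ, 0 ≤ M f (2 * j) a y - 2 * t * M f j a y + t ^ 2 * M f 0 a y := by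
    intro t
    have e : M f (2 * j) a y - 2 * t * M f j a y + t ^ 2 * M f 0 a y =
        ∫ x, f x * (((y - x) ^ j - t) ^ 2 * ker a (y - x)) := by
      unfold M
      rw [← integral_const_mul, ← integral_const_mul, ← integral_sub, ← integral_add]
      · congr 1; ext x; ring
      · exact (integrand_int hf (2 * j) ha y).sub ((integrand_int hf j ha y).const_mul _)
      · exact (integrand_int hf 0 ha y).const_mul _
      · exact (integrand_int hf (2 * j) ha y)
      · exact ((integrand_int hf j ha y).const_mul _)
    rw [e]
    refine integral_nonneg fun x => ?_
    have := hf0 x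
    have := ker_pos ha (y - x)
    simp only [Pi.zero_apply]; positivity
  have := key (M f j a y / M f 0 a y)
  have h2 : M f (2 * j) a y - 2 * (M f j a y / M f 0 a y) * M f j a y + (M f j a y / M f 0 a y) ^ 2 * M f 0 a y
    = M f (2 * j) a y - M f j a y ^ 2 / M f 0 a y := by field_simp; ring
  rw [h2, sub_nonneg, div_le_iff₀ hp] at this
  linarith

lemma M0_lower (hf0 : ∀ x, 0 ≤ f x) (hf : Integrable f) (h1 : ∫ x, f x = 1)
    (hm : Integrable (fun x => x ^ 2 * f x)) {a : ℝ} (ha : 0 < a) (y : ℝ) :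
    (Real.sqrt (2 * Real.pi * a))⁻¹ *
      Real.exp (-(y ^ 2 - 2 * y * (∫ x, x * f x) + ∫ x, x ^ 2 * f x) / (2 * a)) ≤ M f 0 a y := by
  set T := -(y ^ 2 - 2 * y * (∫ x, x * f x) + ∫ x, x ^ 2 * f x) / (2 * a) with hT
  set c := (Real.sqrt (2 * Real.pi * a))⁻¹ with hc
  have hc0 : 0 < c := by have := Real.pi_pos; positivity
  have hx := momx hf hm
  have e : c * Real.exp T = ∫ x, (c * Real.exp T) * ((1 - T - y ^ 2 / (2 * a)) * f x + (y / a) * (x * f x) - 1 / (2 * a) * (x ^ 2 * f x)) := by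
    rw [integral_const_mul, integral_sub, integral_add, integral_const_mul, integral_const_mul, integral_const_mul, h1]
    · have : (1 - T - y ^ 2 / (2 * a)) * 1 + y / a * (∫ x, x * f x) - 1 / (2 * a) * (∫ x, x ^ 2 * f x) = 1 := by
        rw [hT]; field_simp; ring
      rw [this, mul_one]
    · exact hf.const_mul _
    · exact hx.const_mul _
    · exact (hf.const_mul _).add (hx.const_mul _)
    · exact hm.const_mul _
  rw [e]
  unfold M
  refine integral_mono ?_ (integrand_int hf 0 ha y) fun x => ?_
  · exact (((hf.const_mul _).add (hx.const_mul _)).sub (hm.const_mul _)).const_mul _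
  · simp only [pow_zero, one_mul, ker]
    rw [← hc]
    have h3 := Real.add_one_le_exp (-(y - x) ^ 2 / (2 * a) - T)
    rw [Real.exp_sub, le_div_iff₀ (Real.exp_pos _)] at h3
    have h0 := hf0 x
    calc _ = (c * f x) * ((-(y - x) ^ 2 / (2 * a) - T + 1) * Real.exp T) := by field_simp; ring
      _ ≤ (c * f x) * Real.exp (-(y - x) ^ 2 / (2 * a)) := by gcongr
      _ = _ := by ring

lemma M0_pos (hf0 : ∀ x, 0 ≤ f x) (hf : Integrable f) (h1 : ∫ x, f x = 1)
    (hm : Integrable (fun x => x ^ 2 * f x)) {a : ℝ} (ha : 0 < a) (y : ℝ) : 0 < M f 0 a y := by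
  refine lt_of_lt_of_le ?_ (M0_lower hf0 hf h1 hm ha y)
  have := Real.pi_pos; positivity

lemma M0_upper (hf0 : ∀ x, 0 ≤ f x) (hf : Integrable f) (h1 : ∫ x, f x = 1)
    {a : ℝ} (ha : 0 < a) (y : ℝ) : M f 0 a y ≤ (Real.sqrt (2 * Real.pi * a))⁻¹ := by
  have : (Real.sqrt (2 * Real.pi * a))⁻¹ = ∫ x, f x * (Real.sqrt (2 * Real.pi * a))⁻¹ := by
    rw [integral_mul_const, h1, one_mul]
  rw [this]
  unfold M
  refine integral_mono (integrand_int hf 0 ha y) (hf.mul_const _) fun x => ?_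
  have h0 := hf0 x
  simp only [pow_zero, one_mul, ker]
  gcongr
  have : Real.exp (-(y - x) ^ 2 / (2 * a)) ≤ 1 := by
    apply Real.exp_le_one_iff.2
    rw [neg_div]; have : 0 ≤ (y - x) ^ 2 / (2 * a) := by positivity
    linarith
  have hp : 0 ≤ (Real.sqrt (2 * Real.pi * a))⁻¹ := by positivity
  nlinarith

lemma log_bound (hf0 : ∀ x, 0 ≤ f x) (hf : Integrable f) (h1 : ∫ x, f x = 1)
    (hm : Integrable (fun x => x ^ 2 * f x)) {b : ℝ} (hb : 0 < b) :
    ∃ C, 0 ≤ C ∧ ∀ a, b / 2 < a → a < 2 * b → ∀ y : ℝ,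
      |Real.log (M f 0 a y)| + 1 ≤ C * (1 + y ^ 2) := by
  set m := ∫ x, x * f x with hmm
  set s := ∫ x, x ^ 2 * f x with hss
  have hpi := Real.pi_pos
  set L := |Real.log (Real.sqrt (Real.pi * b))| + |Real.log (Real.sqrt (4 * Real.pi * b))| with hL
  refine ⟨1 + L + (2 + m ^ 2 + |s|) / b, by positivity, fun a ha ha' y => ?_⟩
  have ha0 : 0 < a := by linarith
  have hp := M0_pos hf0 hf h1 hm ha0 y
  have hs0 : 0 < Real.sqrt (2 * Real.pi * a) := by positivity
  have hlow := Real.log_le_log (by positivity) (M0_lower hf0 hf h1 hm ha0 y)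
  rw [Real.log_mul (by positivity) (by positivity), Real.log_exp, Real.log_inv] at hlow
  have hup := Real.log_le_log hp (M0_upper hf0 hf h1 ha0 y)
  rw [Real.log_inv] at hup
  have hl1 : Real.log (Real.sqrt (Real.pi * b)) ≤ Real.log (Real.sqrt (2 * Real.pi * a)) :=
    Real.log_le_log (by positivity) (Real.sqrt_le_sqrt (by nlinarith))
  have hl2 : Real.log (Real.sqrt (2 * Real.pi * a)) ≤ Real.log (Real.sqrt (4 * Real.pi * b)) :=
    Real.log_le_log (by positivity) (Real.sqrt_le_sqrt (by nlinarith))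
  have hL0 : 0 ≤ L := by positivity
  have hB : (y ^ 2 - 2 * y * m + s) / (2 * a) ≤ (2 + m ^ 2 + |s|) / b * (1 + y ^ 2) := by
    rw [div_mul_eq_mul_div, div_le_div_iff₀ (by positivity) hb]
    have hq : y ^ 2 - 2 * y * m + s ≤ (2 + m ^ 2 + |s|) * (1 + y ^ 2) := by
      nlinarith [sq_nonneg (y + m), le_abs_self s, mul_nonneg (abs_nonneg s) (sq_nonneg y), mul_nonneg (sq_nonneg m) (sq_nonneg y)]
    calc _ ≤ ((2 + m ^ 2 + |s|) * (1 + y ^ 2)) * b := by gcongr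
      _ ≤ _ := by gcongr; linarith
  rw [neg_div] at hlow
  have h5 : 0 ≤ (2 + m ^ 2 + |s|) / b * (1 + y ^ 2) := by positivity
  have h6 : |Real.log (M f 0 a y)| ≤ L + (2 + m ^ 2 + |s|) / b * (1 + y ^ 2) := by
    rw [abs_le]
    have i1 := neg_abs_le (Real.log (Real.sqrt (Real.pi * b)))
    have i2 := le_abs_self (Real.log (Real.sqrt (4 * Real.pi * b)))
    have i3 := abs_nonneg (Real.log (Real.sqrt (Real.pi * b)))
    have i4 := abs_nonneg (Real.log (Real.sqrt (4 * Real.pi * b)))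
    constructor <;> linarith
  nlinarith [mul_nonneg hL0 (sq_nonneg y), sq_nonneg y]

end EntGauss

namespace EntGauss
variable {f : ℝ → ℝ}

structure Hyp (f : ℝ → ℝ) : Prop where
  nn : ∀ x, 0 ≤ f x
  int : Integrable f
  one : ∫ x, f x = 1
  mom : Integrable (fun x => x ^ 2 * f x)

lemma Hyp.pos (H : Hyp f) {a : ℝ} (ha : 0 < a) (y : ℝ) : 0 < M f 0 a y :=
  M0_pos H.nn H.int H.one H.mom ha y

lemma common (H : Hyp f) {b : ℝ} (hb : 0 < b) :
    ∃ C, 0 ≤ C ∧ ∀ a, b / 2 < a → a < 2 * b → ∀ y : ℝ, ∀ k ≤ 4,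
      |M f k a y| ≤ C * D f b y ∧ |M f k a y| * (|Real.log (M f 0 a y)| + 1) ≤ C * D f b y := by
  choose c hc hc' using fun k => M_bound H.nn H.int H.mom k hb
  obtain ⟨L, hL, hL'⟩ := log_bound H.nn H.int H.one H.mom hb
  have hsum : ∀ k ≤ 4, c k ≤ c 0 + c 1 + c 2 + c 3 + c 4 := by
    intro k hk
    have := hc 0; have := hc 1; have := hc 2; have := hc 3; have := hc 4
    interval_cases k <;> linarith
  set S := c 0 + c 1 + c 2 + c 3 + c 4 with hS
  have hS0 : 0 ≤ S := (hc 0).trans (hsum 0 (by norm_num))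
  refine ⟨S * (1 + L), by positivity, fun a ha ha' y k hk => ?_⟩
  have hD := D_nonneg H.nn b y
  have h1 : (1 + y ^ 2) * |M f k a y| ≤ S * D f b y :=
    (hc' k a ha ha' y).trans (by gcongr; exact hsum k hk)
  have h2 := hL' a ha ha' y
  have h3 := abs_nonneg (M f k a y)
  have hSD : 0 ≤ S * D f b y := by positivity
  constructor
  · nlinarith [mul_nonneg h3 (sq_nonneg y), mul_nonneg hSD hL]
  · calc _ ≤ |M f k a y| * (L * (1 + y ^ 2)) := by gcongr
      _ = L * ((1 + y ^ 2) * |M f k a y|) := by ring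
      _ ≤ L * (S * D f b y) := by gcongr
      _ ≤ _ := by nlinarith

noncomputable def P1 (f : ℝ → ℝ) (a y : ℝ) : ℝ := -(M f 1 a y / a)
noncomputable def P2 (f : ℝ → ℝ) (a y : ℝ) : ℝ := M f 2 a y / a ^ 2 - M f 0 a y / a
noncomputable def P3 (f : ℝ → ℝ) (a y : ℝ) : ℝ := 3 * M f 1 a y / a ^ 2 - M f 3 a y / a ^ 3
noncomputable def P4 (f : ℝ → ℝ) (a y : ℝ) : ℝ :=
  M f 4 a y / a ^ 4 - 6 * M f 2 a y / a ^ 3 + 3 * M f 0 a y / a ^ 2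

lemma dy0 (H : Hyp f) {a : ℝ} (ha : 0 < a) (y : ℝ) : HasDerivAt (M f 0 a) (P1 f a y) y := by
  refine (M_deriv_y H.int 0 ha y).congr_deriv ?_
  simp [P1]

lemma dy1 (H : Hyp f) {a : ℝ} (ha : 0 < a) (y : ℝ) : HasDerivAt (P1 f a) (P2 f a y) y := by
  refine (((M_deriv_y H.int 1 ha y).div_const a).neg).congr_deriv ?_
  simp [P2]; field_simp; ring

lemma dy2 (H : Hyp f) {a : ℝ} (ha : 0 < a) (y : ℝ) : HasDerivAt (P2 f a) (P3 f a y) y := by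
  refine (((M_deriv_y H.int 2 ha y).div_const (a ^ 2)).sub ((M_deriv_y H.int 0 ha y).div_const a)).congr_deriv ?_
  simp [P3]; field_simp; ring

lemma dy3 (H : Hyp f) {a : ℝ} (ha : 0 < a) (y : ℝ) : HasDerivAt (P3 f a) (P4 f a y) y := by
  refine ((((M_deriv_y H.int 1 ha y).const_mul 3).div_const (a ^ 2)).sub ((M_deriv_y H.int 3 ha y).div_const (a ^ 3))).congr_deriv ?_
  simp [P4]; field_simp; ring

lemma da0 (H : Hyp f) {a : ℝ} (ha : 0 < a) (y : ℝ) : HasDerivAt (fun a => M f 0 a y) (P2 f a y / 2) a := by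
  refine (M_deriv_a H.int 0 ha y).congr_deriv ?_
  simp [P2]; field_simp

lemma da2 (H : Hyp f) {a : ℝ} (ha : 0 < a) (y : ℝ) : HasDerivAt (fun a => P2 f a y) (P4 f a y / 2) a := by
  refine (((M_deriv_a H.int 2 ha y).fun_div (hasDerivAt_pow 2 a) (by positivity)).sub
    ((M_deriv_a H.int 0 ha y).fun_div (hasDerivAt_id a) ha.ne')).congr_deriv ?_
  simp [P4]; field_simp; ring

set_option maxHeartbeats 1000000 in
/-- All bounds near `b`. -/
lemma bounds (H : Hyp f) {b : ℝ} (hb : 0 < b) :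
    ∃ K, 0 ≤ K ∧ ∀ a, b / 2 < a → a < 2 * b → ∀ y : ℝ,
      |M f 0 a y| ≤ K * D f b y ∧
      |M f 0 a y * Real.log (M f 0 a y)| ≤ K * D f b y ∧
      |P2 f a y * (Real.log (M f 0 a y) + 1)| ≤ K * D f b y ∧
      |P3 f a y * (Real.log (M f 0 a y) + 1)| ≤ K * D f b y ∧
      |P4 f a y * (Real.log (M f 0 a y) + 1)| ≤ K * D f b y ∧
      P1 f a y ^ 2 / M f 0 a y ≤ K * D f b y ∧
      P2 f a y ^ 2 / M f 0 a y ≤ K * D f b y ∧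
      P1 f a y ^ 4 / M f 0 a y ^ 3 ≤ K * D f b y := by
  obtain ⟨C, hC, hC'⟩ := common H hb
  set r := 2 / b with hr
  have hr0 : 0 < r := by positivity
  set E := 1 + r + r ^ 2 + r ^ 3 + r ^ 4 with hE
  refine ⟨10 * C * E, by positivity, fun a ha ha' y => ?_⟩
  have ha0 : 0 < a := by linarith
  have hD := D_nonneg H.nn b y
  have hp := H.pos ha0 y
  set i := a⁻¹ with hi
  have hi0 : 0 < i := by positivity
  have hir : i ≤ r := by
    rw [hi, hr, inv_eq_one_div, div_le_div_iff₀ ha0 hb]; linarith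
  set X := C * D f b y with hX
  have hX0 : 0 ≤ X := by positivity
  have e1 : i ≤ E := by rw [hE]; nlinarith [pow_pos hr0 2, pow_pos hr0 3, pow_pos hr0 4]
  have e2 : i ^ 2 ≤ E := by
    have : i ^ 2 ≤ r ^ 2 := by gcongr
    rw [hE]; nlinarith [pow_pos hr0 2, pow_pos hr0 3, pow_pos hr0 4]
  have e3 : i ^ 3 ≤ E := by
    have : i ^ 3 ≤ r ^ 3 := by gcongr
    rw [hE]; nlinarith [pow_pos hr0 2, pow_pos hr0 3, pow_pos hr0 4]
  have e4 : i ^ 4 ≤ E := by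
    have : i ^ 4 ≤ r ^ 4 := by gcongr
    rw [hE]; nlinarith [pow_pos hr0 2, pow_pos hr0 3, pow_pos hr0 4]
  have e0 : 1 ≤ E := by rw [hE]; nlinarith [pow_pos hr0 2, pow_pos hr0 3, pow_pos hr0 4]
  have hE0 : 0 ≤ E := by linarith
  have hEX : 0 ≤ E * X := by positivity
  have hlog : |Real.log (M f 0 a y) + 1| ≤ |Real.log (M f 0 a y)| + 1 := by
    refine (abs_add_le _ _).trans (by simp)
  set l := |Real.log (M f 0 a y) + 1| with hl
  have hl0 : 0 ≤ l := abs_nonneg _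
  have B := hC' a ha ha' y
  have m0 : ∀ k ≤ 4, ∀ e, 0 ≤ e → e ≤ E → e * |M f k a y| ≤ E * X := fun k hk e he0 he =>
    mul_le_mul he (B k hk).1 (abs_nonneg _) hE0
  have m1 : ∀ k ≤ 4, ∀ e, 0 ≤ e → e ≤ E → e * |M f k a y| * l ≤ E * X := fun k hk e he0 he => by
    rw [mul_assoc]
    refine mul_le_mul he (le_trans ?_ (B k hk).2) (by positivity) hE0
    gcongr
  have c1 := M_cs H.nn H.int 1 ha0 y hp
  have c2 := M_cs H.nn H.int 2 ha0 y hp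
  norm_num at c1 c2
  have hM2 : 0 ≤ M f 2 a y := by
    by_contra hneg; push Not at hneg; nlinarith [sq_nonneg (M f 1 a y)]
  have hM4 : 0 ≤ M f 4 a y := by
    by_contra hneg; push Not at hneg; nlinarith [sq_nonneg (M f 2 a y)]
  have eK : 10 * C * E * D f b y = 10 * (E * X) := by rw [hX]; ring
  rw [eK]
  refine ⟨?_, ?_, ?_, ?_, ?_, ?_, ?_, ?_⟩
  · have := m0 0 (by norm_num) 1 (by norm_num) e0
    linarith
  · rw [abs_mul]
    have h1 := (B 0 (by norm_num)).2
    have h2 : X ≤ E * X := by nlinarith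
    have := abs_nonneg (M f 0 a y)
    nlinarith
  · rw [abs_mul]
    have h1 := m1 2 (by norm_num) (i ^ 2) (by positivity) e2
    have h2 := m1 0 (by norm_num) i (by positivity) e1
    have : |P2 f a y| ≤ i ^ 2 * |M f 2 a y| + i * |M f 0 a y| := by
      unfold P2
      refine (abs_sub _ _).trans (le_of_eq ?_)
      rw [abs_div, abs_div, abs_of_pos ha0, abs_of_pos (pow_pos ha0 2), hi]; field_simp
    have := mul_le_mul_of_nonneg_right this hl0
    linarith
  · rw [abs_mul]
    have h1 := m1 1 (by norm_num) (i ^ 2) (by positivity) e2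
    have h2 := m1 3 (by norm_num) (i ^ 3) (by positivity) e3
    have : |P3 f a y| ≤ 3 * (i ^ 2 * |M f 1 a y|) + i ^ 3 * |M f 3 a y| := by
      unfold P3
      refine (abs_sub _ _).trans (le_of_eq ?_)
      rw [abs_div, abs_div, abs_mul, abs_of_pos (pow_pos ha0 3), abs_of_pos (pow_pos ha0 2), hi,
        abs_of_pos (show (0:ℝ) < 3 by norm_num)]; field_simp
    have := mul_le_mul_of_nonneg_right this hl0
    linarith
  · rw [abs_mul]
    have h1 := m1 4 (by norm_num) (i ^ 4) (by positivity) e4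
    have h2 := m1 2 (by norm_num) (i ^ 3) (by positivity) e3
    have h3 := m1 0 (by norm_num) (i ^ 2) (by positivity) e2
    have : |P4 f a y| ≤ i ^ 4 * |M f 4 a y| + 6 * (i ^ 3 * |M f 2 a y|) + 3 * (i ^ 2 * |M f 0 a y|) := by
      unfold P4
      refine (abs_add_le _ _).trans ((add_le_add_left (abs_sub _ _) _).trans (le_of_eq ?_))
      rw [abs_div, abs_div, abs_div, abs_mul, abs_mul, abs_of_pos (pow_pos ha0 3), abs_of_pos (pow_pos ha0 4), abs_of_pos (pow_pos ha0 2), hi,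
        abs_of_pos (show (0:ℝ) < 3 by norm_num), abs_of_pos (show (0:ℝ) < 6 by norm_num)]; field_simp
    have := mul_le_mul_of_nonneg_right this hl0
    linarith
  · have h1 := m0 2 (by norm_num) (i ^ 2) (by positivity) e2
    rw [abs_of_nonneg hM2] at h1
    have : P1 f a y ^ 2 / M f 0 a y ≤ i ^ 2 * M f 2 a y := by
      rw [div_le_iff₀ hp]
      have : P1 f a y ^ 2 = i ^ 2 * M f 1 a y ^ 2 := by unfold P1; rw [hi]; field_simp
      rw [this, mul_assoc]; gcongr; linarith
    linarith
  · have h1 := m0 4 (by norm_num) (i ^ 4) (by positivity) e4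
    have h2 := m0 0 (by norm_num) (i ^ 2) (by positivity) e2
    rw [abs_of_nonneg hM4] at h1
    rw [abs_of_pos hp] at h2
    have : P2 f a y ^ 2 / M f 0 a y ≤ 2 * (i ^ 4 * M f 4 a y) + 2 * (i ^ 2 * M f 0 a y) := by
      rw [div_le_iff₀ hp]
      have e : P2 f a y = i ^ 2 * M f 2 a y - i * M f 0 a y := by unfold P2; rw [hi]; field_simp
      have c3 : i ^ 4 * M f 2 a y ^ 2 ≤ i ^ 4 * (M f 0 a y * M f 4 a y) := by gcongr
      rw [e]; linarith [sq_nonneg (i ^ 2 * M f 2 a y + i * M f 0 a y)]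
    linarith
  · have h1 := m0 4 (by norm_num) (i ^ 4) (by positivity) e4
    rw [abs_of_nonneg hM4] at h1
    have : P1 f a y ^ 4 / M f 0 a y ^ 3 ≤ i ^ 4 * M f 4 a y := by
      rw [div_le_iff₀ (by positivity)]
      have : P1 f a y ^ 4 = i ^ 4 * (M f 1 a y ^ 2) ^ 2 := by unfold P1; rw [hi]; field_simp
      rw [this, mul_assoc]; gcongr
      calc (M f 1 a y ^ 2) ^ 2 ≤ (M f 0 a y * M f 2 a y) ^ 2 := by gcongr
        _ = M f 0 a y ^ 2 * M f 2 a y ^ 2 := by ring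
        _ ≤ M f 0 a y ^ 2 * (M f 0 a y * M f 4 a y) := by gcongr
        _ = _ := by ring
    linarith

lemma int_of_bound (H : Hyp f) {b : ℝ} (hb : 0 < b) {g : ℝ → ℝ} (hg : Continuous g) (K : ℝ)
    (h : ∀ y, |g y| ≤ K * D f b y) : Integrable g :=
  ((D_int H.int H.mom hb).const_mul K).mono' hg.aestronglyMeasurable (Eventually.of_forall h)

lemma cP0 (H : Hyp f) {a : ℝ} (ha : 0 < a) : Continuous (M f 0 a) := M_cont H.int 0 ha
lemma cP1 (H : Hyp f) {a : ℝ} (ha : 0 < a) : Continuous (P1 f a) :=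
  continuous_iff_continuousAt.2 fun y => (dy1 H ha y).continuousAt
lemma cP2 (H : Hyp f) {a : ℝ} (ha : 0 < a) : Continuous (P2 f a) :=
  continuous_iff_continuousAt.2 fun y => (dy2 H ha y).continuousAt
lemma cP3 (H : Hyp f) {a : ℝ} (ha : 0 < a) : Continuous (P3 f a) :=
  continuous_iff_continuousAt.2 fun y => (dy3 H ha y).continuousAt
lemma cP4 (H : Hyp f) {a : ℝ} (ha : 0 < a) : Continuous (P4 f a) := by
  have := M_cont H.int 0 ha
  have := M_cont H.int 2 ha
  have := M_cont H.int 4 ha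
  unfold P4; fun_prop
lemma cL (H : Hyp f) {a : ℝ} (ha : 0 < a) : Continuous (fun y => Real.log (M f 0 a y)) :=
  (cP0 H ha).log fun y => (H.pos ha y).ne'

lemma deriv1 (H : Hyp f) {a : ℝ} (ha : 0 < a) :
    HasDerivAt (fun a => ∫ y, M f 0 a y * Real.log (M f 0 a y))
      (∫ y, P2 f a y / 2 * (Real.log (M f 0 a y) + 1)) a := by
  obtain ⟨K, hK, B⟩ := bounds H ha
  have hpos : ∀ c ∈ Set.Ioo (a / 2) (2 * a), 0 < c := fun c hc => by linarith [hc.1]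
  have hm : Set.Ioo (a / 2) (2 * a) ∈ nhds a := Ioo_mem_nhds (by linarith) (by linarith)
  have ham := mem_of_mem_nhds hm
  refine (hasDerivAt_integral_of_dominated_loc_of_deriv_le (μ := volume)
    (F := fun a y => M f 0 a y * Real.log (M f 0 a y))
    (F' := fun a y => P2 f a y / 2 * (Real.log (M f 0 a y) + 1))
    (bound := fun y => K * D f a y) hm ?_ ?_ ?_ ?_ ?_ ?_).2
  · filter_upwards [hm] with c hc
    exact ((cP0 H (hpos c hc)).mul (cL H (hpos c hc))).aestronglyMeasurable
  · exact int_of_bound H ha ((cP0 H ha).mul (cL H ha)) K fun y => (B a ham.1 ham.2 y).2.1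
  · exact (((cP2 H ha).div_const 2).mul ((cL H ha).add continuous_const)).aestronglyMeasurable
  · refine Eventually.of_forall fun y c hc => ?_
    have := (B c hc.1 hc.2 y).2.2.1
    have e : P2 f c y / 2 * (Real.log (M f 0 c y) + 1) = (P2 f c y * (Real.log (M f 0 c y) + 1)) / 2 := by ring
    rw [e, Real.norm_eq_abs, abs_div, abs_of_pos (show (0:ℝ) < 2 by norm_num)]
    have := abs_nonneg (P2 f c y * (Real.log (M f 0 c y) + 1))
    linarith
  · exact (D_int H.int H.mom ha).const_mul K
  · refine Eventually.of_forall fun y c hc => ?_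
    have hp := H.pos (hpos c hc) y
    have h0 := da0 H (hpos c hc) y
    refine (h0.mul (h0.log hp.ne')).congr_deriv ?_
    field_simp

lemma deriv2 (H : Hyp f) {a : ℝ} (ha : 0 < a) :
    HasDerivAt (fun a => ∫ y, P2 f a y / 2 * (Real.log (M f 0 a y) + 1))
      (∫ y, (P4 f a y * (Real.log (M f 0 a y) + 1) / 4 + P2 f a y ^ 2 / M f 0 a y / 4)) a := by
  obtain ⟨K, hK, B⟩ := bounds H ha
  have hpos : ∀ c ∈ Set.Ioo (a / 2) (2 * a), 0 < c := fun c hc => by linarith [hc.1]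
  have hm : Set.Ioo (a / 2) (2 * a) ∈ nhds a := Ioo_mem_nhds (by linarith) (by linarith)
  have ham := mem_of_mem_nhds hm
  have cF : ∀ {c}, 0 < c → Continuous fun y => P2 f c y / 2 * (Real.log (M f 0 c y) + 1) := fun hc =>
    ((cP2 H hc).div_const 2).mul ((cL H hc).add continuous_const)
  refine (hasDerivAt_integral_of_dominated_loc_of_deriv_le (μ := volume)
    (F := fun a y => P2 f a y / 2 * (Real.log (M f 0 a y) + 1))
    (F' := fun a y => P4 f a y * (Real.log (M f 0 a y) + 1) / 4 + P2 f a y ^ 2 / M f 0 a y / 4)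
    (bound := fun y => K * D f a y) hm ?_ ?_ ?_ ?_ ?_ ?_).2
  · filter_upwards [hm] with c hc
    exact (cF (hpos c hc)).aestronglyMeasurable
  · refine int_of_bound H ha (cF ha) K fun y => ?_
    have := (B a ham.1 ham.2 y).2.2.1
    have e : P2 f a y / 2 * (Real.log (M f 0 a y) + 1) = (P2 f a y * (Real.log (M f 0 a y) + 1)) / 2 := by ring
    rw [e, abs_div, abs_of_pos (show (0:ℝ) < 2 by norm_num)]
    have := abs_nonneg (P2 f a y * (Real.log (M f 0 a y) + 1))
    linarith
  · exact ((((cP4 H ha).mul ((cL H ha).add continuous_const)).div_const 4).add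
      ((((cP2 H ha).pow 2).div (cP0 H ha) (fun y => (H.pos ha y).ne')).div_const 4)).aestronglyMeasurable
  · refine Eventually.of_forall fun y c hc => ?_
    have hp := H.pos (hpos c hc) y
    have h1 := (B c hc.1 hc.2 y).2.2.2.2.1
    have h2 := (B c hc.1 hc.2 y).2.2.2.2.2.2.1
    have h3 : 0 ≤ P2 f c y ^ 2 / M f 0 c y := by positivity
    rw [abs_le] at h1
    rw [Real.norm_eq_abs, abs_le]
    constructor <;> linarith [h1.1, h1.2]
  · exact (D_int H.int H.mom ha).const_mul K
  · refine Eventually.of_forall fun y c hc => ?_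
    have hp := H.pos (hpos c hc) y
    have h0 := da0 H (hpos c hc) y
    refine (((da2 H (hpos c hc) y).div_const 2).mul ((h0.log hp.ne').add_const 1)).congr_deriv ?_
    field_simp; ring

noncomputable def Sd (f : ℝ → ℝ) (a y : ℝ) : ℝ :=
  P2 f a y / M f 0 a y - P1 f a y ^ 2 / M f 0 a y ^ 2

lemma parts (H : Hyp f) {a : ℝ} (ha : 0 < a) :
    ∫ y, (P4 f a y * (Real.log (M f 0 a y) + 1) / 4 + P2 f a y ^ 2 / M f 0 a y / 4)
      = 1 / 2 * ∫ y, M f 0 a y * Sd f a y ^ 2 := by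
  obtain ⟨K, hK, B'⟩ := bounds H ha
  have B := B' a (by linarith) (by linarith)
  have c0 := cP0 H ha
  have c1 := cP1 H ha
  have c2 := cP2 H ha
  have c3 := cP3 H ha
  have c4 := cP4 H ha
  have cl := cL H ha
  have hne : ∀ y, M f 0 a y ≠ 0 := fun y => (H.pos ha y).ne'
  have i1 : Integrable fun y => P4 f a y * (Real.log (M f 0 a y) + 1) / 4 + P2 f a y ^ 2 / M f 0 a y / 4 := by
    refine int_of_bound H ha (by exact ((c4.mul (cl.add continuous_const)).div_const 4).add (((c2.pow 2).div c0 hne).div_const 4)) K fun y => ?_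
    obtain ⟨-, -, -, -, h1, -, h2, -⟩ := B y
    have hp := H.pos ha y
    have h3 : 0 ≤ P2 f a y ^ 2 / M f 0 a y := by positivity
    rw [abs_le] at h1 ⊢
    constructor <;> linarith [h1.1, h1.2]
  have cS : Continuous (Sd f a) := by
    unfold Sd
    exact (c2.div c0 hne).sub ((c1.pow 2).div (c0.pow 2) fun y => pow_ne_zero 2 (hne y))
  have i2 : Integrable fun y => M f 0 a y * Sd f a y ^ 2 := by
    refine int_of_bound H ha (c0.mul (cS.pow 2)) (4 * K) fun y => ?_
    obtain ⟨-, -, -, -, -, -, h2, h4⟩ := B y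
    have hp := H.pos ha y
    rw [abs_of_nonneg (by positivity)]
    have : M f 0 a y * Sd f a y ^ 2 ≤ 2 * (P2 f a y ^ 2 / M f 0 a y) + 2 * (P1 f a y ^ 4 / M f 0 a y ^ 3) := by
      have e : 2 * (P2 f a y ^ 2 / M f 0 a y) + 2 * (P1 f a y ^ 4 / M f 0 a y ^ 3) - M f 0 a y * Sd f a y ^ 2
        = M f 0 a y * (P2 f a y / M f 0 a y + P1 f a y ^ 2 / M f 0 a y ^ 2) ^ 2 := by
        unfold Sd; field_simp; ring
      have : 0 ≤ M f 0 a y * (P2 f a y / M f 0 a y + P1 f a y ^ 2 / M f 0 a y ^ 2) ^ 2 := by positivity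
      linarith
    linarith
  have i3 : Integrable fun y => P3 f a y * (Real.log (M f 0 a y) + 1) - P2 f a y * P1 f a y / M f 0 a y
      + P1 f a y ^ 3 / M f 0 a y ^ 2 := by
    refine int_of_bound H ha ?_ (3 * K) fun y => ?_
    · exact ((c3.mul (cl.add continuous_const)).sub ((c2.mul c1).div c0 hne)).add
        ((c1.pow 3).div (c0.pow 2) fun y => pow_ne_zero 2 (hne y))
    · obtain ⟨-, -, -, h3, -, h1, h2, h4⟩ := B y
      have hp := H.pos ha y
      have q1 : |P2 f a y * P1 f a y / M f 0 a y| ≤ K * D f a y := by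
        have e : P2 f a y ^ 2 / M f 0 a y + P1 f a y ^ 2 / M f 0 a y - 2 * |P2 f a y * P1 f a y / M f 0 a y|
          = (|P2 f a y| - |P1 f a y|) ^ 2 / M f 0 a y := by
          rw [abs_div, abs_of_pos hp, abs_mul, ← sq_abs (P2 f a y), ← sq_abs (P1 f a y)]; field_simp; ring
        have : 0 ≤ (|P2 f a y| - |P1 f a y|) ^ 2 / M f 0 a y := by positivity
        linarith
      have q2 : |P1 f a y ^ 3 / M f 0 a y ^ 2| ≤ K * D f a y := by
        have e : P1 f a y ^ 2 / M f 0 a y + P1 f a y ^ 4 / M f 0 a y ^ 3 - 2 * |P1 f a y ^ 3 / M f 0 a y ^ 2|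
          = (|P1 f a y| - |P1 f a y| ^ 2 / M f 0 a y) ^ 2 / M f 0 a y := by
          have : P1 f a y ^ 4 = |P1 f a y| ^ 4 := by rw [pow_abs, abs_of_nonneg (by positivity)]
          rw [abs_div, abs_of_pos (pow_pos hp 2), abs_pow, this, ← sq_abs (P1 f a y)]; field_simp; ring
        have : 0 ≤ (|P1 f a y| - |P1 f a y| ^ 2 / M f 0 a y) ^ 2 / M f 0 a y := by positivity
        linarith
      rw [abs_le] at q1 q2 h3 ⊢
      constructor <;> linarith [q1.1, q1.2, q2.1, q2.2, h3.1, h3.2]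
  have key := integral_eq_zero_of_hasDerivAt_of_integrable (E := ℝ)
    (f := fun y => P3 f a y * (Real.log (M f 0 a y) + 1) - P2 f a y * P1 f a y / M f 0 a y
      + P1 f a y ^ 3 / M f 0 a y ^ 2)
    (f' := fun y => 4 * (P4 f a y * (Real.log (M f 0 a y) + 1) / 4 + P2 f a y ^ 2 / M f 0 a y / 4)
      - 2 * (M f 0 a y * Sd f a y ^ 2))
    (fun y => ?_) ((i1.const_mul 4).sub (i2.const_mul 2)) i3
  · rw [integral_sub (i1.const_mul 4) (i2.const_mul 2), integral_const_mul, integral_const_mul] at key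
    linarith
  · have d0 := dy0 H ha y
    have d1 := dy1 H ha y
    have d2 := dy2 H ha y
    have d3 := dy3 H ha y
    have hn := hne y
    refine (((d3.mul ((d0.log hn).add_const 1)).sub ((d2.mul d1).fun_div d0 hn)).add
      ((d1.fun_pow 3).fun_div (d0.fun_pow 2) (pow_ne_zero 2 hn))).congr_deriv ?_
    simp only [Sd, Pi.mul_apply]
    push_cast
    field_simp
    ring

end EntGauss

open EntGauss in
theorem entropy_second_derivative_gaussian_noise
    (fX : ℝ → ℝ)
    (hfX_nonneg : ∀ x, 0 ≤ fX x)
    (hfX_prob : (∫ x, fX x) = 1)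
    (hfX_mom : Integrable (fun x => x ^ 2 * fX x))
    (fY : ℝ → ℝ → ℝ)
    (hfY : ∀ a, 0 < a → ∀ y, fY a y =
      ∫ x, fX x * ((Real.sqrt (2 * Real.pi * a))⁻¹ *
        Real.exp (-(y - x) ^ 2 / (2 * a))))
    (h : ℝ → ℝ)
    (hh : ∀ a, 0 < a → h a = -∫ y, fY a y * Real.log (fY a y)) :
    ∀ a, 0 < a → DifferentiableAt ℝ h a ∧
      HasDerivAt (deriv h)
        (-(1 / 2) * ∫ y, fY a y *
          (deriv (fun y' => deriv (fun y'' => Real.log (fY a y'')) y') y) ^ 2)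
        a := by
  have hfi : Integrable fX := by
    by_contra hc
    rw [integral_undef hc] at hfX_prob
    norm_num at hfX_prob
  have H : Hyp fX := ⟨hfX_nonneg, hfi, hfX_prob, hfX_mom⟩
  have hM : ∀ a, 0 < a → fY a = M fX 0 a := fun a ha => by
    funext y
    rw [hfY a ha y]
    simp [M, EntGauss.ker]
  have hD : ∀ a, 0 < a → HasDerivAt h
      (-∫ y, P2 fX a y / 2 * (Real.log (M fX 0 a y) + 1)) a := fun a ha => by
    refine (deriv1 H ha).neg.congr_of_eventuallyEq ?_
    filter_upwards [Ioi_mem_nhds ha] with c hc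
    rw [hh c hc, hM c hc]; rfl
  intro a ha
  refine ⟨(hD a ha).differentiableAt, ?_⟩
  have h2 : HasDerivAt (deriv h)
      (-∫ y, (P4 fX a y * (Real.log (M fX 0 a y) + 1) / 4 + P2 fX a y ^ 2 / M fX 0 a y / 4)) a := by
    refine (deriv2 H ha).neg.congr_of_eventuallyEq ?_
    filter_upwards [Ioi_mem_nhds ha] with c hc
    rw [(hD c hc).deriv]; rfl
  refine h2.congr_deriv ?_
  have e1 : (fun y' => deriv (fun y'' => Real.log (M fX 0 a y'')) y') = fun y => P1 fX a y / M fX 0 a y := by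
    funext y
    exact ((dy0 H ha y).log (H.pos ha y).ne').deriv
  have e2 : ∀ y, deriv (fun y => P1 fX a y / M fX 0 a y) y = Sd fX a y := fun y => by
    have hn := (H.pos ha y).ne'
    rw [((dy1 H ha y).fun_div (dy0 H ha y) hn).deriv]
    unfold Sd
    field_simp
  rw [hM a ha, parts H ha, e1]
  simp only [e2]
  ring
end
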